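/- arXiv:0907.1120 — 2 statements merged into one kernel-verified Lean document; each statement's English description precedes it below -/
import Mathlib

section
/- Let (u^k, E^k) and (u, E) be admissible pairs, and let p^k, p ∈ L²(Ω; Sym(n)). Assume: (i) u^k → u strongly in L²(ℝⁿ; ℝⁿ); (ii) E^k → E weakly in L²(Ω; Sym(n)); (iii) for every k and every admissible pair (v, F): ∫_Ω p^k·F dx = 0; (iv) p^k → p weakly in L²(Ω; Sym(n)); (v) there is a constant c ≥ 0 such that p^k·E^k ≥ −c a.e. in Ω for all k. Then p^k·E^k → p·E weakly in L¹(Ω), that is, ∫_Ω g (p^k·E^k) dx → ∫_Ω g (p·E) dx for every g ∈ L^∞(Ω). -/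
open MeasureTheory Filter Topology

noncomputable section

abbrev RV (n : ℕ) := Fin n → ℝ
abbrev Mat (n : ℕ) := Matrix (Fin n) (Fin n) ℝ
abbrev MField (n : ℕ) := RV n → Mat n
abbrev VField (n : ℕ) := RV n → RV n

/-- Frobenius inner product of matrices: `P·Q = ∑ᵢⱼ Pᵢⱼ Qᵢⱼ`. -/
def mdot {n : ℕ} (P Q : Mat n) : ℝ := ∑ i, ∑ j, P i j * Q i j

/-- A matrix field takes symmetric values a.e. on `s`. -/
def SymOn {n : ℕ} (E : MField n) (s : Set (RV n)) : Prop :=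
  ∀ᵐ x ∂(volume : Measure (RV n)), x ∈ s → ∀ i j, E x i j = E x j i

/-- Matrix field in L² on `s`: componentwise measurable and `|E|²` integrable on `s`. -/
def L2MOn {n : ℕ} (E : MField n) (s : Set (RV n)) : Prop :=
  (∀ i j, Measurable fun x => E x i j) ∧
    IntegrableOn (fun x => mdot (E x) (E x)) s volume

/-- Vector field in L² on `s`. -/
def L2VOn {n : ℕ} (u : VField n) (s : Set (RV n)) : Prop :=
  (∀ i, Measurable fun x => u x i) ∧
    IntegrableOn (fun x => ∑ i, u x i * u x i) s volume

/-- Scalar function in L∞ on `s`. -/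
def LinfROn {n : ℕ} (f : RV n → ℝ) (s : Set (RV n)) : Prop :=
  Measurable f ∧ ∃ M : ℝ, ∀ᵐ x ∂(volume : Measure (RV n)), x ∈ s → |f x| ≤ M

/-- Matrix field in L∞ on `s`. -/
def LinfMOn {n : ℕ} (F : MField n) (s : Set (RV n)) : Prop :=
  (∀ i j, Measurable fun x => F x i j) ∧
    ∃ M : ℝ, ∀ᵐ x ∂(volume : Measure (RV n)), x ∈ s → ∀ i j, |F x i j| ≤ M

/-- `E` is the weak symmetrized gradient of `u`:
for all `i j` and every test function `φ ∈ C_c^∞(ℝⁿ)`,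
`∫ Eᵢⱼ φ = -(1/2) ∫ (uᵢ ∂ⱼφ + uⱼ ∂ᵢφ)`. -/
def IsSymGrad {n : ℕ} (u : VField n) (E : MField n) : Prop :=
  ∀ i j, ∀ φ : RV n → ℝ, ContDiff ℝ (⊤ : ℕ∞) φ → HasCompactSupport φ →
    ∫ x, E x i j * φ x =
      -(1 / 2) * ∫ x, (u x i * fderiv ℝ φ x (Pi.single j 1) +
        u x j * fderiv ℝ φ x (Pi.single i 1))

/-- Admissible pair: the encoding of `v ∈ H¹₀(Ω;ℝⁿ)` together with its symmetrized
gradient `ε(v)`. -/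
structure AdmPair (n : ℕ) (Ω : Set (RV n)) where
  u : VField n
  E : MField n
  hu : L2VOn u Set.univ
  hE : L2MOn E Set.univ
  hsym : SymOn E Set.univ
  huz : ∀ᵐ x ∂(volume : Measure (RV n)), x ∉ Ω → u x = 0
  hEz : ∀ᵐ x ∂(volume : Measure (RV n)), x ∉ Ω → E x = 0
  hgrad : IsSymGrad u E

/-- Weak convergence in `L²(s; Sym(n))`. -/
def WeakL2M {n : ℕ} (Ek : ℕ → MField n) (E : MField n) (s : Set (RV n)) : Prop :=
  ∀ G : MField n, L2MOn G s →
    Tendsto (fun k => ∫ x in s, mdot (Ek k x) (G x)) atTop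
      (𝓝 (∫ x in s, mdot (E x) (G x)))

/-- Weak convergence in `L²(s; ℝⁿ)`. -/
def WeakL2V {n : ℕ} (uk : ℕ → VField n) (u : VField n) (s : Set (RV n)) : Prop :=
  ∀ g : VField n, L2VOn g s →
    Tendsto (fun k => ∫ x in s, ∑ i, uk k x i * g x i) atTop
      (𝓝 (∫ x in s, ∑ i, u x i * g x i))

/-- Weak* convergence in `L∞(s)`. -/
def WeakStarLinf {n : ℕ} (fk : ℕ → RV n → ℝ) (f : RV n → ℝ) (s : Set (RV n)) : Prop :=
  ∀ h : RV n → ℝ, IntegrableOn h s volume →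
    Tendsto (fun k => ∫ x in s, fk k x * h x) atTop (𝓝 (∫ x in s, f x * h x))

/-- Weak convergence in `L¹(s)`. -/
def WeakL1 {n : ℕ} (fk : ℕ → RV n → ℝ) (f : RV n → ℝ) (s : Set (RV n)) : Prop :=
  ∀ g : RV n → ℝ, Measurable g →
    (∃ M : ℝ, ∀ᵐ x ∂(volume : Measure (RV n)), x ∈ s → |g x| ≤ M) →
    Tendsto (fun k => ∫ x in s, fk k x * g x) atTop (𝓝 (∫ x in s, f x * g x))

/-- Uniform integrability of a family on `s`. -/
def UnifIntOn {n : ℕ} (fk : ℕ → RV n → ℝ) (s : Set (RV n)) : Prop :=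
  ∀ ε : ℝ, 0 < ε → ∃ η : ℝ, 0 < η ∧ ∀ A : Set (RV n), MeasurableSet A → A ⊆ s →
    volume A < ENNReal.ofReal η → ∀ k, ∫ x in A, |fk k x| < ε

/-- The double-well integrand `min{½a|F+C|², ½b|F+D|²}`. -/
def phaseMin {n : ℕ} (a b : RV n → ℝ) (C D : MField n) (F : MField n) (x : RV n) : ℝ :=
  min (1 / 2 * a x * mdot (F x + C x) (F x + C x))
      (1 / 2 * b x * mdot (F x + D x) (F x + D x))

/-- The nonconvex energy. -/
def Jfun {n : ℕ} (Ω : Set (RV n)) (a b : RV n → ℝ) (C D : MField n) (F : MField n) : ℝ :=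
  ∫ x in Ω, phaseMin a b C D F x

/-- The infimum `α` of the nonconvex problem over admissible pairs. -/
def alphaInf {n : ℕ} (Ω : Set (RV n)) (a b : RV n → ℝ) (C D : MField n) : ℝ :=
  sInf { r : ℝ | ∃ P : AdmPair n Ω, r = Jfun Ω a b C D P.E }

/-- The convexified energy `∫ [½χₐa|F+C|² + ½χᵦb|F+D|²]`. -/
def Jconv {n : ℕ} (Ω : Set (RV n)) (χa χb a b : RV n → ℝ) (C D : MField n)
    (F : MField n) : ℝ :=
  ∫ x in Ω, (1 / 2 * χa x * a x * mdot (F x + C x) (F x + C x)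
    + 1 / 2 * χb x * b x * mdot (F x + D x) (F x + D x))

/-- `A⁺ = (aC + bD)/2`. -/
def Aplus {n : ℕ} (a b : RV n → ℝ) (C D : MField n) : MField n :=
  fun x => (2 : ℝ)⁻¹ • (a x • C x + b x • D x)

/-- `A⁻ = (bD − aC)/2`. -/
def Aminus {n : ℕ} (a b : RV n → ℝ) (C D : MField n) : MField n :=
  fun x => (2 : ℝ)⁻¹ • (b x • D x - a x • C x)

/-- The integrand on `Ω \ Ω₀`:
`(ab(C−D)/(b−a))·F + ((bD−aC)/(b−a))·q + ab(|C|²−|D|²)/(2(b−a)) − t·ab|C−D|²/(2(b−a))`. -/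
def Goff {n : ℕ} (a b : RV n → ℝ) (C D : MField n) (F q : MField n) (t : RV n → ℝ)
    (x : RV n) : ℝ :=
  a x * b x / (b x - a x) * mdot (C x - D x) (F x) +
    (b x - a x)⁻¹ * mdot (b x • D x - a x • C x) (q x) +
    a x * b x * (mdot (C x) (C x) - mdot (D x) (D x)) / (2 * (b x - a x)) -
    t x * (a x * b x * mdot (C x - D x) (C x - D x) / (2 * (b x - a x)))

/-- `Ω₀ = {x ∈ Ω : a(x) = b(x)}`. -/
def Omega0 {n : ℕ} (Ω : Set (RV n)) (a b : RV n → ℝ) : Set (RV n) :=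
  {x ∈ Ω | a x = b x}


open MeasureTheory Filter Topology

namespace S1

theorem cs {α : Type*} [MeasurableSpace α] {μ : Measure α} {f g : α → ℝ}
    (hf : MemLp f 2 μ) (hg : MemLp g 2 μ) :
    ∫ x, |f x * g x| ∂μ ≤ √(∫ x, f x ^ 2 ∂μ) * √(∫ x, g x ^ 2 ∂μ) := by
  have h := integral_mul_norm_le_Lp_mul_Lq (μ := μ) (f := f) (g := g) Real.HolderConjugate.two_two
    (by simpa using hf) (by simpa using hg)
  simp only [Real.norm_eq_abs, ← abs_mul] at h
  refine h.trans (le_of_eq ?_)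
  rw [Real.sqrt_eq_rpow, Real.sqrt_eq_rpow]
  simp

theorem cs' {α : Type*} [MeasurableSpace α] {μ : Measure α} {f g : α → ℝ}
    (hf : MemLp f 2 μ) (hg : MemLp g 2 μ) :
    |∫ x, f x * g x ∂μ| ≤ √(∫ x, f x ^ 2 ∂μ) * √(∫ x, g x ^ 2 ∂μ) :=
  (abs_integral_le_integral_abs).trans (cs hf hg)

theorem bdd_of_weak {α : Type*} [MeasurableSpace α] {μ : Measure α} {f : ℕ → α → ℝ}
    (hf : ∀ k, MemLp (f k) 2 μ)
    (h : ∀ g, MemLp g 2 μ → ∃ C, ∀ k, |∫ x, f k x * g x ∂μ| ≤ C) :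
    ∃ K, 0 ≤ K ∧ ∀ k, ∫ x, f k x ^ 2 ∂μ ≤ K := by
  let F : ℕ → Lp ℝ 2 μ := fun k => (hf k).toLp
  obtain ⟨C, hC⟩ := banach_steinhaus (g := fun k => innerSL ℝ (F k)) (by
    intro g
    obtain ⟨C, hC⟩ := h g (Lp.memLp g)
    refine ⟨C, fun k => ?_⟩
    refine le_trans (le_of_eq ?_) (hC k)
    rw [innerSL_apply_apply, L2.inner_def, Real.norm_eq_abs]
    congr 1
    apply integral_congr_ae
    filter_upwards [(hf k).coeFn_toLp] with x hx
    simp [F, hx, mul_comm])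
  refine ⟨C ^ 2, sq_nonneg _, fun k => ?_⟩
  have h1 : ∫ x, f k x ^ 2 ∂μ = ‖F k‖ ^ 2 := by
    rw [← real_inner_self_eq_norm_sq, L2.inner_def]
    apply integral_congr_ae
    filter_upwards [(hf k).coeFn_toLp] with x hx
    simp [F, hx, sq]
  rw [h1]
  have := hC k
  rw [innerSL_apply_norm] at this
  gcongr

end S1

open MeasureTheory Filter Topology

namespace S1

/-- Superlevel set of the (centred, cubic) Hardy–Littlewood maximal function. -/
def Bad {n : ℕ} (g : RV n → ℝ) (l : ℝ) : Set (RV n) :=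
  {x | ∃ r > 0, l * (2 * r) ^ n < ∫ z in Metric.closedBall x r, g z}

theorem vol_cb {n : ℕ} (x : RV n) {r : ℝ} (hr : 0 ≤ r) :
    volume (Metric.closedBall x r) = ENNReal.ofReal ((2 * r) ^ n) := by
  rw [Real.volume_pi_closedBall x hr]; simp

theorem volr_cb {n : ℕ} (x : RV n) {r : ℝ} (hr : 0 ≤ r) :
    volume.real (Metric.closedBall x r) = (2 * r) ^ n := by
  rw [Measure.real, vol_cb x hr, ENNReal.toReal_ofReal (by positivity)]

theorem isOpen_Bad {n : ℕ} {g : RV n → ℝ} (hg0 : ∀ x, 0 ≤ g x) (hgi : Integrable g) (l : ℝ) :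
    IsOpen (Bad g l) := by
  rw [Metric.isOpen_iff]
  rintro x ⟨r, hr, h⟩
  have hc : ContinuousAt (fun s : ℝ => l * (2 * s) ^ n) r := by fun_prop
  have h1 := hc.eventually_lt_const h
  obtain ⟨e, he, h2⟩ := Metric.eventually_nhds_iff.1 h1
  refine ⟨e / 2, by positivity, fun y hy => ⟨r + e / 2, by positivity, ?_⟩⟩
  have h3 := @h2 (r + e / 2) (by simp [abs_of_pos he]; linarith)
  refine h3.trans_le ?_
  refine setIntegral_mono_set hgi.integrableOn (ae_of_all _ hg0) ?_
  refine LE.le.eventuallyLE ?_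
  apply Metric.closedBall_subset_closedBall'
  rw [dist_comm]
  linarith [Metric.mem_ball.1 hy]

theorem vol_Bad {n : ℕ} (hn : n ≠ 0) {g : RV n → ℝ} (hg0 : ∀ x, 0 ≤ g x) (hgi : Integrable g)
    {l : ℝ} (hl : 0 < l) :
    volume (Bad g l) ≤ ENNReal.ofReal (5 ^ n / l * ∫ x, g x) := by
  choose! r hr hlt using (fun x (hx : x ∈ Bad g l) => hx)
  have hI : ∀ x s, ∫ z in Metric.closedBall x s, g z ≤ ∫ z, g z := fun x s =>
    setIntegral_le_integral hgi (ae_of_all _ hg0)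
  have hR : ∀ x ∈ Bad g l, r x ≤ 1 + (∫ z, g z) / l := by
    intro x hx
    by_contra! hcon
    have h0 : 0 ≤ (∫ z, g z) / l := div_nonneg (integral_nonneg hg0) hl.le
    have h1 : 2 * r x ≤ (2 * r x) ^ n := le_self_pow₀ (by linarith) hn
    have h2 := (hlt x hx).trans_le (hI x (r x))
    have h3 : (∫ z, g z) / l < r x := by linarith
    rw [div_lt_iff₀ hl] at h3
    nlinarith [hr x hx]
  obtain ⟨u, hut, hdisj, hcov⟩ := Vitali.exists_disjoint_subfamily_covering_enlargement_closedBall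
    (Bad g l) (fun x => x) r _ hR 5 (by norm_num)
  have hcount : u.Countable := by
    refine hdisj.countable_of_nonempty_interior fun x hx => ?_
    refine ⟨x, ?_⟩
    rw [mem_interior]
    exact ⟨Metric.ball x (r x), Metric.ball_subset_closedBall, Metric.isOpen_ball,
      Metric.mem_ball_self (hr x (hut hx))⟩
  have hsub : Bad g l ⊆ ⋃ x ∈ u, Metric.closedBall x (5 * r x) := by
    intro x hx
    obtain ⟨b, hb, h⟩ := hcov x hx
    exact Set.mem_biUnion hb (h (Metric.mem_closedBall_self (hr x hx).le))
  have : Countable u := hcount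
  calc volume (Bad g l) ≤ volume (⋃ x ∈ u, Metric.closedBall x (5 * r x)) := measure_mono hsub
    _ ≤ ∑' x : u, volume (Metric.closedBall (x : RV n) (5 * r x)) := measure_biUnion_le _ hcount _
    _ ≤ ∑' x : u, ENNReal.ofReal (5 ^ n / l) *
          ∫⁻ z in Metric.closedBall (x : RV n) (r x), ENNReal.ofReal (g z) := by
        refine ENNReal.tsum_le_tsum fun x => ?_
        have hx := hut x.2
        have hrx := hr _ hx
        rw [vol_cb _ (by positivity), ← ofReal_integral_eq_lintegral_ofReal hgi.integrableOn
          (ae_of_all _ hg0), ← ENNReal.ofReal_mul (by positivity)]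
        refine ENNReal.ofReal_le_ofReal ?_
        have := (hlt _ hx).le
        calc (2 * (5 * r x)) ^ n = 5 ^ n / l * (l * (2 * r x) ^ n) := by
              field_simp; rw [← mul_pow]; ring
          _ ≤ _ := by gcongr
    _ = ENNReal.ofReal (5 ^ n / l) * ∫⁻ z in ⋃ x ∈ u, Metric.closedBall x (r x),
          ENNReal.ofReal (g z) := by
        rw [ENNReal.tsum_mul_left, lintegral_biUnion hcount
          (fun _ _ => Metric.isClosed_closedBall.measurableSet) hdisj]
    _ ≤ ENNReal.ofReal (5 ^ n / l) * ∫⁻ z, ENNReal.ofReal (g z) := by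
        gcongr; exact Measure.restrict_le_self
    _ = _ := by
        rw [← ofReal_integral_eq_lintegral_ofReal hgi (ae_of_all _ hg0),
          ← ENNReal.ofReal_mul (by positivity)]

theorem vol_Bad' {n : ℕ} (hn : n ≠ 0) {g : RV n → ℝ} (hg0 : ∀ x, 0 ≤ g x) (hgi : Integrable g)
    {l : ℝ} (hl : 0 < l) :
    volume (Bad g l) ≤ ENNReal.ofReal (2 * 5 ^ n / l * ∫ x, max (g x - l / 2) 0) := by
  have hi : Integrable (fun x => max (g x - l / 2) 0) := by
    refine Integrable.mono' hgi (by
      exact ((hgi.aestronglyMeasurable.aemeasurable.sub_const _).max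
        aemeasurable_const).aestronglyMeasurable) (ae_of_all _ fun x => ?_)
    rw [Real.norm_eq_abs, abs_of_nonneg (le_max_right _ _)]
    exact max_le (by linarith) (hg0 x)
  have hsub : Bad g l ⊆ Bad (fun x => max (g x - l / 2) 0) (l / 2) := by
    rintro x ⟨r, hr, h⟩
    refine ⟨r, hr, ?_⟩
    have h1 : ∫ z in Metric.closedBall x r, g z - l / 2 ≤
        ∫ z in Metric.closedBall x r, max (g z - l / 2) 0 := by
      refine setIntegral_mono ?_ hi.integrableOn fun z => le_max_left _ _
      refine hgi.integrableOn.sub (integrableOn_const ?_)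
      rw [vol_cb _ hr.le]; simp
    rw [integral_sub hgi.integrableOn (integrableOn_const (by rw [vol_cb _ hr.le]; simp)),
      setIntegral_const, volr_cb _ hr.le, smul_eq_mul] at h1
    linarith
  refine (measure_mono hsub).trans ((vol_Bad hn (fun x => le_max_right _ _) hi
    (half_pos hl)).trans (le_of_eq ?_))
  congr 2
  field_simp

theorem dyadic_sum (a : ℝ) (ha : 0 ≤ a) (s m : ℕ) :
    ∑ j ∈ Finset.range m, 2 ^ (s + j) * max (a - 2 ^ (s + j) / 2) 0 ≤
      a * min (2 ^ (s + m)) (2 * a) := by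
  induction m with
  | zero => simp; positivity
  | succ m ih =>
    rw [Finset.sum_range_succ]
    have hp : (0 : ℝ) < 2 ^ (s + m) := by positivity
    have e : (2 : ℝ) ^ (s + (m + 1)) = 2 * 2 ^ (s + m) := by rw [← add_assoc, pow_succ]; ring
    rw [e]
    generalize (2 : ℝ) ^ (s + m) = t at *
    rcases le_total (2 * a) t with h | h
    · rw [max_eq_right (by linarith)]
      rw [min_eq_right h] at ih
      rw [min_eq_right (by linarith)]
      linarith
    · rw [max_eq_left (by linarith)]
      rw [min_eq_left h] at ih
      rcases le_total (2 * a) (2 * t) with h' | h'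
      · rw [min_eq_right h']; nlinarith
      · rw [min_eq_left h']; nlinarith

theorem good_level {n : ℕ} (hn : n ≠ 0) {g : RV n → ℝ} (hg0 : ∀ x, 0 ≤ g x)
    (hgc : Continuous g) (hgs : HasCompactSupport g) (s J : ℕ) (hJ : 0 < J) :
    ∃ j < J, volume (Bad g (2 ^ (s + j))) ≠ ⊤ ∧
      (2 ^ (s + j)) ^ 2 * volume.real (Bad g (2 ^ (s + j))) ≤
        4 * 5 ^ n / J * ∫ x, g x ^ 2 := by
  have hgi : Integrable g := hgc.integrable_of_hasCompactSupport hgs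
  have hfin : ∀ j, volume (Bad g (2 ^ (s + j))) ≠ ⊤ := fun j =>
    ((vol_Bad' hn hg0 hgi (by positivity)).trans_lt ENNReal.ofReal_lt_top).ne
  have hi : ∀ l : ℝ, 0 < l → Integrable (fun x => max (g x - l / 2) 0) := by
    intro l hl
    refine Integrable.mono' hgi (by
      exact ((hgi.aestronglyMeasurable.aemeasurable.sub_const _).max
        aemeasurable_const).aestronglyMeasurable) (ae_of_all _ fun x => ?_)
    rw [Real.norm_eq_abs, abs_of_nonneg (le_max_right _ _)]
    exact max_le (by linarith) (hg0 x)
  have hb : ∀ j, (2 ^ (s + j)) ^ 2 * volume.real (Bad g (2 ^ (s + j))) ≤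
      2 * 5 ^ n * ∫ x, 2 ^ (s + j) * max (g x - 2 ^ (s + j) / 2) 0 := by
    intro j
    have hp : (0 : ℝ) < 2 ^ (s + j) := by positivity
    have h := ENNReal.toReal_mono ENNReal.ofReal_ne_top (vol_Bad' hn hg0 hgi hp)
    have h0 : 0 ≤ ∫ x, max (g x - 2 ^ (s + j) / 2) 0 := by
      apply integral_nonneg; intro x; exact le_max_right _ _
    rw [ENNReal.toReal_ofReal (mul_nonneg (by positivity) h0)] at h
    rw [integral_const_mul]
    have := mul_le_mul_of_nonneg_left h (sq_nonneg ((2 : ℝ) ^ (s + j)))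
    refine this.trans (le_of_eq ?_)
    field_simp
  have hg2 : Integrable (fun x => g x ^ 2) := by
    have hs : HasCompactSupport (fun x => g x * g x) := hgs.mul_left
    have := (hgc.mul hgc).integrable_of_hasCompactSupport (μ := volume) hs
    simp only [sq]
    exact this
  have hsum : ∑ j ∈ Finset.range J, (2 ^ (s + j)) ^ 2 * volume.real (Bad g (2 ^ (s + j))) ≤
      ∑ j ∈ Finset.range J, 4 * 5 ^ n / J * ∫ x, g x ^ 2 := by
    calc _ ≤ ∑ j ∈ Finset.range J, 2 * 5 ^ n *
          ∫ x, 2 ^ (s + j) * max (g x - 2 ^ (s + j) / 2) 0 := Finset.sum_le_sum fun j _ => hb j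
      _ = 2 * 5 ^ n * ∫ x, ∑ j ∈ Finset.range J, 2 ^ (s + j) * max (g x - 2 ^ (s + j) / 2) 0 := by
          rw [← Finset.mul_sum, integral_finsetSum]
          intro j _
          exact (hi _ (by positivity)).const_mul _
      _ ≤ 2 * 5 ^ n * ∫ x, 2 * g x ^ 2 := by
          refine mul_le_mul_of_nonneg_left ?_ (by positivity)
          refine integral_mono ?_ ?_ ?_
          · refine integrable_finsetSum _ fun j _ => ?_
            exact (hi (2 ^ (s + j)) (by positivity)).const_mul _
          · exact hg2.const_mul 2
          · intro x
            refine (dyadic_sum (g x) (hg0 x) s J).trans ?_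
            have h1 := mul_le_mul_of_nonneg_left (min_le_right ((2 : ℝ) ^ (s + J)) (2 * g x))
              (hg0 x)
            refine h1.trans (le_of_eq ?_)
            ring
      _ = _ := by
          rw [integral_const_mul]; simp; field_simp; ring
  obtain ⟨j, hj, h⟩ := Finset.exists_le_of_sum_le (by simpa using hJ.ne') hsum
  exact ⟨j, by simpa using hj, hfin j, h⟩

end S1

open MeasureTheory Filter Topology

namespace S1

theorem cb_trans {n : ℕ} (x : RV n) (r : ℝ) (f : RV n → ℝ) :
    ∫ z in Metric.closedBall x r, f z = ∫ y in Metric.closedBall (0 : RV n) r, f (x + y) := by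
  have h := (measurePreserving_add_left (volume : Measure (RV n)) x).setIntegral_preimage_emb
    (measurableEmbedding_addLeft x) f (Metric.closedBall x r)
  rw [← h]
  congr 2
  ext y
  simp [dist_eq_norm]

theorem avg_scale {n : ℕ} {g : RV n → ℝ} {l : ℝ} {x : RV n} (hx : x ∉ Bad g l) {r t : ℝ}
    (hr : 0 < r) (ht : 0 < t) :
    ∫ y in Metric.closedBall (0 : RV n) r, g (x + t • y) ≤ l * (2 * r) ^ n := by
  have h1 : ∫ z in Metric.closedBall x (t * r), g z ≤ l * (2 * (t * r)) ^ n := by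
    by_contra! h
    exact hx ⟨t * r, by positivity, h⟩
  rw [cb_trans] at h1
  have h2 := Measure.setIntegral_comp_smul (volume : Measure (RV n)) (fun y => g (x + y))
    (Metric.closedBall (0 : RV n) r) (R := t) ht.ne'
  rw [h2, smul_closedBall _ _ hr.le]
  simp only [Module.finrank_fintype_fun_eq_card, Fintype.card_fin, smul_eq_mul, smul_zero,
    Real.norm_eq_abs, abs_of_pos ht]
  rw [abs_of_pos (by positivity)]
  calc _ ≤ (t ^ n)⁻¹ * (l * (2 * (t * r)) ^ n) := by gcongr
    _ = _ := by
      have : (2 * (t * r)) ^ n = t ^ n * (2 * r) ^ n := by rw [← mul_pow]; ring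
      rw [this]; field_simp

theorem avg_diff {n : ℕ} {U g : RV n → ℝ} (hU : ContDiff ℝ 1 U) (hgc : Continuous g)
    (hUg : ∀ x v, |fderiv ℝ U x v| ≤ g x * ‖v‖) (hg0 : ∀ x, 0 ≤ g x)
    {l : ℝ} {x : RV n} (hx : x ∉ Bad g l) {r : ℝ} (hr : 0 < r) :
    ∫ z in Metric.closedBall x r, |U z - U x| ≤ r * (l * (2 * r) ^ n) := by
  rw [cb_trans]
  have hpt : ∀ y ∈ Metric.closedBall (0 : RV n) r,
      |U (x + y) - U x| ≤ ∫ t in Set.Icc (0 : ℝ) 1, r * g (x + t • y) := by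
    intro y hy
    have hy' : ‖y‖ ≤ r := by simpa using hy
    have hd : ∀ t ∈ Set.uIcc (0 : ℝ) 1, HasDerivAt (fun t : ℝ => U (x + t • y))
        (fderiv ℝ U (x + t • y) y) t := by
      intro t _
      have h1 : HasFDerivAt U (fderiv ℝ U (x + t • y)) (x + t • y) :=
        (hU.differentiable (by simp) _).hasFDerivAt
      have h2 : HasDerivAt (fun t : ℝ => x + t • y) y t := by
        simpa using ((hasDerivAt_id t).smul_const y).const_add x
      exact h1.comp_hasDerivAt t h2
    have hcf : Continuous (fun t : ℝ => fderiv ℝ U (x + t • y) y) :=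
      ((hU.continuous_fderiv (by simp)).comp (by fun_prop)).clm_apply continuous_const
    have h3 := intervalIntegral.integral_eq_sub_of_hasDerivAt hd (hcf.intervalIntegrable _ _)
    simp only [one_smul, zero_smul, add_zero] at h3
    rw [← h3, intervalIntegral.integral_of_le zero_le_one, integral_Icc_eq_integral_Ioc]
    refine abs_integral_le_integral_abs.trans ?_
    refine setIntegral_mono ?_ ?_ fun t => ?_
    · exact (hcf.abs.integrableOn_Icc).mono_set Set.Ioc_subset_Icc_self
    · have : Continuous (fun t : ℝ => r * g (x + t • y)) := by fun_prop
      exact (this.integrableOn_Icc).mono_set Set.Ioc_subset_Icc_self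
    · refine (hUg _ _).trans ?_
      rw [mul_comm]
      exact mul_le_mul_of_nonneg_right hy' (hg0 _)
  have hF : Continuous (fun q : RV n × ℝ => r * g (x + q.2 • q.1)) := by fun_prop
  have hIntg : Integrable (Function.uncurry fun (y : RV n) (t : ℝ) => r * g (x + t • y))
      ((volume.restrict (Metric.closedBall (0 : RV n) r)).prod
        (volume.restrict (Set.Icc (0 : ℝ) 1))) := by
    rw [Measure.prod_restrict]
    exact hF.continuousOn.integrableOn_compact
      ((isCompact_closedBall _ _).prod isCompact_Icc)
  calc ∫ y in Metric.closedBall (0 : RV n) r, |U (x + y) - U x|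
      ≤ ∫ y in Metric.closedBall (0 : RV n) r, ∫ t in Set.Icc (0 : ℝ) 1, r * g (x + t • y) := by
        refine setIntegral_mono_on ?_ hIntg.integral_prod_left
          Metric.isClosed_closedBall.measurableSet hpt
        have : Continuous (fun y => |U (x + y) - U x|) := by
          have := hU.continuous
          fun_prop
        exact this.continuousOn.integrableOn_compact (isCompact_closedBall _ _)
    _ = ∫ t in Set.Icc (0 : ℝ) 1, ∫ y in Metric.closedBall (0 : RV n) r, r * g (x + t • y) :=
        integral_integral_swap hIntg
    _ = ∫ t in Set.Ioc (0 : ℝ) 1, ∫ y in Metric.closedBall (0 : RV n) r, r * g (x + t • y) :=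
        integral_Icc_eq_integral_Ioc
    _ ≤ ∫ t in Set.Ioc (0 : ℝ) 1, r * (l * (2 * r) ^ n) := by
        refine setIntegral_mono_on ?_ (integrableOn_const (by simp)) measurableSet_Ioc ?_
        · have h4 : IntegrableOn
              (fun t : ℝ => ∫ y in Metric.closedBall (0 : RV n) r, r * g (x + t • y))
              (Set.Icc 0 1) := hIntg.integral_prod_right
          exact h4.mono_set Set.Ioc_subset_Icc_self
        · intro t ht
          rw [integral_const_mul]
          exact mul_le_mul_of_nonneg_left (avg_scale hx hr ht.1) hr.le
    _ = _ := by simp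

theorem lip_good {n : ℕ} {U g : RV n → ℝ} (hU : ContDiff ℝ 1 U) (hgc : Continuous g)
    (hUg : ∀ x v, |fderiv ℝ U x v| ≤ g x * ‖v‖) (hg0 : ∀ x, 0 ≤ g x)
    {l : ℝ} {x y : RV n} (hx : x ∉ Bad g l) (hy : y ∉ Bad g l) :
    |U x - U y| ≤ 2 ^ (n + 1) * l * ‖x - y‖ := by
  rcases eq_or_ne x y with rfl | hxy
  · simp
  have hr : 0 < ‖x - y‖ := norm_pos_iff.2 (sub_ne_zero.2 hxy)
  set r := ‖x - y‖ with hrdef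
  set m : RV n := (1 / 2 : ℝ) • (x + y)
  have hmx : dist m x = r / 2 := by
    rw [dist_eq_norm, show m - x = (-(1 / 2) : ℝ) • (x - y) by simp only [m]; module, norm_smul]
    simp; ring
  have hmy : dist m y = r / 2 := by
    rw [dist_eq_norm, show m - y = ((1 / 2) : ℝ) • (x - y) by simp only [m]; module, norm_smul]
    simp; ring
  have hsx : Metric.closedBall m (r / 2) ⊆ Metric.closedBall x r :=
    Metric.closedBall_subset_closedBall' (by linarith)
  have hsy : Metric.closedBall m (r / 2) ⊆ Metric.closedBall y r :=
    Metric.closedBall_subset_closedBall' (by linarith)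
  have hci : ∀ (w a : RV n) (s : ℝ), IntegrableOn (fun z => |U z - U a|)
      (Metric.closedBall w s) := fun w a s => by
    have : Continuous (fun z => |U z - U a|) := by
      have := hU.continuous
      fun_prop
    exact this.continuousOn.integrableOn_compact (isCompact_closedBall _ _)
  have h1 : ∫ z in Metric.closedBall m (r / 2), |U z - U x| ≤ r * (l * (2 * r) ^ n) :=
    (setIntegral_mono_set (hci _ _ _) (ae_of_all _ fun _ => abs_nonneg _)
      (LE.le.eventuallyLE hsx)).trans (avg_diff hU hgc hUg hg0 hx hr)
  have h2 : ∫ z in Metric.closedBall m (r / 2), |U z - U y| ≤ r * (l * (2 * r) ^ n) :=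
    (setIntegral_mono_set (hci _ _ _) (ae_of_all _ fun _ => abs_nonneg _)
      (LE.le.eventuallyLE hsy)).trans (avg_diff hU hgc hUg hg0 hy hr)
  have h3 : ∫ z in Metric.closedBall m (r / 2), |U x - U y| ≤
      ∫ z in Metric.closedBall m (r / 2), (|U z - U x| + |U z - U y|) := by
    refine setIntegral_mono (integrableOn_const (by rw [vol_cb _ (by positivity)]; simp))
      ((hci _ _ _).add (hci _ _ _)) fun z => ?_
    have := abs_sub_le (U x) (U z) (U y)
    rw [abs_sub_comm (U x) (U z)] at this
    exact this
  rw [integral_add (hci _ _ _) (hci _ _ _), setIntegral_const, volr_cb _ (by positivity),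
    smul_eq_mul] at h3
  have h4 : (2 * (r / 2)) ^ n * |U x - U y| ≤ 2 * (r * (l * (2 * r) ^ n)) := by linarith
  have h5 : (2 * (r / 2)) = r := by ring
  rw [h5, mul_pow] at h4
  have h6 : 0 < r ^ n := by positivity
  have : r ^ n * |U x - U y| ≤ r ^ n * (2 ^ (n + 1) * l * r) := by
    refine h4.trans (le_of_eq ?_); ring
  exact le_of_mul_le_mul_left this h6

theorem le_good {n : ℕ} {g : RV n → ℝ} (hgc : Continuous g)
    {l : ℝ} {x : RV n} (hx : x ∉ Bad g l) : g x ≤ l := by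
  by_contra! h
  obtain ⟨m, hm1, hm2⟩ := exists_between h
  obtain ⟨e, he, h2⟩ := Metric.eventually_nhds_iff.1 (hgc.continuousAt.eventually_const_lt hm2)
  refine hx ⟨e / 2, by positivity, ?_⟩
  have h3 : ∫ z in Metric.closedBall x (e / 2), m ≤ ∫ z in Metric.closedBall x (e / 2), g z := by
    refine setIntegral_mono_on (integrableOn_const (by rw [vol_cb _ (by positivity)]; simp))
      (hgc.continuousOn.integrableOn_compact (isCompact_closedBall _ _))
      Metric.isClosed_closedBall.measurableSet fun z hz => ?_
    exact (h2 (by rw [Metric.mem_closedBall] at hz; linarith)).le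
  rw [setIntegral_const, volr_cb _ (by positivity), smul_eq_mul] at h3
  have : 0 < (2 * (e / 2)) ^ n := by positivity
  nlinarith

theorem trunc {n : ℕ} {U g : RV n → ℝ} (hU : ContDiff ℝ 1 U) (hgc : Continuous g)
    (hUg : ∀ x v, |fderiv ℝ U x v| ≤ g x * ‖v‖) (hUg' : ∀ x, |U x| ≤ g x)
    {l : ℝ} (hl : 0 ≤ l) :
    ∃ V : RV n → ℝ, LipschitzWith (Real.toNNReal (2 ^ (n + 1) * l)) V ∧ (∀ x, |V x| ≤ l) ∧
      ∀ x, x ∉ Bad g l → V x = U x := by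
  have hg0 : ∀ x, 0 ≤ g x := fun x => (abs_nonneg _).trans (hUg' x)
  have h1 : LipschitzOnWith (Real.toNNReal (2 ^ (n + 1) * l)) U (Bad g l)ᶜ := by
    refine LipschitzOnWith.of_dist_le_mul fun x hx y hy => ?_
    rw [Real.coe_toNNReal _ (by positivity), Real.dist_eq, dist_eq_norm]
    exact lip_good hU hgc hUg hg0 hx hy
  obtain ⟨V, hV, hVe⟩ := h1.extend_real
  refine ⟨fun x => max (-l) (min (V x) l), ?_, ?_, ?_⟩
  · exact (hV.min_const l).const_max (-l)
  · intro x
    rw [abs_le]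
    exact ⟨le_max_left _ _, max_le (by linarith) (min_le_right _ _)⟩
  · intro x hx
    have h2 := abs_le.1 ((hUg' x).trans (le_good hgc hx))
    change max (-l) (min (V x) l) = U x
    rw [← hVe hx, min_eq_left h2.2, max_eq_right h2.1]

end S1

open MeasureTheory Filter Topology

namespace S1
noncomputable section

theorem memLp_two_of_sq {α : Type*} [MeasurableSpace α] {μ : Measure α} {f : α → ℝ}
    (hf : Measurable f) (h : Integrable (fun x => f x ^ 2) μ) : MemLp f 2 μ :=
  (memLp_two_iff_integrable_sq hf.aestronglyMeasurable).2 h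

theorem l2m_memLp {n : ℕ} {E : MField n} {s : Set (RV n)} (h : L2MOn E s) (i j : Fin n) :
    MemLp (fun x => E x i j) 2 (volume.restrict s) := by
  refine memLp_two_of_sq (h.1 i j) (h.2.mono' ((h.1 i j).pow_const 2).aestronglyMeasurable
    (ae_of_all _ fun x => ?_))
  rw [Real.norm_eq_abs, abs_of_nonneg (sq_nonneg _), sq]
  refine le_trans ?_ (Finset.single_le_sum (f := fun i => ∑ j, E x i j * E x i j)
    (fun i _ => Finset.sum_nonneg fun j _ => mul_self_nonneg _) (Finset.mem_univ i))
  exact Finset.single_le_sum (f := fun j => E x i j * E x i j)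
    (fun j _ => mul_self_nonneg _) (Finset.mem_univ j)

theorem l2m_mk {n : ℕ} {E : MField n} {s : Set (RV n)} (hm : ∀ i j, Measurable fun x => E x i j)
    (h : ∀ i j, MemLp (fun x => E x i j) 2 (volume.restrict s)) : L2MOn E s := by
  refine ⟨hm, ?_⟩
  refine integrable_finsetSum _ fun i _ => integrable_finsetSum _ fun j _ => ?_
  simpa only [sq] using (h i j).integrable_sq

theorem l2v_memLp {n : ℕ} {u : VField n} {s : Set (RV n)} (h : L2VOn u s) (i : Fin n) :
    MemLp (fun x => u x i) 2 (volume.restrict s) := by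
  refine memLp_two_of_sq (h.1 i) (h.2.mono' ((h.1 i).pow_const 2).aestronglyMeasurable
    (ae_of_all _ fun x => ?_))
  rw [Real.norm_eq_abs, abs_of_nonneg (sq_nonneg _), sq]
  exact Finset.single_le_sum (f := fun j => u x j * u x j)
    (fun j _ => mul_self_nonneg _) (Finset.mem_univ i)

theorem l2v_mk {n : ℕ} {u : VField n} {s : Set (RV n)} (hm : ∀ i, Measurable fun x => u x i)
    (h : ∀ i, MemLp (fun x => u x i) 2 (volume.restrict s)) : L2VOn u s := by
  refine ⟨hm, ?_⟩
  refine integrable_finsetSum _ fun i _ => ?_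
  simpa only [sq] using (h i).integrable_sq

theorem mdot_int {n : ℕ} {P E : MField n} {s : Set (RV n)} (hP : L2MOn P s) (hE : L2MOn E s) :
    IntegrableOn (fun x => mdot (P x) (E x)) s := by
  refine integrable_finsetSum _ fun i _ => integrable_finsetSum _ fun j _ => ?_
  exact (l2m_memLp hP i j).integrable_mul (l2m_memLp hE i j)

theorem l2m_mono {n : ℕ} {E : MField n} {s t : Set (RV n)} (h : L2MOn E t) (hst : s ⊆ t) :
    L2MOn E s := ⟨h.1, h.2.mono_set hst⟩

/-- directional derivative along the `j`-th coordinate -/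
abbrev pd {n : ℕ} (f : RV n → ℝ) (j : Fin n) (x : RV n) : ℝ := fderiv ℝ f x (Pi.single j 1)

section phi
variable {n : ℕ} {φ : RV n → ℝ}

theorem pd_cont (h : ContDiff ℝ (⊤ : ℕ∞) φ) (j : Fin n) : Continuous (pd φ j) :=
  (h.continuous_fderiv (by simp)).clm_apply continuous_const

theorem pd_supp (h : HasCompactSupport φ) (j : Fin n) : HasCompactSupport (pd φ j) :=
  h.fderiv_apply (𝕜 := ℝ) (Pi.single j 1)

theorem pd_zero {x : RV n} (hx : x ∉ tsupport φ) (j : Fin n) : pd φ j x = 0 := by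
  have := fderiv_of_notMem_tsupport (𝕜 := ℝ) hx
  simp [pd, this]

theorem cc_memLp {f : RV n → ℝ} (hf : Continuous f) (hs : HasCompactSupport f)
    (p : ENNReal) (s : Set (RV n)) : MemLp f p (volume.restrict s) :=
  (hf.memLp_of_hasCompactSupport (μ := volume) hs).restrict s

theorem memLp_mul_cc {f u : RV n → ℝ} (hf : Continuous f) (hs : HasCompactSupport f)
    {μ : Measure (RV n)} (hu : MemLp u 2 μ) : MemLp (fun x => f x * u x) 2 μ := by
  obtain ⟨C, hC⟩ := hs.exists_bound_of_continuous hf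
  exact hu.mul (p := ⊤) (q := 2) (r := 2)
    (memLp_top_of_bound hf.aestronglyMeasurable C (ae_of_all _ hC))

theorem int_mul_cc {f u : RV n → ℝ} (hf : Continuous f) (hs : HasCompactSupport f)
    (hu : MemLp u 2 (volume : Measure (RV n))) : Integrable (fun x => u x * f x) :=
  hu.integrable_mul (q := 2) (hf.memLp_of_hasCompactSupport (μ := volume) hs)

theorem pd_mul {ψ : RV n → ℝ} (h : ContDiff ℝ (⊤ : ℕ∞) φ) (hψ : ContDiff ℝ (⊤ : ℕ∞) ψ)
    (j : Fin n) (x : RV n) :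
    pd (fun x => φ x * ψ x) j x = φ x * pd ψ j x + ψ x * pd φ j x := by
  have h1 : DifferentiableAt ℝ φ x := h.differentiable (by simp) x
  have h2 : DifferentiableAt ℝ ψ x := hψ.differentiable (by simp) x
  simp [pd, fderiv_fun_mul h1 h2]

end phi

/-- multiplication of an admissible pair by a test function -/
def mulAdm {n : ℕ} {Ω : Set (RV n)} (φ : RV n → ℝ) (hφ : ContDiff ℝ (⊤ : ℕ∞) φ)
    (hs : HasCompactSupport φ) (Q : AdmPair n Ω) : AdmPair n Ω where
  u := fun x i => φ x * Q.u x i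
  E := fun x i j => φ x * Q.E x i j + 1 / 2 * (pd φ j x * Q.u x i + pd φ i x * Q.u x j)
  hu := l2v_mk (fun i => hφ.continuous.measurable.mul (Q.hu.1 i)) fun i =>
    memLp_mul_cc hφ.continuous hs (l2v_memLp Q.hu i)
  hE := l2m_mk (fun i j => (hφ.continuous.measurable.mul (Q.hE.1 i j)).add
      ((((pd_cont hφ j).measurable.mul (Q.hu.1 i)).add
        ((pd_cont hφ i).measurable.mul (Q.hu.1 j))).const_mul (1 / 2))) fun i j =>
    (memLp_mul_cc hφ.continuous hs (l2m_memLp Q.hE i j)).add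
      (((memLp_mul_cc (pd_cont hφ j) (pd_supp hs j) (l2v_memLp Q.hu i)).add
        (memLp_mul_cc (pd_cont hφ i) (pd_supp hs i) (l2v_memLp Q.hu j))).const_mul (1 / 2))
  hsym := by
    filter_upwards [Q.hsym] with x hx hm i j
    rw [hx hm i j]; ring
  huz := by
    filter_upwards [Q.huz] with x hx hm
    funext i; simp [hx hm]
  hEz := by
    filter_upwards [Q.huz, Q.hEz] with x hx hx' hm
    ext i j; simp [hx hm, hx' hm]
  hgrad := by
    intro i j ψ hψ hψs
    have hu : ∀ i, MemLp (fun x => Q.u x i) 2 volume := fun i => by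
      simpa using l2v_memLp Q.hu i
    have hE : MemLp (fun x => Q.E x i j) 2 volume := by simpa using l2m_memLp Q.hE i j
    have h := Q.hgrad i j (fun x => φ x * ψ x) (hφ.mul hψ) hs.mul_right
    have hA : ∀ a b : Fin n, Integrable (fun x => Q.u x a * (pd φ b x * ψ x)) := fun a b =>
      int_mul_cc ((pd_cont hφ b).mul hψ.continuous) (pd_supp hs b).mul_right (hu a)
    have hB : ∀ a b : Fin n, Integrable (fun x => Q.u x a * (φ x * pd ψ b x)) := fun a b =>
      int_mul_cc (hφ.continuous.mul (pd_cont hψ b)) hs.mul_right (hu a)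
    have hC : Integrable (fun x => Q.E x i j * (φ x * ψ x)) :=
      int_mul_cc (hφ.continuous.mul hψ.continuous) hs.mul_right hE
    have e1 : (fun x => Q.u x i * pd (fun x => φ x * ψ x) j x +
        Q.u x j * pd (fun x => φ x * ψ x) i x) = fun x =>
        (Q.u x i * (φ x * pd ψ j x) + Q.u x j * (φ x * pd ψ i x)) +
        (Q.u x i * (pd φ j x * ψ x) + Q.u x j * (pd φ i x * ψ x)) := by
      funext x
      rw [pd_mul hφ hψ, pd_mul hφ hψ]; ring
    have h' : ∫ x, Q.E x i j * (φ x * ψ x) = -(1 / 2) *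
        ∫ x, (Q.u x i * pd (fun x => φ x * ψ x) j x +
        Q.u x j * pd (fun x => φ x * ψ x) i x) := h
    have hA2 : Integrable (fun x => Q.u x i * (pd φ j x * ψ x) + Q.u x j * (pd φ i x * ψ x)) :=
      (hA i j).add (hA j i)
    have hB2 : Integrable (fun x => Q.u x i * (φ x * pd ψ j x) + Q.u x j * (φ x * pd ψ i x)) :=
      (hB i j).add (hB j i)
    rw [e1, integral_add hB2 hA2] at h'
    have e2 : (fun x => (φ x * Q.E x i j +
        1 / 2 * (pd φ j x * Q.u x i + pd φ i x * Q.u x j)) * ψ x) = fun x =>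
        Q.E x i j * (φ x * ψ x) + 1 / 2 * (Q.u x i * (pd φ j x * ψ x) +
          Q.u x j * (pd φ i x * ψ x)) := by
      funext x; ring
    have e3 : (fun x => φ x * Q.u x i * fderiv ℝ ψ x (Pi.single j 1) +
        φ x * Q.u x j * fderiv ℝ ψ x (Pi.single i 1)) = fun x =>
        Q.u x i * (φ x * pd ψ j x) + Q.u x j * (φ x * pd ψ i x) := by
      funext x; simp only [pd]; ring
    change ∫ x, (φ x * Q.E x i j +
        1 / 2 * (pd φ j x * Q.u x i + pd φ i x * Q.u x j)) * ψ x = -(1 / 2) *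
      ∫ x, (φ x * Q.u x i * fderiv ℝ ψ x (Pi.single j 1) +
        φ x * Q.u x j * fderiv ℝ ψ x (Pi.single i 1))
    rw [e2, e3, integral_add hC (hA2.const_mul _), integral_const_mul, h']
    ring

theorem memLp_bdd_cc {n : ℕ} {f : RV n → ℝ} (hf : Measurable f) {K : Set (RV n)}
    (hK : IsCompact K) (hz : ∀ x, x ∉ K → f x = 0) {C : ℝ} (hC : ∀ x, |f x| ≤ C) :
    MemLp f 2 (volume : Measure (RV n)) := by
  have h1 : MemLp f 2 (volume.restrict K) := by
    have : IsFiniteMeasure (volume.restrict K) := ⟨by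
      simpa using hK.measure_lt_top⟩
    exact MemLp.of_bound hf.aestronglyMeasurable C (ae_of_all _ hC)
  have h2 : K.indicator f = f := by
    ext x
    by_cases hx : x ∈ K
    · simp [hx]
    · simp [hx, hz x hx]
  rw [← h2]
  exact (memLp_indicator_iff_restrict hK.measurableSet).2 h1

/-- derivative of Lipschitz functions along the coordinate directions -/
abbrev ld {n : ℕ} (f : RV n → ℝ) (j : Fin n) (x : RV n) : ℝ := lineDeriv ℝ f x (Pi.single j 1)

theorem ld_bound {n : ℕ} {f : RV n → ℝ} {C : NNReal} (hf : LipschitzWith C f) (j : Fin n)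
    (x : RV n) : |ld f j x| ≤ C := by
  have h := norm_lineDeriv_le_of_lipschitz ℝ hf (x₀ := x) (v := Pi.single j 1)
  simpa [Pi.norm_single] using h

theorem ld_meas {n : ℕ} {f : RV n → ℝ} (hf : Continuous f) (j : Fin n) : Measurable (ld f j) :=
  measurable_lineDeriv hf

theorem lip_ibp {n : ℕ} {φ ψ W : RV n → ℝ} (hφ : ContDiff ℝ (⊤ : ℕ∞) φ)
    (hs : HasCompactSupport φ) (hψ : ContDiff ℝ (⊤ : ℕ∞) ψ) {C : NNReal}
    (hW : LipschitzWith C W) (j : Fin n) :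
    Integrable (fun x => (φ x * ld W j x + W x * pd φ j x) * ψ x) ∧
    Integrable (fun x => φ x * W x * pd ψ j x) ∧
    ∫ x, (φ x * ld W j x + W x * pd φ j x) * ψ x = - ∫ x, φ x * W x * pd ψ j x := by
  have hc := hφ.mul hψ
  have hcs : HasCompactSupport (fun x => φ x * ψ x) := hs.mul_right
  obtain ⟨D, hD⟩ := ContDiff.lipschitzWith_of_hasCompactSupport hcs hc (by simp)
  have h := hW.integral_lineDeriv_mul_eq (μ := (volume : Measure (RV n))) hD hcs (Pi.single j 1)
  have e1 : ∀ x, lineDeriv ℝ (fun x => φ x * ψ x) x (-Pi.single j 1) =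
      -(φ x * pd ψ j x + ψ x * pd φ j x) := by
    intro x
    rw [← pd_mul hφ hψ, ((hc.differentiable (by simp)) x).lineDeriv_eq_fderiv, map_neg]
  simp only [e1] at h
  have i1 : Integrable (fun x => ld W j x * (φ x * ψ x)) := by
    have := (hφ.continuous.mul hψ.continuous).integrable_of_hasCompactSupport
      (μ := volume) hcs
    exact this.bdd_mul (c := C) (ld_meas hW.continuous j).aestronglyMeasurable
      (ae_of_all _ fun x => ld_bound hW j x)
  have i2 : Integrable (fun x => W x * pd φ j x * ψ x) :=
    ((hW.continuous.mul (pd_cont hφ j)).mul hψ.continuous).integrable_of_hasCompactSupport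
      (pd_supp hs j).mul_left.mul_right
  have i3 : Integrable (fun x => φ x * W x * pd ψ j x) :=
    ((hφ.continuous.mul hW.continuous).mul (pd_cont hψ j)).integrable_of_hasCompactSupport
      hs.mul_right.mul_right
  have e2 : (fun x => (φ x * ld W j x + W x * pd φ j x) * ψ x) = fun x =>
      ld W j x * (φ x * ψ x) + W x * pd φ j x * ψ x := by funext x; ring
  have e3 : (fun x => -(φ x * pd ψ j x + ψ x * pd φ j x) * W x) = fun x =>
      -(φ x * W x * pd ψ j x) - W x * pd φ j x * ψ x := by funext x; ring
  refine ⟨by rw [e2]; exact i1.add i2, i3, ?_⟩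
  rw [e2, integral_add i1 i2]
  have i3' : Integrable (fun x => -(φ x * W x * pd ψ j x)) := i3.neg
  rw [e3, integral_sub i3' i2, integral_neg] at h
  rw [h]; ring

/-- product of a test function in `Ω` and a Lipschitz field is admissible -/
def lipAdm {n : ℕ} {Ω : Set (RV n)} (φ : RV n → ℝ) (hφ : ContDiff ℝ (⊤ : ℕ∞) φ)
    (hs : HasCompactSupport φ) (hΩ : tsupport φ ⊆ Ω) (W : VField n) (C : NNReal)
    (hW : ∀ i, LipschitzWith C (fun x => W x i)) : AdmPair n Ω :=
  have hWc : ∀ i, Continuous fun x => W x i := fun i => (hW i).continuous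
  have hm : ∀ i j, Measurable (fun x => φ x * ld (fun x => W x i) j x + W x i * pd φ j x) :=
    fun i j => (hφ.continuous.measurable.mul (ld_meas (hWc i) j)).add
      ((hWc i).measurable.mul (pd_cont hφ j).measurable)
  have hL : ∀ i j, MemLp (fun x => φ x * ld (fun x => W x i) j x + W x i * pd φ j x) 2
      (volume : Measure (RV n)) := fun i j => by
    obtain ⟨A, hA⟩ := hs.exists_bound_of_continuous hφ.continuous
    obtain ⟨B, hB⟩ := ((pd_supp hs j).mul_left (f := fun x => W x i)).exists_bound_of_continuous
      ((hWc i).mul (pd_cont hφ j))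
    refine MemLp.add (memLp_bdd_cc (hφ.continuous.measurable.mul (ld_meas (hWc i) j)) hs
        (fun x hx => ?_) (C := A * C) fun x => ?_) ?_
    · simp [image_eq_zero_of_notMem_tsupport hx]
    · rw [abs_mul]
      exact mul_le_mul (hA x) (ld_bound (hW i) j x) (abs_nonneg _) ((norm_nonneg _).trans (hA x))
    · exact ((hWc i).mul (pd_cont hφ j)).memLp_of_hasCompactSupport (pd_supp hs j).mul_left
  { u := fun x i => φ x * W x i
    E := fun x i j => 1 / 2 * ((φ x * ld (fun x => W x i) j x + W x i * pd φ j x) +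
      (φ x * ld (fun x => W x j) i x + W x j * pd φ i x))
    hu := l2v_mk (fun i => (hφ.continuous.mul (hWc i)).measurable) fun i =>
      cc_memLp (hφ.continuous.mul (hWc i)) hs.mul_right _ _
    hE := l2m_mk (fun i j => ((hm i j).add (hm j i)).const_mul _) fun i j =>
      (((hL i j).add (hL j i)).const_mul _).restrict _
    hsym := ae_of_all _ fun x _ i j => by ring
    huz := ae_of_all _ fun x hx => by
      funext i
      simp [image_eq_zero_of_notMem_tsupport fun h => hx (hΩ h)]
    hEz := ae_of_all _ fun x hx => by
      have h1 : x ∉ tsupport φ := fun h => hx (hΩ h)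
      ext i j
      simp [image_eq_zero_of_notMem_tsupport h1, pd_zero h1]
    hgrad := by
      intro i j ψ hψ hψs
      obtain ⟨a1, a2, a3⟩ := lip_ibp hφ hs hψ (hW i) j
      obtain ⟨b1, b2, b3⟩ := lip_ibp hφ hs hψ (hW j) i
      have e1 : (fun x => (1 / 2 * ((φ x * ld (fun x => W x i) j x + W x i * pd φ j x) +
        (φ x * ld (fun x => W x j) i x + W x j * pd φ i x))) * ψ x) = fun x => 1 / 2 *
        ((φ x * ld (fun x => W x i) j x + W x i * pd φ j x) * ψ x +
        (φ x * ld (fun x => W x j) i x + W x j * pd φ i x) * ψ x) := by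
        funext x; ring
      rw [e1, integral_const_mul, integral_add a1 b1, a3, b3]
      rw [integral_add a2 b2]
      ring }

theorem mdot_sym {n : ℕ} {p : Mat n} (hp : ∀ i j, p i j = p j i) (a : Fin n → Fin n → ℝ) :
    mdot p (fun i j => 1 / 2 * (a i j + a j i)) = ∑ i, ∑ j, p i j * a i j := by
  have h : ∑ i, ∑ j, p i j * a j i = ∑ i, ∑ j, p i j * a i j := by
    rw [Finset.sum_comm]
    refine Finset.sum_congr rfl fun i _ => Finset.sum_congr rfl fun j _ => ?_
    rw [hp]
  unfold mdot
  have : ∀ i j, p i j * (1 / 2 * (a i j + a j i)) =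
      1 / 2 * (p i j * a i j) + 1 / 2 * (p i j * a j i) := fun i j => by ring
  simp only [this, Finset.sum_add_distrib, ← Finset.mul_sum]
  rw [h]; ring

theorem ker_lip {n : ℕ} {Ω : Set (RV n)} (hΩo : MeasurableSet Ω) {p : MField n} (hpS : SymOn p Ω)
    (hker : ∀ W : AdmPair n Ω, ∫ x in Ω, mdot (p x) (W.E x) = 0)
    (φ : RV n → ℝ) (hφ : ContDiff ℝ (⊤ : ℕ∞) φ)
    (hs : HasCompactSupport φ) (hΩ : tsupport φ ⊆ Ω) (W : VField n) (C : NNReal)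
    (hW : ∀ i, LipschitzWith C (fun x => W x i)) :
    ∫ x in Ω, ∑ i, ∑ j, p x i j * (φ x * ld (fun x => W x i) j x + W x i * pd φ j x) = 0 := by
  rw [← hker (lipAdm φ hφ hs hΩ W C hW)]
  refine setIntegral_congr_ae hΩo ?_
  filter_upwards [hpS] with x hx hm
  exact (mdot_sym (hx hm) fun i j => φ x * ld (fun x => W x i) j x + W x i * pd φ j x).symm

end
end S1

open MeasureTheory Filter Topology

namespace S1
noncomputable section

theorem ld_zero_ae {n : ℕ} {W : VField n} {C : NNReal}
    (hW : ∀ i, LipschitzWith C (fun x => W x i)) :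
    ∀ᵐ x ∂(volume : Measure (RV n)), W x = 0 → ∀ i j, ld (fun x => W x i) j x = 0 := by
  have hWL : LipschitzWith C W := by
    refine LipschitzWith.of_dist_le_mul fun x y => ?_
    rw [dist_pi_le_iff (by positivity)]
    intro i
    exact (hW i).dist_le_mul x y
  set s : Set (RV n) := {x | W x = 0} ∩ {x | DifferentiableAt ℝ W x} with hs
  have hsm : MeasurableSet s := by
    refine MeasurableSet.inter ?_ (measurableSet_of_differentiableAt ℝ W)
    exact hWL.continuous.measurable (measurableSet_singleton 0)
  have hA : ApproximatesLinearOn W (0 : RV n →L[ℝ] RV n) s 0 := by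
    intro x hx y hy
    have h1 : W x = 0 := hx.1
    have h2 : W y = 0 := hy.1
    simp [h1, h2]
  have h := hA.norm_fderiv_sub_le (volume : Measure (RV n)) hsm (fun x => fderiv ℝ W x)
    (fun x hx => hx.2.hasFDerivAt.hasFDerivWithinAt)
  rw [ae_restrict_iff' hsm] at h
  filter_upwards [h, hWL.ae_differentiableAt] with x hx hd h0 i j
  have h1 := hx ⟨h0, hd⟩
  have h2 : fderiv ℝ W x = 0 := by simpa using h1
  have h3 : HasFDerivAt (fun x => W x i) (0 : RV n →L[ℝ] ℝ) x := by
    have h4 := hd.hasFDerivAt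
    rw [h2] at h4
    have := (hasFDerivAt_pi'.1 h4) i
    simpa using this
  have := (h3.hasLineDerivAt (Pi.single j 1)).lineDeriv
  simpa using this

/-- the function controlling `U` and its gradient -/
def gfun {n : ℕ} (U : VField n) (x : RV n) : ℝ :=
  ∑ i, |U x i| + ∑ i, ∑ j, |pd (fun x => U x i) j x|

/-- sup-type size of a matrix -/
def qfun {n : ℕ} (p : MField n) (x : RV n) : ℝ := ∑ i, ∑ j, |p x i j|

def hfun {n : ℕ} (U : VField n) (x : RV n) : ℝ := ∑ i, |U x i|

/-- symmetrized gradient of a smooth field -/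
def SG {n : ℕ} (U : VField n) : MField n := fun x i j =>
  1 / 2 * (pd (fun x => U x i) j x + pd (fun x => U x j) i x)

/-- smooth compactly supported fields -/
structure Smooth {n : ℕ} (U : VField n) : Prop where
  sm : ∀ i, ContDiff ℝ (⊤ : ℕ∞) (fun x => U x i)
  cs : ∀ i, HasCompactSupport (fun x => U x i)

theorem hcs_sum {n : ℕ} {ι : Type*} (s : Finset ι) {f : ι → RV n → ℝ}
    (h : ∀ i, HasCompactSupport (f i)) : HasCompactSupport (fun x => ∑ i ∈ s, f i x) := by
  classical
  induction s using Finset.induction_on with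
  | empty =>
    simp only [Finset.sum_empty]
    exact (HasCompactSupport.zero : HasCompactSupport (0 : RV n → ℝ))
  | insert a s ha ih =>
    simp only [Finset.sum_insert ha]
    exact (h a).add ih

theorem hcs_abs {n : ℕ} {f : RV n → ℝ} (h : HasCompactSupport f) :
    HasCompactSupport (fun x => |f x|) := h.comp_left (g := fun t : ℝ => |t|) (by simp)

section
variable {n : ℕ} {U : VField n}
theorem gfun_cont (hU : Smooth U) : Continuous (gfun U) := by
  refine Continuous.add (continuous_finsetSum _ fun i _ => (hU.sm i).continuous.abs) ?_
  exact continuous_finsetSum _ fun i _ => continuous_finsetSum _ fun j _ =>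
    (pd_cont (hU.sm i) j).abs

theorem gfun_supp (hU : Smooth U) : HasCompactSupport (gfun U) := by
  refine HasCompactSupport.add (hcs_sum _ fun i => hcs_abs (hU.cs i)) ?_
  exact hcs_sum _ fun i => hcs_sum _ fun j => hcs_abs (pd_supp (hU.cs i) j)

theorem hfun_cont (hU : Smooth U) : Continuous (hfun U) :=
  continuous_finsetSum _ fun i _ => (hU.sm i).continuous.abs

theorem hfun_supp (hU : Smooth U) : HasCompactSupport (hfun U) := hcs_sum _ fun i => hcs_abs (hU.cs i)

theorem gfun_nonneg (x : RV n) : 0 ≤ gfun U x := by unfold gfun; positivity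

theorem gfun_ge (x : RV n) (i : Fin n) : |U x i| ≤ gfun U x := by
  have h1 := Finset.single_le_sum (f := fun i => |U x i|) (fun i _ => abs_nonneg _)
    (Finset.mem_univ i)
  have h2 : 0 ≤ ∑ i, ∑ j, |pd (fun x => U x i) j x| := by positivity
  unfold gfun; linarith

theorem gfun_ge_row (x : RV n) (i : Fin n) : ∑ j, |pd (fun x => U x i) j x| ≤ gfun U x := by
  have h1 := Finset.single_le_sum (f := fun i => ∑ j, |pd (fun x => U x i) j x|)
    (fun i _ => by positivity) (Finset.mem_univ i)
  have h2 : 0 ≤ ∑ i, |U x i| := by positivity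
  unfold gfun; linarith

theorem gfun_ge' (x : RV n) (i : Fin n) (v : RV n) :
    |fderiv ℝ (fun x => U x i) x v| ≤ gfun U x * ‖v‖ := by
  have hv : v = ∑ j, v j • (Pi.single j 1 : RV n) := by
    conv_lhs => rw [← Finset.univ_sum_single v]
    refine Finset.sum_congr rfl fun j _ => ?_
    rw [← Pi.single_smul]; simp
  have h1 : fderiv ℝ (fun x => U x i) x v = ∑ j, v j * pd (fun x => U x i) j x := by
    conv_lhs => rw [hv]
    simp [map_sum, pd]
  rw [h1]
  calc _ ≤ ∑ j, |v j * pd (fun x => U x i) j x| := Finset.abs_sum_le_sum_abs _ _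
    _ ≤ ∑ j, |pd (fun x => U x i) j x| * ‖v‖ := by
        refine Finset.sum_le_sum fun j _ => ?_
        rw [abs_mul, mul_comm]
        exact mul_le_mul_of_nonneg_left (norm_le_pi_norm v j) (abs_nonneg _)
    _ ≤ _ := by
        rw [← Finset.sum_mul]
        exact mul_le_mul_of_nonneg_right (gfun_ge_row x i) (norm_nonneg _)

end

theorem qfun_memLp {n : ℕ} {p : MField n} {s : Set (RV n)} (h : L2MOn p s) :
    MemLp (qfun p) 2 (volume.restrict s) :=
  memLp_finsetSum _ fun i _ => memLp_finsetSum _ fun j _ => (l2m_memLp h i j).abs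

theorem q_bound {n : ℕ} (p : MField n) (x : RV n) (a : Fin n → Fin n → ℝ) {M : ℝ}
    (h : ∀ i j, |a i j| ≤ M) : |∑ i, ∑ j, p x i j * a i j| ≤ qfun p x * M := by
  unfold qfun
  rw [Finset.sum_mul]
  refine (Finset.abs_sum_le_sum_abs _ _).trans (Finset.sum_le_sum fun i _ => ?_)
  rw [Finset.sum_mul]
  refine (Finset.abs_sum_le_sum_abs _ _).trans (Finset.sum_le_sum fun j _ => ?_)
  rw [abs_mul]
  exact mul_le_mul_of_nonneg_left (h i j) (abs_nonneg _)

theorem qfun_nonneg {n : ℕ} (p : MField n) (x : RV n) : 0 ≤ qfun p x := by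
  unfold qfun; positivity

set_option maxHeartbeats 200000 in
theorem key {n : ℕ} {Ω : Set (RV n)} (hΩo : MeasurableSet Ω) {p : MField n}
    (hpL : L2MOn p Ω) (hpS : SymOn p Ω)
    (hker : ∀ W : AdmPair n Ω, ∫ x in Ω, mdot (p x) (W.E x) = 0)
    (φ : RV n → ℝ) (hφ : ContDiff ℝ (⊤ : ℕ∞) φ)
    (hs : HasCompactSupport φ) (hΩ : tsupport φ ⊆ Ω) (hφ1 : ∀ x, |φ x| ≤ 1) {D : ℝ}
    (hD : ∀ j x, |pd φ j x| ≤ D)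
    {U : VField n} (hU : Smooth U) {l : ℝ} (hl : 0 < l)
    (hfin : volume (Bad (gfun U) l) ≠ ⊤) :
    |∫ x in Ω ∩ Bad (gfun U) l, φ x * mdot (p x) (SG U x)| ≤
      √(∫ x in Ω, qfun p x ^ 2) * ((2 ^ (n + 1) + D) * (l * √(volume.real (Bad (gfun U) l))) +
        D * √(∫ x in Bad (gfun U) l, hfun U x ^ 2)) := by
  set B := Bad (gfun U) l with hB
  rcases isEmpty_or_nonempty (Fin n) with hemp | ⟨⟨i0⟩⟩
  · simp [mdot, qfun]
  have hD0 : 0 ≤ D := (abs_nonneg _).trans (hD i0 0)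
  have hBm : MeasurableSet B := (isOpen_Bad gfun_nonneg
    ((gfun_cont hU).integrable_of_hasCompactSupport (gfun_supp hU)) l).measurableSet
  have htr : ∀ i, ∃ V : RV n → ℝ, LipschitzWith (Real.toNNReal (2 ^ (n + 1) * l)) V ∧
      (∀ x, |V x| ≤ l) ∧ ∀ x, x ∉ B → V x = U x i := fun i =>
    trunc ((hU.sm i).of_le (by exact_mod_cast le_top)) (gfun_cont hU)
      (fun x v => gfun_ge' x i v) (fun x => gfun_ge x i) hl.le
  choose V hVL hVb hVe using htr
  have hUL : ∀ i, ∃ C, LipschitzWith C (fun x => U x i) := fun i =>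
    ContDiff.lipschitzWith_of_hasCompactSupport (hU.cs i) (hU.sm i) (by simp)
  choose CU hCU using hUL
  obtain ⟨W, hWdef⟩ : ∃ W : VField n, W = fun x i => U x i - V i x := ⟨_, rfl⟩
  obtain ⟨C, hC⟩ : ∃ C : NNReal, C = (∑ i, CU i) + Real.toNNReal (2 ^ (n + 1) * l) := ⟨_, rfl⟩
  have hWL : ∀ i, LipschitzWith C (fun x => W x i) := by
    intro i
    rw [hWdef]
    refine ((hCU i).sub (hVL i)).weaken ?_
    rw [hC]
    gcongr
    exact Finset.single_le_sum (f := CU) (fun _ _ => bot_le) (Finset.mem_univ i)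
  have hk := ker_lip hΩo hpS hker φ hφ hs hΩ W C hWL
  have hlV : ∀ᵐ x ∂(volume : Measure (RV n)), ∀ i j,
      ld (fun x => W x i) j x = pd (fun x => U x i) j x - ld (V i) j x := by
    rw [ae_all_iff]; intro i
    filter_upwards [(hVL i).ae_differentiableAt] with x hx j
    have h1 : DifferentiableAt ℝ (fun x => U x i) x := (hU.sm i).differentiable (by simp) x
    have h2 : HasLineDerivAt ℝ (fun x => W x i)
        (pd (fun x => U x i) j x - ld (V i) j x) x (Pi.single j 1) := by
      have h3 := (h1.hasFDerivAt.sub hx.hasFDerivAt).hasLineDerivAt (Pi.single j 1)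
      rw [ld, hx.lineDeriv_eq_fderiv, hWdef]
      exact h3
    exact h2.lineDeriv
  -- the integrand vanishes off `B`
  have hk2 : ∫ x in Ω ∩ B, ∑ i, ∑ j, p x i j *
      (φ x * ld (fun x => W x i) j x + W x i * pd φ j x) = 0 := by
    rw [← hk]
    refine (setIntegral_eq_of_subset_of_ae_sdiff_eq_zero hΩo.nullMeasurableSet
      Set.inter_subset_left ?_).symm
    filter_upwards [ld_zero_ae hWL] with x hx hxm
    have hxB : x ∉ B := fun h => hxm.2 ⟨hxm.1, h⟩
    have hW0 : W x = 0 := by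
      funext i; simp [hWdef, hVe i x hxB]
    simp [hx hW0, hW0]
  have hmem : ∀ᵐ x ∂(volume.restrict (Ω ∩ B)), x ∈ Ω := by
    filter_upwards [ae_restrict_mem (hΩo.inter hBm)] with x hx using hx.1
  have hsymr : ∀ᵐ x ∂(volume.restrict (Ω ∩ B)), φ x * mdot (p x) (SG U x) =
      (∑ i, ∑ j, p x i j * (φ x * ld (fun x => W x i) j x + W x i * pd φ j x)) +
      ∑ i, ∑ j, p x i j * (φ x * ld (V i) j x - W x i * pd φ j x) := by
    filter_upwards [hmem, ae_restrict_of_ae hpS, ae_restrict_of_ae hlV] with x hx h1 h2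
    have h3 := mdot_sym (h1 hx) (fun i j => pd (fun x => U x i) j x)
    have h4 : mdot (p x) (SG U x) = ∑ i, ∑ j, p x i j * pd (fun x => U x i) j x := h3
    rw [h4, Finset.mul_sum, ← Finset.sum_add_distrib]
    refine Finset.sum_congr rfl fun i _ => ?_
    rw [Finset.mul_sum, ← Finset.sum_add_distrib]
    refine Finset.sum_congr rfl fun j _ => ?_
    rw [h2]; ring
  -- integrability
  have hq : MemLp (qfun p) 2 (volume.restrict (Ω ∩ B)) :=
    (qfun_memLp hpL).mono_measure (Measure.restrict_mono Set.inter_subset_left le_rfl)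
  have hfm : IsFiniteMeasure (volume.restrict (Ω ∩ B)) := ⟨by
    simpa using (measure_mono Set.inter_subset_right).trans_lt hfin.lt_top⟩
  have hh : MemLp (hfun U) 2 (volume.restrict (Ω ∩ B)) :=
    cc_memLp (hfun_cont hU) (hfun_supp hU) _ _
  have hpt : ∀ x, |∑ i, ∑ j, p x i j * (φ x * ld (V i) j x - W x i * pd φ j x)| ≤
      qfun p x * ((2 ^ (n + 1) + D) * l + D * hfun U x) := by
    intro x
    refine q_bound p x (fun i j => φ x * ld (V i) j x - W x i * pd φ j x) fun i j => ?_
    have h1 : |ld (V i) j x| ≤ 2 ^ (n + 1) * l := by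
      have := ld_bound (hVL i) j x
      rwa [Real.coe_toNNReal _ (by positivity)] at this
    have h2 : |W x i| ≤ hfun U x + l := by
      have h3 := Finset.single_le_sum (f := fun i => |U x i|) (fun i _ => abs_nonneg _)
        (Finset.mem_univ i)
      rw [hWdef]
      exact (abs_sub _ _).trans (add_le_add h3 (hVb i x))
    calc |φ x * ld (V i) j x - W x i * pd φ j x|
        ≤ |φ x| * |ld (V i) j x| + |W x i| * |pd φ j x| := by
          rw [← abs_mul, ← abs_mul]; exact abs_sub _ _
      _ ≤ 1 * (2 ^ (n + 1) * l) + (hfun U x + l) * D := by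
          gcongr
          · exact hφ1 x
          · exact (abs_nonneg _).trans h2
          · exact hD j x
      _ = _ := by ring
  have hVm : ∀ i j, Measurable (ld (V i) j) := fun i j => ld_meas (hVL i).continuous j
  have hWm : ∀ i, Continuous fun x => W x i := fun i => (hWL i).continuous
  have hlW : ∀ i j, Measurable (ld (fun x => W x i) j) := fun i j => ld_meas (hWm i) j
  have hmm : MemLp (fun x => (2 ^ (n + 1) + D) * l + D * hfun U x) 2
      (volume.restrict (Ω ∩ B)) := (memLp_const ((2 ^ (n + 1) + D) * l)).add (hh.const_mul D)
  have hdom : Integrable (fun x => qfun p x * ((2 ^ (n + 1) + D) * l + D * hfun U x))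
      (volume.restrict (Ω ∩ B)) :=
    hq.integrable_mul (q := 2) hmm
  have hm2 : Measurable fun x => ∑ i, ∑ j, p x i j * (φ x * ld (V i) j x - W x i * pd φ j x) := by
    refine Finset.measurable_fun_sum _ fun i _ => Finset.measurable_fun_sum _ fun j _ => ?_
    exact (hpL.1 i j).mul ((hφ.continuous.measurable.mul (hVm i j)).sub
      ((hWm i).measurable.mul (pd_cont hφ j).measurable))
  have hi2 : Integrable (fun x => ∑ i, ∑ j, p x i j * (φ x * ld (V i) j x - W x i * pd φ j x))
      (volume.restrict (Ω ∩ B)) :=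
    hdom.mono' hm2.aestronglyMeasurable (ae_of_all _ hpt)
  have hi1 : Integrable (fun x => ∑ i, ∑ j, p x i j *
      (φ x * ld (fun x => W x i) j x + W x i * pd φ j x)) (volume.restrict (Ω ∩ B)) := by
    refine integrable_finsetSum _ fun i _ => integrable_finsetSum _ fun j _ => ?_
    refine ((l2m_memLp hpL i j).mono_measure
      (Measure.restrict_mono Set.inter_subset_left le_rfl)).integrable_mul (q := 2) ?_
    have k1 : MemLp (ld (fun x => W x i) j) 2 (volume.restrict (Ω ∩ B)) :=
      MemLp.of_bound (hlW i j).aestronglyMeasurable C (ae_of_all _ (ld_bound (hWL i) j))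
    have k2 : MemLp (fun x => W x i * pd φ j x) 2 (volume.restrict (Ω ∩ B)) :=
      cc_memLp ((hWm i).mul (pd_cont hφ j)) (pd_supp hs j).mul_left _ _
    have k3 : MemLp (fun x => φ x * ld (fun x => W x i) j x) 2 (volume.restrict (Ω ∩ B)) :=
      memLp_mul_cc hφ.continuous hs k1
    exact k3.add k2
  rw [integral_congr_ae hsymr, integral_add hi1 hi2, hk2, zero_add]
  refine abs_integral_le_integral_abs.trans ?_
  refine (integral_mono hi2.abs hdom hpt).trans ?_
  have e1 : (fun x => qfun p x * ((2 ^ (n + 1) + D) * l + D * hfun U x)) = fun x =>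
    ((2 ^ (n + 1) + D) * l) * (qfun p x * 1) + D * (qfun p x * hfun U x) := by funext x; ring
  have hj1 : Integrable (fun x => qfun p x * 1) (volume.restrict (Ω ∩ B)) :=
    hq.integrable_mul (q := 2) (memLp_const (1 : ℝ))
  have hj2 : Integrable (fun x => qfun p x * hfun U x) (volume.restrict (Ω ∩ B)) :=
    hq.integrable_mul (q := 2) hh
  rw [e1, integral_add (hj1.const_mul _) (hj2.const_mul _), integral_const_mul,
    integral_const_mul]
  have hqq : √(∫ x in Ω ∩ B, qfun p x ^ 2) ≤ √(∫ x in Ω, qfun p x ^ 2) := by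
    refine Real.sqrt_le_sqrt ?_
    exact setIntegral_mono_set (qfun_memLp hpL).integrable_sq (ae_of_all _ fun _ => sq_nonneg _)
      (LE.le.eventuallyLE Set.inter_subset_left)
  have c1 : ∫ x in Ω ∩ B, qfun p x * 1 ≤ √(∫ x in Ω, qfun p x ^ 2) * √(volume.real B) := by
    refine (le_abs_self _).trans ((cs' hq (memLp_const (1 : ℝ))).trans ?_)
    refine mul_le_mul hqq (Real.sqrt_le_sqrt ?_) (Real.sqrt_nonneg _) (Real.sqrt_nonneg _)
    simp only [one_pow, integral_const, smul_eq_mul, mul_one]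
    rw [measureReal_restrict_apply_univ]
    exact measureReal_mono Set.inter_subset_right hfin
  have c2 : ∫ x in Ω ∩ B, qfun p x * hfun U x ≤
      √(∫ x in Ω, qfun p x ^ 2) * √(∫ x in B, hfun U x ^ 2) := by
    refine (le_abs_self _).trans ((cs' hq hh).trans ?_)
    refine mul_le_mul hqq (Real.sqrt_le_sqrt ?_) (Real.sqrt_nonneg _) (Real.sqrt_nonneg _)
    exact setIntegral_mono_set (cc_memLp (hfun_cont hU) (hfun_supp hU) 2 B).integrable_sq
      (ae_of_all _ fun _ => sq_nonneg _) (LE.le.eventuallyLE Set.inter_subset_right)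
  calc _ ≤ (2 ^ (n + 1) + D) * l * (√(∫ x in Ω, qfun p x ^ 2) * √(volume.real B)) +
        D * (√(∫ x in Ω, qfun p x ^ 2) * √(∫ x in B, hfun U x ^ 2)) := by gcongr
    _ = _ := by ring

end
end S1

open MeasureTheory Filter Topology

namespace S1
noncomputable section

/-- mollification -/
def mo {n : ℕ} (η f : RV n → ℝ) (x : RV n) : ℝ := ∫ t, f t * η (x - t)

section
variable {n : ℕ} {η f : RV n → ℝ}

theorem mo_eq (η f : RV n → ℝ) :
    mo η f = convolution f η (ContinuousLinearMap.lsmul ℝ ℝ) volume := by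
  funext x
  rw [convolution_lsmul]; rfl

theorem mo_eq' (η f : RV n → ℝ) :
    mo η f = convolution η f (ContinuousLinearMap.lsmul ℝ ℝ) volume := by
  funext x
  rw [convolution_lsmul_swap]
  exact integral_congr_ae (ae_of_all _ fun t => by simp [mul_comm])

theorem mo_int (hη : Continuous η) (hs : HasCompactSupport η)
    (hf : LocallyIntegrable f (volume : Measure (RV n))) (x : RV n) :
    Integrable fun t => f t * η (x - t) :=
  hs.convolutionExists_right (ContinuousLinearMap.lsmul ℝ ℝ) hf hη x

theorem mo_smooth (hη : ContDiff ℝ (⊤ : ℕ∞) η) (hs : HasCompactSupport η)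
    (hf : LocallyIntegrable f (volume : Measure (RV n))) : ContDiff ℝ (⊤ : ℕ∞) (mo η f) := by
  rw [mo_eq]
  exact hs.contDiff_convolution_right _ hf hη

theorem mo_pd (hη : ContDiff ℝ (⊤ : ℕ∞) η) (hs : HasCompactSupport η)
    (hf : LocallyIntegrable f (volume : Measure (RV n))) (j : Fin n) (x : RV n) :
    pd (mo η f) j x = ∫ t, f t * pd η j (x - t) := by
  have h := hs.hasFDerivAt_convolution_right (ContinuousLinearMap.lsmul ℝ ℝ) hf
    (hη.of_le (by exact_mod_cast le_top)) x
  rw [pd, mo_eq, h.fderiv, convolution_precompR_apply _ hf (hs.fderiv ℝ)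
    (hη.continuous_fderiv (by simp)), convolution_lsmul]
  rfl

theorem mo_contract (hη : Continuous η) (hs : HasCompactSupport η) (h0 : ∀ x, 0 ≤ η x)
    (h1 : ∫ x, η x = 1) (hf : MemLp f 2 (volume : Measure (RV n))) :
    MemLp (mo η f) 2 (volume : Measure (RV n)) ∧ ∫ x, mo η f x ^ 2 ≤ ∫ x, f x ^ 2 := by
  have hfl : LocallyIntegrable f (volume : Measure (RV n)) := hf.locallyIntegrable (by norm_num)
  have hf2 : Integrable (fun x => f x ^ 2) := hf.integrable_sq
  have hηi : Integrable η := hη.integrable_of_hasCompactSupport hs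
  have hpt : ∀ x, mo η f x ^ 2 ≤ mo η (fun t => f t ^ 2) x := by
    intro x
    have i1 := mo_int hη hs hfl x
    have i2 := mo_int hη hs hf2.locallyIntegrable x
    have i3 : Integrable fun t => η (x - t) := hηi.comp_sub_left x
    have e3 : ∫ t, η (x - t) = 1 := by rw [integral_sub_left_eq_self η volume x, h1]
    obtain ⟨m, hm⟩ : ∃ m, m = mo η f x := ⟨_, rfl⟩
    have hnn : 0 ≤ ∫ t, (f t ^ 2 * η (x - t) - (2 * m) * (f t * η (x - t)) +
        m ^ 2 * η (x - t)) := by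
      refine integral_nonneg fun t => ?_
      have : 0 ≤ (f t - m) ^ 2 * η (x - t) := mul_nonneg (sq_nonneg _) (h0 _)
      simp only [Pi.zero_apply]
      nlinarith [this]
    have i12 : Integrable fun t => f t ^ 2 * η (x - t) - (2 * m) * (f t * η (x - t)) :=
      i2.sub (i1.const_mul _)
    rw [integral_add i12 (i3.const_mul _), integral_sub i2 (i1.const_mul _), integral_const_mul,
      integral_const_mul, e3] at hnn
    have h4 : ∫ t, f t * η (x - t) = m := hm.symm
    rw [h4] at hnn
    rw [← hm]
    change m ^ 2 ≤ ∫ t, f t ^ 2 * η (x - t)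
    nlinarith
  have hi : Integrable (mo η (fun t => f t ^ 2)) := by
    rw [mo_eq]; exact hf2.integrable_convolution _ hηi
  have hcont : Continuous (mo η f) := by
    rw [mo_eq]; exact hs.continuous_convolution_right _ hfl hη
  have hi2 : Integrable (fun x => mo η f x ^ 2) :=
    hi.mono' (hcont.pow 2).aestronglyMeasurable (ae_of_all _ fun x => by
      rw [Real.norm_eq_abs, abs_of_nonneg (sq_nonneg _)]; exact hpt x)
  refine ⟨memLp_two_of_sq hcont.measurable hi2, (integral_mono hi2 hi hpt).trans ?_⟩
  rw [mo_eq, integral_convolution _ hf2 hηi, h1]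
  simp

theorem mo_sub (hη : Continuous η) (hs : HasCompactSupport η) {g : RV n → ℝ}
    (hf : LocallyIntegrable f (volume : Measure (RV n)))
    (hg : LocallyIntegrable g (volume : Measure (RV n))) (x : RV n) :
    mo η (fun t => f t - g t) x = mo η f x - mo η g x := by
  unfold mo
  rw [← integral_sub (mo_int hη hs hf x) (mo_int hη hs hg x)]
  exact integral_congr_ae (ae_of_all _ fun t => by ring)

theorem l2_approx (hf : MemLp f 2 (volume : Measure (RV n))) {ε : ℝ} (hε : 0 < ε) :
    ∃ g : RV n → ℝ, HasCompactSupport g ∧ Continuous g ∧ ∫ x, (f x - g x) ^ 2 ≤ ε := by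
  obtain ⟨g, h1, h2, h3, -⟩ := MemLp.exists_hasCompactSupport_integral_rpow_sub_le (p := 2)
    (by norm_num) (f := f) (μ := volume) (by simpa using hf) hε
  refine ⟨g, h1, h3, ?_⟩
  simpa using h2

theorem mo_conv (hf : MemLp f 2 (volume : Measure (RV n))) {ε : ℝ} (hε : 0 < ε) :
    ∃ δ > 0, ∀ b : ContDiffBump (0 : RV n), b.rOut ≤ δ →
      ∫ x, (mo (b.normed volume) f x - f x) ^ 2 ≤ ε := by
  obtain ⟨g, hgs, hgc, hg⟩ := l2_approx hf (ε := ε / 9) (by positivity)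
  have hgm : MemLp g 2 (volume : Measure (RV n)) := hgc.memLp_of_hasCompactSupport hgs
  obtain ⟨K, hK⟩ : ∃ K, K = Metric.cthickening 1 (tsupport g) := ⟨_, rfl⟩
  have hKc : IsCompact K := by rw [hK]; exact IsCompact.cthickening hgs
  obtain ⟨τ, hτ, hτ2⟩ : ∃ τ : ℝ, 0 < τ ∧ τ ^ 2 * volume.real K ≤ ε / 9 := by
    refine ⟨√(ε / 9 / (volume.real K + 1)), by positivity, ?_⟩
    rw [Real.sq_sqrt (by positivity), div_mul_eq_mul_div, div_le_iff₀ (by positivity)]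
    have : 0 ≤ volume.real K := by positivity
    nlinarith
  obtain ⟨δ, hδ, hδ2⟩ := Metric.uniformContinuous_iff.1
    (hgs.uniformContinuous_of_continuous hgc) τ hτ
  refine ⟨min δ 1, by positivity, fun b hb => ?_⟩
  obtain ⟨η, hη⟩ : ∃ η, η = b.normed (volume : Measure (RV n)) := ⟨_, rfl⟩
  rw [← hη]
  have hηc : Continuous η := hη ▸ b.continuous_normed
  have hηs : HasCompactSupport η := hη ▸ b.hasCompactSupport_normed
  have hη0 : ∀ x, 0 ≤ η x := hη ▸ b.nonneg_normed
  have hη1 : ∫ x, η x = 1 := hη ▸ b.integral_normed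
  have hclose : ∀ x, |mo η g x - g x| ≤ τ := by
    intro x
    rw [mo_eq', hη]
    refine b.dist_normed_convolution_le hgc.aestronglyMeasurable fun y hy => (hδ2 ?_).le
    exact (Metric.mem_ball.1 hy).trans_le (hb.trans (min_le_left _ _))
  have hzero : ∀ x, x ∉ K → mo η g x - g x = 0 := by
    intro x hx
    have hd : ∀ t, dist x t ≤ 1 → g t = 0 := by
      intro t ht
      by_contra hne
      apply hx
      rw [hK]
      exact Metric.mem_cthickening_of_dist_le x t 1 _ (subset_tsupport _ hne) ht
    rw [hd x (by simp)]
    unfold mo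
    rw [sub_zero]
    refine integral_eq_zero_of_ae (ae_of_all _ fun t => ?_)
    by_cases ht : dist x t ≤ 1
    · simp [hd t ht]
    · have : η (x - t) = 0 := by
        by_contra hne
        have h5 : x - t ∈ Function.support η := hne
        rw [hη, b.support_normed_eq, mem_ball_zero_iff, ← dist_eq_norm] at h5
        exact ht (h5.le.trans (hb.trans (min_le_right _ _)))
      simp [this]
  have hmoc : Continuous (mo η g) := by
    rw [mo_eq]; exact hηs.continuous_convolution_right _ hgc.locallyIntegrable hηc
  have hgI : ∫ x, (mo η g x - g x) ^ 2 ≤ ε / 9 := by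
    have e : ∫ x, (mo η g x - g x) ^ 2 = ∫ x in K, (mo η g x - g x) ^ 2 :=
      (setIntegral_eq_integral_of_forall_compl_eq_zero fun x hx => by rw [hzero x hx]; simp).symm
    rw [e]
    refine le_trans ?_ hτ2
    have := norm_setIntegral_le_of_norm_le_const (μ := volume) (s := K) (C := τ ^ 2)
      (f := fun x => (mo η g x - g x) ^ 2) hKc.measure_lt_top (fun x _ => by
        rw [norm_pow, Real.norm_eq_abs]; gcongr; exact hclose x)
    exact (le_abs_self _).trans this
  have hfg : MemLp (fun x => f x - g x) 2 (volume : Measure (RV n)) := hf.sub hgm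
  obtain ⟨c1, c2⟩ := mo_contract hηc hηs hη0 hη1 hfg
  obtain ⟨d1, -⟩ := mo_contract hηc hηs hη0 hη1 hf
  obtain ⟨g1, -⟩ := mo_contract hηc hηs hη0 hη1 hgm
  have hgg : MemLp (fun x => mo η g x - g x) 2 (volume : Measure (RV n)) := g1.sub hgm
  have hff : MemLp (fun x => mo η f x - f x) 2 (volume : Measure (RV n)) := d1.sub hf
  have hpt : ∀ x, (mo η f x - f x) ^ 2 ≤ 3 * (mo η (fun t => f t - g t) x ^ 2 +
      (mo η g x - g x) ^ 2 + (f x - g x) ^ 2) := by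
    intro x
    rw [mo_sub hηc hηs (hf.locallyIntegrable (by norm_num)) hgc.locallyIntegrable]
    generalize mo η f x = a
    generalize mo η g x = a'
    nlinarith [sq_nonneg ((a - a') - (a' - g x)), sq_nonneg ((a - a') + (f x - g x)),
      sq_nonneg ((a' - g x) + (f x - g x))]
  have i1 := c1.integrable_sq
  have i2 := hgg.integrable_sq
  have i3 := hfg.integrable_sq
  have i12 : Integrable (fun x => mo η (fun t => f t - g t) x ^ 2 + (mo η g x - g x) ^ 2) :=
    i1.add i2
  have i123 : Integrable (fun x => mo η (fun t => f t - g t) x ^ 2 + (mo η g x - g x) ^ 2 +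
    (f x - g x) ^ 2) := i12.add i3
  have := integral_mono hff.integrable_sq (i123.const_mul 3) hpt
  rw [integral_const_mul, integral_add i12 i3, integral_add i1 i2] at this
  linarith

end
end
end S1

open MeasureTheory Filter Topology

namespace S1
noncomputable section

theorem pd_smooth {n : ℕ} {f : RV n → ℝ} (h : ContDiff ℝ (⊤ : ℕ∞) f) (j : Fin n) :
    ContDiff ℝ (⊤ : ℕ∞) (pd f j) :=
  (h.fderiv_right (m := (⊤ : ℕ∞)) (by simp)).clm_apply contDiff_const

theorem pd_comm {n : ℕ} {f : RV n → ℝ} (h : ContDiff ℝ (⊤ : ℕ∞) f) (i j : Fin n) (x : RV n) :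
    pd (pd f i) j x = pd (pd f j) i x := by
  have hd : DifferentiableAt ℝ (fderiv ℝ f) x :=
    (h.fderiv_right (m := (⊤ : ℕ∞)) (by simp)).differentiable (by simp) x
  have key : ∀ a b : Fin n, pd (pd f a) b x =
      fderiv ℝ (fderiv ℝ f) x (Pi.single b 1) (Pi.single a 1) := by
    intro a b
    have := (hd.hasFDerivAt.clm_apply (hasFDerivAt_const (Pi.single a 1 : RV n) x)).fderiv
    change fderiv ℝ (fun x => fderiv ℝ f x (Pi.single a 1)) x (Pi.single b 1) = _
    rw [this]
    simp
  rw [key, key]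
  have hs : IsSymmSndFDerivAt ℝ f x := h.contDiffAt.isSymmSndFDerivAt (by
    simp only [minSmoothness_of_isRCLikeNormedField]
    exact WithTop.coe_le_coe.2 (le_top : (2 : ℕ∞) ≤ ⊤))
  exact hs _ _

theorem pd_ibp {n : ℕ} {a b : RV n → ℝ} (ha : ContDiff ℝ (⊤ : ℕ∞) a) (hb : ContDiff ℝ (⊤ : ℕ∞) b)
    (has : HasCompactSupport a) (j : Fin n) :
    ∫ x, a x * pd b j x = - ∫ x, pd a j x * b x := by
  refine integral_mul_fderiv_eq_neg_fderiv_mul_of_integrable ?_ ?_ ?_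
    (fun x _ => ha.differentiable (by simp) x) (fun x _ => hb.differentiable (by simp) x)
  · exact ((pd_cont ha j).mul hb.continuous).integrable_of_hasCompactSupport
      (pd_supp has j).mul_right
  · exact (ha.continuous.mul (pd_cont hb j)).integrable_of_hasCompactSupport has.mul_right
  · exact (ha.continuous.mul hb.continuous).integrable_of_hasCompactSupport has.mul_right

theorem pd_swap {n : ℕ} {a b : RV n → ℝ} (ha : ContDiff ℝ (⊤ : ℕ∞) a) (hb : ContDiff ℝ (⊤ : ℕ∞) b)
    (has : HasCompactSupport a) (i j : Fin n) :
    ∫ x, pd a j x * pd b i x = ∫ x, pd a i x * pd b j x := by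
  have h1 := pd_ibp ha (pd_smooth hb i) has j
  have h2 := pd_ibp ha (pd_smooth hb j) has i
  simp only [pd_comm hb i j] at h1
  linarith

theorem korn {n : ℕ} {U : VField n} (hU : Smooth U) :
    ∑ i, ∑ j, ∫ x, pd (fun x => U x i) j x ^ 2 ≤ 2 * ∑ i, ∑ j, ∫ x, SG U x i j ^ 2 := by
  have hI : ∀ i j k l, Integrable fun x => pd (fun x => U x i) j x * pd (fun x => U x k) l x :=
    fun i j k l => ((pd_cont (hU.sm i) j).mul (pd_cont (hU.sm k) l)).integrable_of_hasCompactSupport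
      (pd_supp (hU.cs i) j).mul_right
  obtain ⟨T, hT⟩ : ∃ T : Fin n → Fin n → Fin n → Fin n → ℝ, T = fun i j k l =>
    ∫ x, pd (fun x => U x i) j x * pd (fun x => U x k) l x := ⟨_, rfl⟩
  have e1 : ∀ i j, ∫ x, pd (fun x => U x i) j x ^ 2 = T i j i j := by
    intro i j; rw [hT]; simp only [sq]
  have e2 : ∀ i j, ∫ x, SG U x i j ^ 2 = 1 / 4 * T i j i j + 1 / 4 * T j i j i +
      1 / 2 * T i j j i := by
    intro i j
    have e3 : (fun x => SG U x i j ^ 2) = fun x =>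
      (1 / 4 * (pd (fun x => U x i) j x * pd (fun x => U x i) j x) +
      1 / 4 * (pd (fun x => U x j) i x * pd (fun x => U x j) i x)) +
      1 / 2 * (pd (fun x => U x i) j x * pd (fun x => U x j) i x) := by
      funext x; unfold SG; ring
    have i12 : Integrable fun x => 1 / 4 * (pd (fun x => U x i) j x * pd (fun x => U x i) j x) +
      1 / 4 * (pd (fun x => U x j) i x * pd (fun x => U x j) i x) :=
      ((hI i j i j).const_mul _).add ((hI j i j i).const_mul _)
    rw [e3, integral_add i12 ((hI i j j i).const_mul _),
      integral_add ((hI i j i j).const_mul _) ((hI j i j i).const_mul _), integral_const_mul,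
      integral_const_mul, integral_const_mul, hT]
  have e4 : ∀ i j, T i j j i = T i i j j := by
    intro i j; rw [hT]; exact pd_swap (hU.sm i) (hU.sm j) (hU.cs i) i j
  have e5 : 0 ≤ ∑ i, ∑ j, T i i j j := by
    have : ∑ i, ∑ j, T i i j j = ∫ x, (∑ i, pd (fun x => U x i) i x) ^ 2 := by
      have : ∀ x, (∑ i, pd (fun x => U x i) i x) ^ 2 =
        ∑ i, ∑ j, pd (fun x => U x i) i x * pd (fun x => U x j) j x := fun x => by
          rw [sq, Finset.sum_mul_sum]
      simp only [this]
      rw [integral_finsetSum _ fun i _ => integrable_finsetSum _ fun j _ => hI i i j j]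
      refine Finset.sum_congr rfl fun i _ => ?_
      rw [integral_finsetSum _ fun j _ => hI i i j j, hT]
    rw [this]
    exact integral_nonneg fun x => sq_nonneg _
  have e6 : ∑ i, ∑ j, T j i j i = ∑ i, ∑ j, T i j i j := Finset.sum_comm
  simp only [e1, e2, e4, Finset.sum_add_distrib, ← Finset.mul_sum]
  rw [e6]
  linarith

theorem adm_smooth {n : ℕ} {Ω : Set (RV n)} (hΩb : Bornology.IsBounded Ω) (Q : AdmPair n Ω)
    {ε : ℝ} (hε : 0 < ε) : ∃ U : VField n, Smooth U ∧
      (∀ i, ∫ x, (U x i - Q.u x i) ^ 2 ≤ ε) ∧ (∀ i j, ∫ x, (SG U x i j - Q.E x i j) ^ 2 ≤ ε) := by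
  have hu : ∀ i, MemLp (fun x => Q.u x i) 2 (volume : Measure (RV n)) := fun i => by
    simpa using l2v_memLp Q.hu i
  have hE : ∀ i j, MemLp (fun x => Q.E x i j) 2 (volume : Measure (RV n)) := fun i j => by
    simpa using l2m_memLp Q.hE i j
  have hul : ∀ i, LocallyIntegrable (fun x => Q.u x i) (volume : Measure (RV n)) := fun i =>
    (hu i).locallyIntegrable (by norm_num)
  have ev : ∀ f : RV n → ℝ, MemLp f 2 (volume : Measure (RV n)) → ∀ᶠ δ in 𝓝[>] (0 : ℝ),
      ∀ b : ContDiffBump (0 : RV n), b.rOut ≤ δ →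
      ∫ x, (mo (b.normed volume) f x - f x) ^ 2 ≤ ε := by
    intro f hf
    obtain ⟨δ, hδ, h⟩ := mo_conv hf hε
    filter_upwards [Ioc_mem_nhdsGT hδ] with d hd b hb
    exact h b (hb.trans hd.2)
  have ev1 := eventually_all.2 fun i => ev _ (hu i)
  have ev2 := eventually_all.2 fun i => eventually_all.2 fun j => ev _ (hE i j)
  obtain ⟨δ, ⟨h1, h2⟩, hδ⟩ := ((ev1.and ev2).and self_mem_nhdsWithin).exists
  have hδ' : 0 < δ := hδ
  obtain ⟨b, hb⟩ : ∃ b : ContDiffBump (0 : RV n), b.rOut ≤ δ :=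
    ⟨⟨δ / 2, δ, by positivity, by linarith⟩, le_rfl⟩
  obtain ⟨η, hη⟩ : ∃ η, η = b.normed (volume : Measure (RV n)) := ⟨_, rfl⟩
  have hηd : ContDiff ℝ (⊤ : ℕ∞) η := hη ▸ b.contDiff_normed
  have hηs : HasCompactSupport η := hη ▸ b.hasCompactSupport_normed
  have hsm : ∀ i, ContDiff ℝ (⊤ : ℕ∞) (mo η (fun x => Q.u x i)) := fun i =>
    mo_smooth hηd hηs (hul i)
  refine ⟨fun x i => mo η (fun x => Q.u x i) x, ⟨hsm, fun i => ?_⟩, fun i => ?_, fun i j => ?_⟩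
  · have e : (fun x => mo η (fun x => Q.u x i) x) = mo η (Ω.indicator fun x => Q.u x i) := by
      funext x
      unfold mo
      refine integral_congr_ae ?_
      filter_upwards [Q.huz] with t ht
      by_cases hm : t ∈ Ω
      · simp [hm]
      · simp [hm, ht hm]
    rw [e, mo_eq]
    refine HasCompactSupport.convolution _ ?_ hηs
    refine HasCompactSupport.of_support_subset_isCompact hΩb.isCompact_closure ?_
    exact Set.support_indicator_subset.trans subset_closure
  · rw [hη]; exact h1 i b hb
  · have e : ∀ x, SG (fun x i => mo η (fun x => Q.u x i) x) x i j = mo η (fun x => Q.E x i j) x := by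
      intro x
      have hψ : ContDiff ℝ (⊤ : ℕ∞) fun t => η (x - t) := hηd.comp (contDiff_const.sub contDiff_id)
      have hψs : HasCompactSupport fun t => η (x - t) :=
        hηs.comp_homeomorph (Homeomorph.subLeft x)
      have hψd : ∀ k t, fderiv ℝ (fun t => η (x - t)) t (Pi.single k 1) = - pd η k (x - t) := by
        intro k t
        have hd : DifferentiableAt ℝ η (x - t) := hηd.differentiable (by simp) _
        have := (hd.hasFDerivAt.comp t ((hasFDerivAt_const x t).sub (hasFDerivAt_id t))).fderiv
        change fderiv ℝ (η ∘ fun t => x - t) t (Pi.single k 1) = _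
        erw [this]
        simp [pd]
      have h := Q.hgrad i j _ hψ hψs
      simp only [hψd] at h
      have i1 : ∀ a c, Integrable fun t => Q.u t a * pd η c (x - t) := fun a c =>
        mo_int (pd_cont hηd c) (pd_supp hηs c) (hul a) x
      have e1 : (fun t => Q.u t i * -pd η j (x - t) + Q.u t j * -pd η i (x - t)) = fun t =>
        -(Q.u t i * pd η j (x - t) + Q.u t j * pd η i (x - t)) := by funext t; ring
      rw [e1, integral_neg, integral_add (i1 i j) (i1 j i)] at h
      unfold SG
      have g1 : pd (fun x => mo η (fun x => Q.u x i) x) j x = _ := mo_pd hηd hηs (hul i) j x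
      have g2 : pd (fun x => mo η (fun x => Q.u x j) x) i x = _ := mo_pd hηd hηs (hul j) i x
      rw [g1, g2]
      unfold mo
      rw [h]; ring
    simp only [e]
    rw [hη]
    exact h2 i j b hb

end
end S1

open MeasureTheory Filter Topology

namespace S1
noncomputable section

theorem bdd_of_tendsto {f : ℕ → ℝ} {a : ℝ} (h : Tendsto f atTop (𝓝 a)) :
    ∃ C, ∀ k, |f k| ≤ C := by
  obtain ⟨C, hC⟩ := (Metric.isBounded_range_of_tendsto f h).exists_norm_le
  exact ⟨C, fun k => hC _ (Set.mem_range_self k)⟩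

theorem comp_bdd {n : ℕ} {Ω : Set (RV n)} {F : ℕ → MField n} {F0 : MField n}
    (hF : ∀ k, L2MOn (F k) Ω) (hw : WeakL2M F F0 Ω) (i j : Fin n) :
    ∃ K : ℝ, 0 ≤ K ∧ ∀ k, ∫ x in Ω, F k x i j ^ 2 ≤ K := by
  refine bdd_of_weak (μ := volume.restrict Ω) (f := fun k x => F k x i j)
    (fun k => l2m_memLp (hF k) i j) fun g hg => ?_
  obtain ⟨g', hg'm, hgg⟩ := hg.aestronglyMeasurable
  have hg' : MemLp g' 2 (volume.restrict Ω) := (memLp_congr_ae hgg).1 hg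
  have hG : L2MOn (fun x a b => if a = i ∧ b = j then g' x else 0) Ω := by
    refine l2m_mk (fun a b => ?_) fun a b => ?_
    · by_cases h : a = i ∧ b = j
      · simpa [h] using hg'm.measurable
      · simp [h]
    · by_cases h : a = i ∧ b = j
      · simpa [h] using hg'
      · simp [h]
  obtain ⟨C, hC⟩ := bdd_of_tendsto (hw _ hG)
  refine ⟨C, fun k => ?_⟩
  have e : ∫ x in Ω, F k x i j * g x = ∫ x in Ω, mdot (F k x)
      ((fun x a b => if a = i ∧ b = j then g' x else 0 : MField n) x) := by
    refine integral_congr_ae ?_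
    filter_upwards [hgg] with x hx
    unfold mdot
    rw [Finset.sum_eq_single i, Finset.sum_eq_single j]
    · simp [hx]
    · intro b _ hb; simp [hb]
    · simp
    · intro a _ ha; simp [ha]
    · simp
  rw [e]; exact hC k

theorem sq_sum1 {n : ℕ} (a : Fin n → ℝ) : (∑ i, |a i|) ^ 2 ≤ n * ∑ i, a i ^ 2 := by
  have := sq_sum_le_card_mul_sum_sq (s := Finset.univ) (f := fun i => |a i|)
  simpa using this

theorem sq_sum2 {n : ℕ} (a : Fin n → Fin n → ℝ) :
    (∑ i, ∑ j, |a i j|) ^ 2 ≤ n * n * ∑ i, ∑ j, a i j ^ 2 := by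
  have h := sq_sum_le_card_mul_sum_sq (s := Finset.univ) (f := fun i => ∑ j, |a i j|)
  simp only [Finset.card_univ, Fintype.card_fin] at h
  refine h.trans ?_
  rw [mul_assoc]
  refine mul_le_mul_of_nonneg_left ?_ (by positivity)
  rw [Finset.mul_sum]
  exact Finset.sum_le_sum fun i _ => sq_sum1 (a i)

theorem qfun_sq_le {n : ℕ} {s : Set (RV n)} {F : MField n} (hF : L2MOn F s) :
    ∫ x in s, qfun F x ^ 2 ≤ n * n * ∑ i, ∑ j, ∫ x in s, F x i j ^ 2 := by
  have hi : ∀ i j, Integrable (fun x => F x i j ^ 2) (volume.restrict s) := fun i j =>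
    (l2m_memLp hF i j).integrable_sq
  have e : ∑ i, ∑ j, ∫ x in s, F x i j ^ 2 = ∫ x in s, ∑ i, ∑ j, F x i j ^ 2 := by
    rw [integral_finsetSum _ fun i _ => integrable_finsetSum _ fun j _ => hi i j]
    refine Finset.sum_congr rfl fun i _ => ?_
    rw [integral_finsetSum _ fun j _ => hi i j]
  rw [e, ← integral_const_mul]
  exact integral_mono (qfun_memLp hF).integrable_sq
    ((integrable_finsetSum _ fun i _ => integrable_finsetSum _ fun j _ => hi i j).const_mul _)
    fun x => sq_sum2 _

theorem q_bdd {n : ℕ} {Ω : Set (RV n)} {F : ℕ → MField n} {F0 : MField n}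
    (hF : ∀ k, L2MOn (F k) Ω) (hw : WeakL2M F F0 Ω) :
    ∃ K : ℝ, 0 ≤ K ∧ ∀ k, √(∫ x in Ω, qfun (F k) x ^ 2) ≤ K := by
  choose K hK0 hK using comp_bdd hF hw
  refine ⟨√(n * n * ∑ i, ∑ j, K i j), Real.sqrt_nonneg _, fun k => Real.sqrt_le_sqrt ?_⟩
  refine (qfun_sq_le (hF k)).trans (mul_le_mul_of_nonneg_left ?_ (by positivity))
  exact Finset.sum_le_sum fun i _ => Finset.sum_le_sum fun j _ => hK i j k

theorem hfun_memLp {n : ℕ} {u : VField n} {μ : Measure (RV n)}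
    (h : ∀ i, MemLp (fun x => u x i) 2 μ) : MemLp (hfun u) 2 μ :=
  memLp_finsetSum _ fun i _ => (h i).abs

theorem hfun_sq_le {n : ℕ} {u : VField n} {μ : Measure (RV n)}
    (h : ∀ i, MemLp (fun x => u x i) 2 μ) :
    ∫ x, hfun u x ^ 2 ∂μ ≤ n * ∫ x, ∑ i, u x i ^ 2 ∂μ := by
  rw [← integral_const_mul]
  exact integral_mono (hfun_memLp h).integrable_sq
    ((integrable_finsetSum _ fun i _ => (h i).integrable_sq).const_mul _) fun x => sq_sum1 _

theorem adm_u {n : ℕ} {Ω : Set (RV n)} (Q : AdmPair n Ω) (i : Fin n) :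
    MemLp (fun x => Q.u x i) 2 (volume : Measure (RV n)) := by
  simpa using l2v_memLp Q.hu i

theorem adm_E {n : ℕ} {Ω : Set (RV n)} (Q : AdmPair n Ω) (i j : Fin n) :
    MemLp (fun x => Q.E x i j) 2 (volume : Measure (RV n)) := by
  simpa using l2m_memLp Q.hE i j

theorem adm_EΩ {n : ℕ} {Ω : Set (RV n)} (Q : AdmPair n Ω) : L2MOn Q.E Ω :=
  l2m_mono Q.hE (Set.subset_univ _)

theorem ker_limit {n : ℕ} {Ω : Set (RV n)} {pk : ℕ → MField n} {p : MField n}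
    (hker : ∀ k, ∀ W : AdmPair n Ω, ∫ x in Ω, mdot (pk k x) (W.E x) = 0)
    (hpw : WeakL2M pk p Ω) (W : AdmPair n Ω) : ∫ x in Ω, mdot (p x) (W.E x) = 0 := by
  have h := hpw W.E (adm_EΩ W)
  simp only [hker] at h
  exact (tendsto_nhds_unique h tendsto_const_nhds)

/-- the test matrix `u ⊗ ∇φ` -/
def tens {n : ℕ} (u : VField n) (φ : RV n → ℝ) : MField n := fun x i j => u x i * pd φ j x

theorem tens_L2 {n : ℕ} {Ω : Set (RV n)} (Q : AdmPair n Ω) {φ : RV n → ℝ}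
    (hφ : ContDiff ℝ (⊤ : ℕ∞) φ) (hs : HasCompactSupport φ) : L2MOn (tens Q.u φ) Ω := by
  refine l2m_mk (fun i j => (Q.hu.1 i).mul (pd_cont hφ j).measurable) fun i j => ?_
  have := memLp_mul_cc (pd_cont hφ j) (pd_supp hs j) (adm_u Q i)
  simp only [mul_comm] at this
  exact this.restrict Ω

theorem ident {n : ℕ} {Ω : Set (RV n)} (hΩo : MeasurableSet Ω) {p : MField n}
    (hpL : L2MOn p Ω) (hpS : SymOn p Ω)
    (hker : ∀ W : AdmPair n Ω, ∫ x in Ω, mdot (p x) (W.E x) = 0) (Q : AdmPair n Ω)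
    {φ : RV n → ℝ} (hφ : ContDiff ℝ (⊤ : ℕ∞) φ) (hs : HasCompactSupport φ) :
    ∫ x in Ω, φ x * mdot (p x) (Q.E x) = - ∫ x in Ω, mdot (p x) (tens Q.u φ x) := by
  have h := hker (mulAdm φ hφ hs Q)
  have e : ∫ x in Ω, mdot (p x) ((mulAdm φ hφ hs Q).E x) =
      ∫ x in Ω, (φ x * mdot (p x) (Q.E x) + mdot (p x) (tens Q.u φ x)) := by
    refine setIntegral_congr_ae hΩo ?_
    filter_upwards [hpS] with x hx hm
    have h3 := mdot_sym (hx hm) (fun i j => Q.u x i * pd φ j x)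
    have h4 : mdot (p x) (tens Q.u φ x) = ∑ i, ∑ j, p x i j * (Q.u x i * pd φ j x) := rfl
    rw [h4, ← h3]
    simp only [mdot, mulAdm]
    rw [Finset.mul_sum, ← Finset.sum_add_distrib]
    refine Finset.sum_congr rfl fun i _ => ?_
    rw [Finset.mul_sum, ← Finset.sum_add_distrib]
    refine Finset.sum_congr rfl fun j _ => ?_
    ring
  have i1 : Integrable (fun x => φ x * mdot (p x) (Q.E x)) (volume.restrict Ω) := by
    obtain ⟨C, hC⟩ := hs.exists_bound_of_continuous hφ.continuous
    exact (mdot_int hpL (adm_EΩ Q)).bdd_mul hφ.continuous.aestronglyMeasurable (ae_of_all _ hC)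
  have i2 : Integrable (fun x => mdot (p x) (tens Q.u φ x)) (volume.restrict Ω) :=
    mdot_int hpL (tens_L2 Q hφ hs)
  rw [e, integral_add i1 i2] at h
  linarith

theorem dist_conv {n : ℕ} {Ω : Set (RV n)} (hΩo : MeasurableSet Ω)
    (P : ℕ → AdmPair n Ω) (Q : AdmPair n Ω) (pk : ℕ → MField n) (p : MField n)
    (hpkL2 : ∀ k, L2MOn (pk k) Ω) (hpkS : ∀ k, SymOn (pk k) Ω)
    (hpL2 : L2MOn p Ω) (hpS : SymOn p Ω)
    (hstrong : Tendsto (fun k => ∫ x, ∑ i, ((P k).u x i - Q.u x i) ^ 2) atTop (𝓝 0))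
    (hker : ∀ k, ∀ W : AdmPair n Ω, ∫ x in Ω, mdot (pk k x) (W.E x) = 0)
    (hpw : WeakL2M pk p Ω) {φ : RV n → ℝ} (hφ : ContDiff ℝ (⊤ : ℕ∞) φ)
    (hs : HasCompactSupport φ) :
    Tendsto (fun k => ∫ x in Ω, φ x * mdot (pk k x) ((P k).E x)) atTop
      (𝓝 (∫ x in Ω, φ x * mdot (p x) (Q.E x))) := by
  rw [ident hΩo hpL2 hpS (ker_limit hker hpw) Q hφ hs]
  simp only [fun k => ident hΩo (hpkL2 k) (hpkS k) (hker k) (P k) hφ hs]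
  refine Tendsto.neg ?_
  obtain ⟨K, hK0, hK⟩ := q_bdd hpkL2 hpw
  have hDj : ∀ j, ∃ D, ∀ x, ‖pd φ j x‖ ≤ D := fun j =>
    (pd_supp hs j).exists_bound_of_continuous (pd_cont hφ j)
  choose Dj hDj using hDj
  obtain ⟨D, hD0, hD⟩ : ∃ D : ℝ, 0 ≤ D ∧ ∀ j x, |pd φ j x| ≤ D := by
    refine ⟨∑ j, |Dj j|, by positivity, fun j x => (hDj j x).trans ((le_abs_self _).trans ?_)⟩
    exact Finset.single_le_sum (f := fun j => |Dj j|) (fun _ _ => abs_nonneg _) (Finset.mem_univ j)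
  have h1 := hpw _ (tens_L2 Q hφ hs)
  have h2 : Tendsto (fun k => ∫ x in Ω, mdot (pk k x) (tens (P k).u φ x) -
      mdot (pk k x) (tens Q.u φ x)) atTop (𝓝 0) := by
    have hlim : Tendsto (fun k => K * (D * √(n * ∫ x, ∑ i, ((P k).u x i - Q.u x i) ^ 2)))
        atTop (𝓝 0) := by
      have := (((hstrong.const_mul (n : ℝ)).sqrt).const_mul D).const_mul K
      simpa using this
    refine squeeze_zero_norm (fun k => ?_) hlim
    obtain ⟨w, hw⟩ : ∃ w : VField n, w = fun x i => (P k).u x i - Q.u x i := ⟨_, rfl⟩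
    have hwL : ∀ i, MemLp (fun x => w x i) 2 (volume : Measure (RV n)) := fun i => by
      rw [hw]; exact (adm_u (P k) i).sub (adm_u Q i)
    have hwh := hfun_memLp hwL
    have hpt : ∀ x, |mdot (pk k x) (tens (P k).u φ x) - mdot (pk k x) (tens Q.u φ x)| ≤
        qfun (pk k) x * (hfun w x * D) := by
      intro x
      have e : mdot (pk k x) (tens (P k).u φ x) - mdot (pk k x) (tens Q.u φ x) =
          ∑ i, ∑ j, pk k x i j * (w x i * pd φ j x) := by
        simp only [mdot, tens, hw, ← Finset.sum_sub_distrib]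
        refine Finset.sum_congr rfl fun i _ => Finset.sum_congr rfl fun j _ => ?_
        ring
      rw [e]
      refine q_bound (pk k) x (fun i j => w x i * pd φ j x) fun i j => ?_
      rw [abs_mul]
      refine mul_le_mul ?_ (hD j x) (abs_nonneg _) (by unfold hfun; positivity)
      exact Finset.single_le_sum (f := fun j => |w x j|) (fun _ _ => abs_nonneg _)
        (Finset.mem_univ i)
    have hq := qfun_memLp (hpkL2 k)
    have hh : MemLp (hfun w) 2 (volume.restrict Ω) := hwh.restrict Ω
    have hI : Integrable (fun x => qfun (pk k) x * hfun w x) (volume.restrict Ω) :=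
      hq.integrable_mul (q := 2) hh
    have hI' : Integrable (fun x => qfun (pk k) x * (hfun w x * D)) (volume.restrict Ω) := by
      simpa only [mul_assoc] using hI.mul_const D
    have hi : Integrable (fun x => mdot (pk k x) (tens (P k).u φ x) -
        mdot (pk k x) (tens Q.u φ x)) (volume.restrict Ω) :=
      (mdot_int (hpkL2 k) (tens_L2 (P k) hφ hs)).sub (mdot_int (hpkL2 k) (tens_L2 Q hφ hs))
    refine abs_integral_le_integral_abs.trans ((integral_mono hi.abs hI' hpt).trans ?_)
    have e2 : ∫ x in Ω, qfun (pk k) x * (hfun w x * D) = D * ∫ x in Ω, qfun (pk k) x * hfun w x := by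
      rw [← integral_const_mul]
      exact integral_congr_ae (ae_of_all _ fun x => by ring)
    rw [e2]
    have h5 : ∫ x in Ω, qfun (pk k) x * hfun w x ≤
        K * √(n * ∫ x, ∑ i, ((P k).u x i - Q.u x i) ^ 2) := by
      refine (le_abs_self _).trans ((cs' hq hh).trans ?_)
      refine mul_le_mul (hK k) (Real.sqrt_le_sqrt ?_) (Real.sqrt_nonneg _) hK0
      have h6 := hfun_sq_le hwL
      rw [hw] at h6 ⊢
      refine le_trans ?_ h6
      rw [← hw]
      exact setIntegral_le_integral hwh.integrable_sq (ae_of_all _ fun x => sq_nonneg _)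
    calc _ ≤ D * (K * √(n * ∫ x, ∑ i, ((P k).u x i - Q.u x i) ^ 2)) := by gcongr
      _ = _ := by ring
  have h3 := h1.add h2
  rw [add_zero] at h3
  refine h3.congr fun k => ?_
  rw [integral_sub (mdot_int (hpkL2 k) (tens_L2 (P k) hφ hs))
    (mdot_int (hpkL2 k) (tens_L2 Q hφ hs))]
  ring

end
end S1

open MeasureTheory Filter Topology

namespace S1
noncomputable section

theorem abs_cont {α : Type*} [MeasurableSpace α] {μ : Measure α} {f : α → ℝ}
    (hf : Integrable f μ) {ε : ℝ} (hε : 0 < ε) :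
    ∃ δ > 0, ∀ s : Set α, μ s ≤ ENNReal.ofReal δ → |∫ x in s, f x ∂μ| ≤ ε := by
  have h := hf.tendsto_setIntegral_nhds_zero (ι := Set α) (l := comap μ (𝓝 0)) (s := id)
    tendsto_comap
  have h2 := (Metric.tendsto_nhds.1 h) ε hε
  rw [eventually_comap] at h2
  obtain ⟨d, hd, h3⟩ := (ENNReal.nhds_zero_basis_Iic.eventually_iff).1 h2
  by_cases hdt : d = ⊤
  · refine ⟨1, one_pos, fun s hs => ?_⟩
    have := h3 (x := μ s) (by simp [hdt]) s rfl
    rw [dist_zero_right] at this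
    exact this.le
  · refine ⟨d.toReal, ENNReal.toReal_pos hd.ne' hdt, fun s hs => ?_⟩
    rw [ENNReal.ofReal_toReal hdt] at hs
    have := h3 (x := μ s) hs s rfl
    rw [dist_zero_right] at this
    exact this.le

theorem SG_memLp {n : ℕ} {U : VField n} (hU : Smooth U) (i j : Fin n) :
    MemLp (fun x => SG U x i j) 2 (volume : Measure (RV n)) := by
  refine MemLp.const_mul (f := fun x => pd (fun x => U x i) j x + pd (fun x => U x j) i x) ?_ _
  exact ((pd_cont (hU.sm i) j).memLp_of_hasCompactSupport (pd_supp (hU.cs i) j)).add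
    ((pd_cont (hU.sm j) i).memLp_of_hasCompactSupport (pd_supp (hU.cs j) i))

theorem SG_meas {n : ℕ} {U : VField n} (hU : Smooth U) (i j : Fin n) :
    Measurable (fun x => SG U x i j) :=
  ((pd_cont (hU.sm i) j).measurable.add (pd_cont (hU.sm j) i).measurable).const_mul _

theorem int_sq_add {α : Type*} [MeasurableSpace α] {μ : Measure α} {f g : α → ℝ}
    (hf : MemLp f 2 μ) (hg : MemLp (fun x => g x - f x) 2 μ) :
    ∫ x, g x ^ 2 ∂μ ≤ 2 * ∫ x, (g x - f x) ^ 2 ∂μ + 2 * ∫ x, f x ^ 2 ∂μ := by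
  have hg' : MemLp g 2 μ := by
    have := hg.add hf
    have e : (fun x => g x - f x) + f = g := by funext x; simp
    rwa [e] at this
  rw [← integral_const_mul, ← integral_const_mul,
    ← integral_add (hg.integrable_sq.const_mul _) (hf.integrable_sq.const_mul _)]
  refine integral_mono hg'.integrable_sq
    ((hg.integrable_sq.const_mul _).add (hf.integrable_sq.const_mul _)) fun x => ?_
  change g x ^ 2 ≤ 2 * (g x - f x) ^ 2 + 2 * f x ^ 2
  nlinarith [sq_nonneg (g x - f x - f x)]

theorem gfun_sq_le {n : ℕ} {U : VField n} (hU : Smooth U) :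
    ∫ x, gfun U x ^ 2 ≤ 2 * n * (∑ i, ∫ x, U x i ^ 2) +
      4 * (n * n) * ∑ i, ∑ j, ∫ x, SG U x i j ^ 2 := by
  have hi1 : ∀ i, Integrable fun x => U x i ^ 2 := fun i =>
    ((hU.sm i).continuous.memLp_of_hasCompactSupport (p := 2) (hU.cs i)).integrable_sq
  have hi2 : ∀ i j, Integrable fun x => pd (fun x => U x i) j x ^ 2 := fun i j =>
    ((pd_cont (hU.sm i) j).memLp_of_hasCompactSupport (p := 2) (pd_supp (hU.cs i) j)).integrable_sq
  have hi1' : Integrable fun x => 2 * n * ∑ i, U x i ^ 2 :=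
    (integrable_finsetSum _ fun i _ => hi1 i).const_mul _
  have hi2' : Integrable fun x => 2 * (n * n) * ∑ i, ∑ j, pd (fun x => U x i) j x ^ 2 :=
    (integrable_finsetSum _ fun i _ => integrable_finsetSum _ fun j _ => hi2 i j).const_mul _
  have hg : Integrable fun x => gfun U x ^ 2 :=
    ((gfun_cont hU).memLp_of_hasCompactSupport (p := 2) (gfun_supp hU)).integrable_sq
  have hpt : ∀ x, gfun U x ^ 2 ≤ 2 * n * ∑ i, U x i ^ 2 +
      2 * (n * n) * ∑ i, ∑ j, pd (fun x => U x i) j x ^ 2 := by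
    intro x
    have a1 := sq_sum1 (U x)
    have a2 := sq_sum2 fun i j => pd (fun x => U x i) j x
    unfold gfun
    refine (add_sq_le (a := ∑ i, |U x i|)).trans ?_
    linarith
  have h := integral_mono hg (hi1'.add hi2') hpt
  have e : ∫ x, (2 * n * ∑ i, U x i ^ 2 +
      2 * (n * n) * ∑ i, ∑ j, pd (fun x => U x i) j x ^ 2) = 2 * n * (∑ i, ∫ x, U x i ^ 2) +
      2 * (n * n) * ∑ i, ∑ j, ∫ x, pd (fun x => U x i) j x ^ 2 := by
    have e1 : ∫ x, ∑ i, U x i ^ 2 = ∑ i, ∫ x, U x i ^ 2 := integral_finsetSum _ fun i _ => hi1 i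
    have e2 : ∫ x, ∑ i, ∑ j, pd (fun x => U x i) j x ^ 2 =
        ∑ i, ∑ j, ∫ x, pd (fun x => U x i) j x ^ 2 := by
      rw [integral_finsetSum Finset.univ fun i _ =>
        integrable_finsetSum Finset.univ fun j _ => hi2 i j]
      refine Finset.sum_congr rfl fun i _ => ?_
      rw [integral_finsetSum Finset.univ fun j _ => hi2 i j]
    rw [integral_add hi1' hi2', integral_const_mul, integral_const_mul, e1, e2]
  have h' := h.trans e.le
  have hk := mul_le_mul_of_nonneg_left (korn hU) (by positivity : (0 : ℝ) ≤ 2 * (n * n))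
  refine h'.trans (add_le_add le_rfl (hk.trans (le_of_eq ?_)))
  ring

theorem approx {n : ℕ} {Ω : Set (RV n)} (hΩb : Bornology.IsBounded Ω)
    (P : ℕ → AdmPair n Ω) (Q : AdmPair n Ω)
    (hstrong : Tendsto (fun k => ∫ x, ∑ i, ((P k).u x i - Q.u x i) ^ 2) atTop (𝓝 0))
    (hEw : WeakL2M (fun k => (P k).E) Q.E Ω) :
    ∃ U : ℕ → VField n, (∀ k, Smooth (U k)) ∧ (∃ G : ℝ, 0 ≤ G ∧ ∀ k, ∫ x, gfun (U k) x ^ 2 ≤ G) ∧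
      Tendsto (fun k => ∫ x, hfun (fun x i => U k x i - Q.u x i) x ^ 2) atTop (𝓝 0) ∧
      Tendsto (fun k => ∫ x in Ω, qfun (fun x i j => (P k).E x i j - SG (U k) x i j) x ^ 2)
        atTop (𝓝 0) := by
  have he : ∀ k : ℕ, (0 : ℝ) < 1 / ((k : ℝ) + 1) := fun k => by positivity
  choose U hU h1 h2 using fun k => adm_smooth hΩb (P k) (he k)
  have hUm : ∀ k i, MemLp (fun x => U k x i) 2 (volume : Measure (RV n)) := fun k i =>
    ((hU k).sm i).continuous.memLp_of_hasCompactSupport ((hU k).cs i)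
  have het : Tendsto (fun k : ℕ => 1 / ((k : ℝ) + 1)) atTop (𝓝 0) :=
    tendsto_one_div_add_atTop_nhds_zero_nat
  have hdif : ∀ k i, MemLp (fun x => (P k).u x i - Q.u x i) 2 (volume : Measure (RV n)) :=
    fun k i => (adm_u (P k) i).sub (adm_u Q i)
  have hdu : ∀ k i, ∫ x, (U k x i - Q.u x i) ^ 2 ≤ 2 * (1 / ((k : ℝ) + 1)) +
      2 * ∫ x, ∑ i, ((P k).u x i - Q.u x i) ^ 2 := by
    intro k i
    have a1 := int_sq_add (μ := volume) (g := fun x => U k x i - Q.u x i) (hdif k i)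
      (by
        simp only [sub_sub_sub_cancel_right]
        exact (hUm k i).sub (adm_u (P k) i))
    have a2 : ∫ x, ((P k).u x i - Q.u x i) ^ 2 ≤ ∫ x, ∑ i, ((P k).u x i - Q.u x i) ^ 2 :=
      integral_mono (hdif k i).integrable_sq
        (integrable_finsetSum _ fun i _ => (hdif k i).integrable_sq) fun x =>
        Finset.single_le_sum (f := fun i => ((P k).u x i - Q.u x i) ^ 2)
          (fun _ _ => sq_nonneg _) (Finset.mem_univ i)
    have a3 := h1 k i
    simp only [sub_sub_sub_cancel_right] at a1
    linarith
  obtain ⟨S, hS⟩ := bdd_of_tendsto hstrong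
  choose KE hKE0 hKE using comp_bdd (fun k => adm_EΩ (P k)) hEw
  have hle1 : ∀ k : ℕ, 1 / ((k : ℝ) + 1) ≤ 1 := fun k => by
    rw [div_le_one (by positivity)]
    have : (0 : ℝ) ≤ k := by positivity
    linarith
  refine ⟨U, hU, ⟨2 * n * (∑ i, (2 * (2 + 2 * |S|) + 2 * ∫ x, Q.u x i ^ 2)) +
    4 * (n * n) * (∑ i, ∑ j, (2 * 1 + 2 * |KE i j|)), ?_, fun k => ?_⟩, ?_, ?_⟩
  · have : ∀ i, 0 ≤ ∫ x, Q.u x i ^ 2 := fun i => integral_nonneg fun x => sq_nonneg _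
    positivity
  · refine (gfun_sq_le (hU k)).trans ?_
    refine add_le_add (mul_le_mul_of_nonneg_left (Finset.sum_le_sum fun i _ => ?_) (by positivity))
      (mul_le_mul_of_nonneg_left (Finset.sum_le_sum fun i _ => Finset.sum_le_sum fun j _ => ?_)
        (by positivity))
    · have a1 := int_sq_add (μ := volume) (g := fun x => U k x i) (adm_u Q i)
        ((hUm k i).sub (adm_u Q i))
      have a2 := hdu k i
      have a3 := (le_abs_self _).trans (hS k)
      have a4 := hle1 k
      have a5 := le_abs_self S
      linarith
    · have a1 := int_sq_add (μ := volume) (g := fun x => SG (U k) x i j) (adm_E (P k) i j)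
        ((SG_memLp (hU k) i j).sub (adm_E (P k) i j))
      have a2 := h2 k i j
      have a4 := hle1 k
      have a5 : ∫ x, (P k).E x i j ^ 2 = ∫ x in Ω, (P k).E x i j ^ 2 := by
        refine (setIntegral_eq_integral_of_ae_compl_eq_zero ?_).symm
        filter_upwards [(P k).hEz] with x hx hm
        simp [hx hm]
      have a6 := hKE i j k
      have a7 := le_abs_self (KE i j)
      linarith
  · have hlim : Tendsto (fun k : ℕ => (n : ℝ) * ∑ i : Fin n, (2 * (1 / ((k : ℝ) + 1)) +
      2 * ∫ x, ∑ i, ((P k).u x i - Q.u x i) ^ 2)) atTop (𝓝 0) := by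
      have := ((tendsto_finsetSum (Finset.univ : Finset (Fin n)) fun i _ =>
        (het.const_mul 2).add (hstrong.const_mul 2))).const_mul (n : ℝ)
      simpa using this
    refine squeeze_zero (fun k => integral_nonneg fun x => sq_nonneg _) (fun k => ?_) hlim
    have hw : ∀ i, MemLp (fun x => U k x i - Q.u x i) 2 (volume : Measure (RV n)) := fun i =>
      (hUm k i).sub (adm_u Q i)
    refine (hfun_sq_le hw).trans ?_
    rw [integral_finsetSum _ fun i _ => (hw i).integrable_sq]
    gcongr with i _
    exact hdu k i
  · have hlim : Tendsto (fun k : ℕ => (n * n : ℝ) * ∑ i : Fin n, ∑ j : Fin n, (1 / ((k : ℝ) + 1)))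
        atTop (𝓝 0) := by
      have := ((tendsto_finsetSum (Finset.univ : Finset (Fin n)) fun i _ =>
        tendsto_finsetSum (Finset.univ : Finset (Fin n)) fun j _ => het)).const_mul (n * n : ℝ)
      simpa using this
    refine squeeze_zero (fun k => integral_nonneg fun x => sq_nonneg _) (fun k => ?_) hlim
    have hw : ∀ i j, MemLp (fun x => (P k).E x i j - SG (U k) x i j) 2
      (volume : Measure (RV n)) := fun i j => (adm_E (P k) i j).sub (SG_memLp (hU k) i j)
    have hL : L2MOn (fun x i j => (P k).E x i j - SG (U k) x i j) Ω :=
      l2m_mk (fun i j => ((P k).hE.1 i j).sub (SG_meas (hU k) i j)) fun i j => (hw i j).restrict Ω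
    refine (qfun_sq_le hL).trans ?_
    gcongr with i _ j _
    refine le_trans ?_ (h2 k i j)
    refine (setIntegral_le_integral (hw i j).integrable_sq
      (ae_of_all _ fun x => sq_nonneg _)).trans (le_of_eq ?_)
    exact integral_congr_ae (ae_of_all _ fun x => by ring)

end
end S1

open MeasureTheory Filter Topology

namespace S1
noncomputable section

theorem qfun_ge {n : ℕ} (p : MField n) (x : RV n) (i j : Fin n) : |p x i j| ≤ qfun p x := by
  unfold qfun
  refine le_trans ?_ (Finset.single_le_sum (f := fun i => ∑ j, |p x i j|)
    (fun _ _ => by positivity) (Finset.mem_univ i))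
  exact Finset.single_le_sum (f := fun j => |p x i j|) (fun _ _ => abs_nonneg _) (Finset.mem_univ j)

theorem mdot_qq {n : ℕ} (p R : MField n) (x : RV n) :
    |mdot (p x) (R x)| ≤ qfun p x * qfun R x :=
  q_bound p x (R x) fun i j => qfun_ge R x i j

theorem SG_le {n : ℕ} {U : VField n} (x : RV n) (i j : Fin n) : |SG U x i j| ≤ gfun U x := by
  have h : ∀ i j, |pd (fun x => U x i) j x| ≤ gfun U x := fun i j =>
    (Finset.single_le_sum (f := fun j => |pd (fun x => U x i) j x|)
      (fun _ _ => abs_nonneg _) (Finset.mem_univ j)).trans (gfun_ge_row x i)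
  have h1 := abs_le.1 (h i j)
  have h2 := abs_le.1 (h j i)
  unfold SG
  rw [abs_le]
  constructor <;> linarith [h1.1, h1.2, h2.1, h2.2]

theorem single {n : ℕ} {Ω : Set (RV n)} (hΩm : MeasurableSet Ω) (hΩfin : volume Ω ≠ ⊤)
    {p E : MField n}
    (hpL : L2MOn p Ω) (hpS : SymOn p Ω) (hEL : L2MOn E Ω)
    (hker : ∀ W : AdmPair n Ω, ∫ x in Ω, mdot (p x) (W.E x) = 0)
    (φ : RV n → ℝ) (hφ : ContDiff ℝ (⊤ : ℕ∞) φ)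
    (hs : HasCompactSupport φ) (hΩ : tsupport φ ⊆ Ω) (hφ0 : ∀ x, 0 ≤ φ x) (hφ1 : ∀ x, φ x ≤ 1)
    {D : ℝ} (hD0 : 0 ≤ D) (hD : ∀ j x, |pd φ j x| ≤ D)
    {U : VField n} (hU : Smooth U) {l : ℝ} (hl : 0 < l)
    (hfin : volume (Bad (gfun U) l) ≠ ⊤) {c : ℝ} (hc : 0 ≤ c)
    (hbelow : ∀ᵐ x ∂(volume : Measure (RV n)), x ∈ Ω → -c ≤ mdot (p x) (E x))
    {K : ℝ} (hK : √(∫ x in Ω, qfun p x ^ 2) ≤ K)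
    {A : Set (RV n)} (hA : MeasurableSet A) (hAΩ : A ⊆ Ω) :
    ∫ x in A, φ x * (mdot (p x) (E x) + c) ≤
      K * ((2 ^ (n + 1) + D) * (l * √(volume.real (Bad (gfun U) l))) +
        D * √(∫ x in Bad (gfun U) l, hfun U x ^ 2)) +
      2 * (K * √(∫ x in Ω, qfun (fun x i j => E x i j - SG U x i j) x ^ 2)) +
      c * volume.real (Bad (gfun U) l) + c * volume.real A + l * (K * √(volume.real A)) := by
  have hK0 : 0 ≤ K := (Real.sqrt_nonneg _).trans hK
  obtain ⟨B, hB⟩ : ∃ B, B = Bad (gfun U) l := ⟨_, rfl⟩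
  have hkey := key hΩm hpL hpS hker φ hφ hs hΩ
    (fun x => abs_le.2 ⟨by linarith [hφ0 x], hφ1 x⟩) hD hU hl hfin
  have hBm : MeasurableSet B := by
    rw [hB]
    exact (isOpen_Bad gfun_nonneg
      ((gfun_cont hU).integrable_of_hasCompactSupport (gfun_supp hU)) l).measurableSet
  rw [← hB] at hkey hfin ⊢
  obtain ⟨R, hR⟩ : ∃ R : MField n, R = fun x i j => E x i j - SG U x i j := ⟨_, rfl⟩
  rw [← hR]
  have hSGL : L2MOn (SG U) Ω := l2m_mk (SG_meas hU) fun i j => (SG_memLp hU i j).restrict Ω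
  have hRL : L2MOn R Ω := by
    rw [hR]
    refine l2m_mk (fun i j => (hEL.1 i j).sub (SG_meas hU i j)) fun i j => ?_
    exact (l2m_memLp hEL i j).sub ((SG_memLp hU i j).restrict Ω)
  have hsplit : ∀ x, mdot (p x) (E x) = mdot (p x) (SG U x) + mdot (p x) (R x) := by
    intro x
    rw [hR]
    simp only [mdot, ← Finset.sum_add_distrib]
    refine Finset.sum_congr rfl fun i _ => Finset.sum_congr rfl fun j _ => by ring
  have hq := qfun_memLp hpL
  have hqR := qfun_memLp hRL
  have hw : IntegrableOn (fun x => qfun p x * qfun R x) Ω := hq.integrable_mul hqR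
  have hw0 : ∀ x, 0 ≤ qfun p x * qfun R x := fun x =>
    mul_nonneg (qfun_nonneg p x) (qfun_nonneg R x)
  have hwI : ∫ x in Ω, qfun p x * qfun R x ≤ K * √(∫ x in Ω, qfun R x ^ 2) := by
    have := cs hq hqR
    simp only [fun x => abs_of_nonneg (hw0 x)] at this
    exact this.trans (mul_le_mul_of_nonneg_right hK (Real.sqrt_nonneg _))
  have hφm : ∀ μ : Measure (RV n), AEStronglyMeasurable φ μ := fun μ =>
    hφ.continuous.aestronglyMeasurable
  have hφb : ∀ x, ‖φ x‖ ≤ 1 := fun x => by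
    rw [Real.norm_eq_abs, abs_of_nonneg (hφ0 x)]; exact hφ1 x
  have hcI : IntegrableOn (fun _ : RV n => c) Ω := integrableOn_const hΩfin
  have hφh : IntegrableOn (fun x => φ x * (mdot (p x) (E x) + c)) Ω := by
    refine Integrable.bdd_mul (c := 1) ?_ (hφm _) (ae_of_all _ hφb)
    exact (mdot_int hpL hEL).add hcI
  have hφSG : IntegrableOn (fun x => φ x * mdot (p x) (SG U x)) Ω :=
    Integrable.bdd_mul (c := 1) (mdot_int hpL hSGL) (hφm _) (ae_of_all _ hφb)
  have hΩB : Ω ∩ B ⊆ Ω := Set.inter_subset_left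
  have hAB : A \ B ⊆ Ω := Set.sdiff_subset.trans hAΩ
  have hsub : A ⊆ (Ω ∩ B) ∪ (A \ B) := fun x hx => by
    by_cases h : x ∈ B
    · exact Or.inl ⟨hAΩ hx, h⟩
    · exact Or.inr ⟨hx, h⟩
  have hUn : (Ω ∩ B) ∪ (A \ B) ⊆ Ω := Set.union_subset hΩB hAB
  have h1 : ∫ x in A, φ x * (mdot (p x) (E x) + c) ≤
      ∫ x in (Ω ∩ B) ∪ (A \ B), φ x * (mdot (p x) (E x) + c) := by
    refine setIntegral_mono_set (hφh.mono_set hUn) ?_ hsub.eventuallyLE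
    rw [EventuallyLE, ae_restrict_iff' ((hΩm.inter hBm).union (hA.diff hBm))]
    filter_upwards [hbelow] with x hx hxm
    exact mul_nonneg (hφ0 x) (by linarith [hx (hUn hxm)])
  rw [setIntegral_union (Set.disjoint_left.2 fun x hx hx' => hx'.2 hx.2) (hA.diff hBm)
    (hφh.mono_set hΩB) (hφh.mono_set hAB)] at h1
  have hwle : ∀ s, s ⊆ Ω → ∫ x in s, qfun p x * qfun R x ≤ K * √(∫ x in Ω, qfun R x ^ 2) :=
    fun s hs => (setIntegral_mono_set hw (ae_of_all _ hw0) hs.eventuallyLE).trans hwI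
  -- bad part
  have h2 : ∫ x in Ω ∩ B, φ x * (mdot (p x) (E x) + c) ≤
      (∫ x in Ω ∩ B, φ x * mdot (p x) (SG U x)) + (∫ x in Ω ∩ B, qfun p x * qfun R x) +
        c * volume.real B := by
    have i1 := hφSG.mono_set hΩB
    have i2 := hw.mono_set hΩB
    have i3 := hcI.mono_set hΩB
    have e1 : ∫ x in Ω ∩ B, (φ x * mdot (p x) (SG U x) + qfun p x * qfun R x + c) =
      (∫ x in Ω ∩ B, φ x * mdot (p x) (SG U x)) + (∫ x in Ω ∩ B, qfun p x * qfun R x) +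
        ∫ x in Ω ∩ B, c := by
      have i12 : IntegrableOn (fun x => φ x * mdot (p x) (SG U x) + qfun p x * qfun R x)
        (Ω ∩ B) := i1.add i2
      rw [integral_add i12 i3, integral_add i1 i2]
    have e2 : ∫ x in Ω ∩ B, c ≤ c * volume.real B := by
      rw [setIntegral_const, smul_eq_mul, mul_comm]
      exact mul_le_mul_of_nonneg_left (measureReal_mono Set.inter_subset_right hfin) hc
    have e3 : ∫ x in Ω ∩ B, φ x * (mdot (p x) (E x) + c) ≤
        ∫ x in Ω ∩ B, (φ x * mdot (p x) (SG U x) + qfun p x * qfun R x + c) := by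
      refine integral_mono (hφh.mono_set hΩB) ((i1.add i2).add i3) fun x => ?_
      change φ x * (mdot (p x) (E x) + c) ≤ φ x * mdot (p x) (SG U x) + qfun p x * qfun R x + c
      rw [hsplit]
      have a1 : φ x * mdot (p x) (R x) ≤ qfun p x * qfun R x := by
        refine (le_abs_self _).trans ?_
        rw [abs_mul, abs_of_nonneg (hφ0 x)]
        exact (mul_le_of_le_one_left (abs_nonneg _) (hφ1 x)).trans (mdot_qq p R x)
      have a2 : φ x * c ≤ c := mul_le_of_le_one_left hc (hφ1 x)
      linarith
    linarith
  have hAfin : volume A ≠ ⊤ := ne_top_of_le_ne_top hΩfin (measure_mono hAΩ)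
  have hABr : volume.real (A \ B) ≤ volume.real A := measureReal_mono Set.sdiff_subset hAfin
  -- good part
  have h3 : ∫ x in A \ B, φ x * (mdot (p x) (E x) + c) ≤
      l * (K * √(volume.real A)) + (∫ x in A \ B, qfun p x * qfun R x) + c * volume.real A := by
    have hqAB : MemLp (qfun p) 2 (volume.restrict (A \ B)) :=
      hq.mono_measure (Measure.restrict_mono hAB le_rfl)
    have hABfin : volume (A \ B) ≠ ⊤ := ne_top_of_le_ne_top hAfin (measure_mono Set.sdiff_subset)
    haveI : IsFiniteMeasure (volume.restrict (A \ B)) := ⟨by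
      rw [Measure.restrict_apply_univ]; exact hABfin.lt_top⟩
    have i1 : IntegrableOn (fun x => l * qfun p x) (A \ B) :=
      (hqAB.integrable (by norm_num)).const_mul l
    have i2 := hw.mono_set hAB
    have i3 := hcI.mono_set hAB
    have e1 : ∫ x in A \ B, (l * qfun p x + qfun p x * qfun R x + c) =
      l * (∫ x in A \ B, qfun p x) + (∫ x in A \ B, qfun p x * qfun R x) +
        ∫ x in A \ B, c := by
      have i12 : IntegrableOn (fun x => l * qfun p x + qfun p x * qfun R x)
        (A \ B) := i1.add i2
      rw [integral_add i12 i3, integral_add i1 i2, integral_const_mul]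
    have e2 : ∫ x in A \ B, c ≤ c * volume.real A := by
      rw [setIntegral_const, smul_eq_mul, mul_comm]
      exact mul_le_mul_of_nonneg_left hABr hc
    have e4 : ∫ x in A \ B, qfun p x ≤ K * √(volume.real A) := by
      have := cs hqAB (memLp_const (1 : ℝ))
      simp only [mul_one, fun x => abs_of_nonneg (qfun_nonneg p x), one_pow, setIntegral_const,
        smul_eq_mul] at this
      refine this.trans (mul_le_mul (le_trans (Real.sqrt_le_sqrt ?_) hK)
        (Real.sqrt_le_sqrt hABr) (Real.sqrt_nonneg _) hK0)
      exact setIntegral_mono_set hq.integrable_sq (ae_of_all _ fun x => sq_nonneg _)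
        hAB.eventuallyLE
    have e3 : ∫ x in A \ B, φ x * (mdot (p x) (E x) + c) ≤
        ∫ x in A \ B, (l * qfun p x + qfun p x * qfun R x + c) := by
      refine setIntegral_mono_on (hφh.mono_set hAB) ((i1.add i2).add i3) (hA.diff hBm)
        fun x hx => ?_
      change φ x * (mdot (p x) (E x) + c) ≤ l * qfun p x + qfun p x * qfun R x + c
      rw [hsplit]
      have a0 : gfun U x ≤ l := le_good (gfun_cont hU) (by rw [← hB]; exact hx.2)
      have a1 : φ x * (mdot (p x) (SG U x) + mdot (p x) (R x)) ≤
          l * qfun p x + qfun p x * qfun R x := by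
        refine (le_abs_self _).trans ?_
        rw [abs_mul, abs_of_nonneg (hφ0 x)]
        refine (mul_le_of_le_one_left (abs_nonneg _) (hφ1 x)).trans ?_
        refine (abs_add_le _ _).trans (add_le_add ?_ (mdot_qq p R x))
        rw [mul_comm]
        exact q_bound p x (SG U x) fun i j => (SG_le x i j).trans a0
      have a2 : φ x * c ≤ c := mul_le_of_le_one_left hc (hφ1 x)
      linarith
    have e5 := mul_le_mul_of_nonneg_left e4 hl.le
    linarith
  have h4 := hwle _ hΩB
  have h5 := hwle _ hAB
  have h6 := (le_abs_self _).trans hkey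
  have h7 := h6.trans (mul_le_mul_of_nonneg_right hK (by positivity))
  linarith

end
end S1

open MeasureTheory Filter Topology

namespace S1
noncomputable section

theorem small {f : ℝ → ℝ} (hf : Continuous f) (h0 : f 0 = 0) {ε : ℝ} (hε : 0 < ε) :
    ∃ t > 0, ∀ s, 0 ≤ s → s ≤ t → f s ≤ ε := by
  have h := hf.continuousAt.eventually_lt_const (by rw [h0]; exact hε : f 0 < ε)
  obtain ⟨e, he, h2⟩ := Metric.eventually_nhds_iff.1 h
  refine ⟨e / 2, by positivity, fun s hs0 hs => (h2 ?_).le⟩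
  rw [dist_zero_right, Real.norm_eq_abs, abs_of_nonneg hs0]
  linarith

theorem hfun_tri {n : ℕ} {U u : VField n} (μ : Measure (RV n))
    (hU : ∀ i, MemLp (fun x => U x i) 2 μ) (hu : ∀ i, MemLp (fun x => u x i) 2 μ) :
    ∫ x, hfun U x ^ 2 ∂μ ≤ 2 * (∫ x, hfun (fun x i => U x i - u x i) x ^ 2 ∂μ) +
      2 * ∫ x, hfun u x ^ 2 ∂μ := by
  have hd : ∀ i, MemLp (fun x => U x i - u x i) 2 μ := fun i => (hU i).sub (hu i)
  have i1 := (hfun_memLp hU).integrable_sq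
  have i2 := (hfun_memLp hu).integrable_sq
  have i3 : Integrable (fun x => hfun (fun x i => U x i - u x i) x ^ 2) μ :=
    (hfun_memLp (u := fun x i => U x i - u x i) hd).integrable_sq
  rw [← integral_const_mul, ← integral_const_mul, ← integral_add (i3.const_mul 2) (i2.const_mul 2)]
  refine integral_mono i1 ((i3.const_mul 2).add (i2.const_mul 2)) fun x => ?_
  change hfun U x ^ 2 ≤ 2 * hfun (fun x i => U x i - u x i) x ^ 2 + 2 * hfun u x ^ 2
  have h : hfun U x ≤ hfun (fun x i => U x i - u x i) x + hfun u x := by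
    unfold hfun
    rw [← Finset.sum_add_distrib]
    refine Finset.sum_le_sum fun i _ => ?_
    have := abs_add_le (U x i - u x i) (u x i)
    simpa using this
  have h0 : 0 ≤ hfun U x := by unfold hfun; positivity
  nlinarith [sq_nonneg (hfun (fun x i => U x i - u x i) x - hfun u x), pow_le_pow_left₀ h0 h 2]

theorem pd_bound {n : ℕ} {φ : RV n → ℝ} (hφ : ContDiff ℝ (⊤ : ℕ∞) φ)
    (hs : HasCompactSupport φ) : ∃ D : ℝ, 0 ≤ D ∧ ∀ j x, |pd φ j x| ≤ D := by
  have hDj : ∀ j, ∃ D, ∀ x, ‖pd φ j x‖ ≤ D := fun j =>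
    (pd_supp hs j).exists_bound_of_continuous (pd_cont hφ j)
  choose Dj hDj using hDj
  refine ⟨∑ j, |Dj j|, by positivity, fun j x => (hDj j x).trans ((le_abs_self _).trans ?_)⟩
  exact Finset.single_le_sum (f := fun j => |Dj j|) (fun _ _ => abs_nonneg _) (Finset.mem_univ j)

theorem unif {n : ℕ} (hn : n ≠ 0) {Ω : Set (RV n)} (hΩm : MeasurableSet Ω)
    (hΩb : Bornology.IsBounded Ω)
    (P : ℕ → AdmPair n Ω) (Q : AdmPair n Ω)
    (pk : ℕ → MField n) (p : MField n)
    (hpkL2 : ∀ k, L2MOn (pk k) Ω) (hpkS : ∀ k, SymOn (pk k) Ω)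
    (hstrong : Tendsto (fun k => ∫ x, ∑ i, ((P k).u x i - Q.u x i) ^ 2) atTop (𝓝 0))
    (hEw : WeakL2M (fun k => (P k).E) Q.E Ω)
    (hker : ∀ k, ∀ W : AdmPair n Ω, ∫ x in Ω, mdot (pk k x) (W.E x) = 0)
    (hpw : WeakL2M pk p Ω)
    (c : ℝ) (hc : 0 ≤ c)
    (hbelow : ∀ k, ∀ᵐ x ∂(volume : Measure (RV n)),
      x ∈ Ω → -c ≤ mdot (pk k x) ((P k).E x))
    (φ : RV n → ℝ) (hφ : ContDiff ℝ (⊤ : ℕ∞) φ)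
    (hs : HasCompactSupport φ) (hΩ : tsupport φ ⊆ Ω) (hφ0 : ∀ x, 0 ≤ φ x) (hφ1 : ∀ x, φ x ≤ 1)
    {ε : ℝ} (hε : 0 < ε) :
    ∃ δ > 0, ∀ᶠ k in atTop, ∀ A : Set (RV n), MeasurableSet A → A ⊆ Ω → volume.real A ≤ δ →
      ∫ x in A, φ x * (mdot (pk k x) ((P k).E x) + c) ≤ ε := by
  have hΩfin : volume Ω ≠ ⊤ := hΩb.measure_lt_top.ne
  obtain ⟨K, hK0, hK⟩ := q_bdd hpkL2 hpw
  obtain ⟨U, hU, ⟨G, hG0, hG⟩, hUu, hUE⟩ := approx hΩb P Q hstrong hEw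
  obtain ⟨D, hD0, hD⟩ := pd_bound hφ hs
  obtain ⟨t1, ht1, h1⟩ := small (f := fun t => K * ((2 ^ (n + 1) + D) * √t) + c * t)
    (by fun_prop) (by simp) (by positivity : 0 < ε / 4)
  obtain ⟨t2, ht2, h2⟩ := small (f := fun t => K * (D * √t))
    (by fun_prop) (by simp) (by positivity : 0 < ε / 4)
  obtain ⟨t3, ht3, h3⟩ := small (f := fun t => 2 * (K * √t))
    (by fun_prop) (by simp) (by positivity : 0 < ε / 4)
  have hhu : MemLp (hfun Q.u) 2 (volume : Measure (RV n)) := hfun_memLp fun i => adm_u Q i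
  obtain ⟨d2, hd2, hac⟩ := abs_cont hhu.integrable_sq (by positivity : 0 < t2 / 4)
  obtain ⟨τ, hτ⟩ : ∃ τ, τ = min t1 d2 := ⟨_, rfl⟩
  have hτ0 : 0 < τ := by rw [hτ]; exact lt_min ht1 hd2
  obtain ⟨J, hJ⟩ := exists_nat_gt (4 * 5 ^ n * G / τ)
  have hJ0' : (0 : ℝ) < J := lt_of_le_of_lt (by positivity) hJ
  have hJ0 : 0 < J := by exact_mod_cast hJ0'
  have hJτ : 4 * 5 ^ n / J * G ≤ τ := by
    rw [div_lt_iff₀ hτ0] at hJ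
    rw [div_mul_eq_mul_div, div_le_iff₀ hJ0']
    linarith
  obtain ⟨δ, hδ, h4⟩ := small (f := fun t => c * t + 2 ^ J * (K * √t))
    (by fun_prop) (by simp) (by positivity : 0 < ε / 4)
  refine ⟨δ, hδ, ?_⟩
  filter_upwards [hUu.eventually_le_const (by positivity : 0 < t2 / 4),
    hUE.eventually_le_const ht3] with k hk1 hk2 A hA hAΩ hAδ
  obtain ⟨j, hjJ, hfin, hj⟩ := good_level hn (gfun_nonneg (U := U k)) (gfun_cont (hU k))
    (gfun_supp (hU k)) 0 J hJ0
  rw [zero_add] at hfin hj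
  obtain ⟨l, hl⟩ : ∃ l : ℝ, l = 2 ^ j := ⟨_, rfl⟩
  rw [← hl] at hfin hj
  have hl1 : 1 ≤ l := by rw [hl]; exact one_le_pow₀ (by norm_num)
  have hlJ : l ≤ 2 ^ J := by rw [hl]; exact pow_le_pow_right₀ (by norm_num) hjJ.le
  have hl0 : 0 < l := by linarith
  have hs1 := single hΩm hΩfin (hpkL2 k) (hpkS k) (adm_EΩ (P k)) (hker k) φ hφ hs hΩ hφ0 hφ1 hD0 hD
    (hU k) hl0 hfin hc (hbelow k) (hK k) hA hAΩ
  obtain ⟨b, hb⟩ : ∃ b, b = volume.real (Bad (gfun (U k)) l) := ⟨_, rfl⟩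
  have hb0 : 0 ≤ b := by rw [hb]; exact measureReal_nonneg
  have hlb : l ^ 2 * b ≤ τ := by
    rw [hb]
    exact hj.trans ((mul_le_mul_of_nonneg_left (hG k) (by positivity)).trans hJτ)
  have hbl : b ≤ l ^ 2 * b := le_mul_of_one_le_left hb0 (one_le_pow₀ hl1)
  have hlsq : l * √b = √(l ^ 2 * b) := by
    rw [Real.sqrt_mul (sq_nonneg l), Real.sqrt_sq hl0.le]
  have hBd : volume (Bad (gfun (U k)) l) ≤ ENNReal.ofReal d2 := by
    rw [← ENNReal.ofReal_toReal hfin]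
    refine ENNReal.ofReal_le_ofReal ?_
    change volume.real (Bad (gfun (U k)) l) ≤ d2
    rw [← hb]
    exact hbl.trans (hlb.trans (by rw [hτ]; exact min_le_right _ _))
  have hB2 : ∫ x in Bad (gfun (U k)) l, hfun (U k) x ^ 2 ≤ t2 := by
    have hUm : ∀ i, MemLp (fun x => U k x i) 2 (volume : Measure (RV n)) := fun i =>
      ((hU k).sm i).continuous.memLp_of_hasCompactSupport ((hU k).cs i)
    have hw : ∀ i, MemLp (fun x => U k x i - Q.u x i) 2 (volume : Measure (RV n)) := fun i =>
      (hUm i).sub (adm_u Q i)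
    have hw2 : MemLp (hfun (fun x i => U k x i - Q.u x i)) 2 (volume : Measure (RV n)) :=
      hfun_memLp (u := fun x i => U k x i - Q.u x i) hw
    have a1 := hfun_tri (U := U k) (u := Q.u) (volume.restrict (Bad (gfun (U k)) l))
      (fun i => (hUm i).restrict _) (fun i => (adm_u Q i).restrict _)
    have a2 : ∫ x in Bad (gfun (U k)) l, hfun (fun x i => U k x i - Q.u x i) x ^ 2 ≤ t2 / 4 :=
      (setIntegral_le_integral hw2.integrable_sq (ae_of_all _ fun x => sq_nonneg _)).trans hk1
    have a3 := (le_abs_self _).trans (hac _ hBd)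
    linarith
  rw [← hb, hlsq] at hs1
  have e1 : K * ((2 ^ (n + 1) + D) * √(l ^ 2 * b)) + c * (l ^ 2 * b) ≤ ε / 4 :=
    h1 (l ^ 2 * b) (by positivity) (hlb.trans (by rw [hτ]; exact min_le_left _ _))
  have e2 := h2 _ (integral_nonneg fun x => sq_nonneg _) hB2
  have e3 := h3 _ (integral_nonneg fun x => sq_nonneg _) hk2
  have e4 := h4 _ measureReal_nonneg hAδ
  have e5 : c * b ≤ c * (l ^ 2 * b) := mul_le_mul_of_nonneg_left hbl hc
  have e6 : l * (K * √(volume.real A)) ≤ 2 ^ J * (K * √(volume.real A)) :=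
    mul_le_mul_of_nonneg_right hlJ (by positivity)
  simp only at e2 e3 e4
  rw [mul_add] at hs1
  linarith

end
end S1

open MeasureTheory Filter Topology

namespace S1
noncomputable section

theorem bump {n : ℕ} {K W : Set (RV n)} (hK : IsCompact K) (hW : IsOpen W) (hKW : K ⊆ W) :
    ∃ φ : RV n → ℝ, ContDiff ℝ (⊤ : ℕ∞) φ ∧ HasCompactSupport φ ∧ tsupport φ ⊆ W ∧
      (∀ x, 0 ≤ φ x) ∧ (∀ x, φ x ≤ 1) ∧ ∀ x ∈ K, φ x = 1 := by
  obtain ⟨L, hL, hKL, hLW⟩ := exists_compact_between hK hW hKW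
  obtain ⟨f, h1, h2, h3⟩ := exists_contMDiffMap_one_nhds_of_subset_interior
    (modelWithCornersSelf ℝ (RV n)) (n := (⊤ : ℕ∞)) hK.isClosed hKL
  have hts : tsupport (fun x => f x) ⊆ L :=
    closure_minimal (fun x hx => by
      by_contra hxL
      exact hx (h2 x hxL)) hL.isClosed
  refine ⟨fun x => f x, f.contMDiff.contDiff, ?_, hts.trans hLW, fun x => (h3 x).1,
    fun x => (h3 x).2, fun x hx => h1.self_of_nhdsSet x hx⟩
  exact hL.of_isClosed_subset (isClosed_tsupport _) hts

theorem ui_full {n : ℕ} {Ω : Set (RV n)} (hΩo : IsOpen Ω) (hΩb : Bornology.IsBounded Ω)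
    {h : ℕ → RV n → ℝ} {h0 : RV n → ℝ}
    (hi : ∀ k, IntegrableOn (h k) Ω) (hi0 : IntegrableOn h0 Ω)
    (hnn : ∀ k, ∀ᵐ x ∂(volume : Measure (RV n)), x ∈ Ω → 0 ≤ h k x)
    (hD : ∀ ψ : RV n → ℝ, ContDiff ℝ (⊤ : ℕ∞) ψ → HasCompactSupport ψ →
      Tendsto (fun k => ∫ x in Ω, ψ x * h k x) atTop (𝓝 (∫ x in Ω, ψ x * h0 x)))
    (hUI : ∀ φ : RV n → ℝ, ContDiff ℝ (⊤ : ℕ∞) φ → HasCompactSupport φ → tsupport φ ⊆ Ω →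
      (∀ x, 0 ≤ φ x) → (∀ x, φ x ≤ 1) → ∀ ε : ℝ, 0 < ε → ∃ δ > 0, ∀ᶠ k in atTop,
      ∀ A : Set (RV n), MeasurableSet A → A ⊆ Ω → volume.real A ≤ δ →
      ∫ x in A, φ x * h k x ≤ ε) {χ : RV n → ℝ} (hχ : ContDiff ℝ (⊤ : ℕ∞) χ)
    (hχs : HasCompactSupport χ) (hχ1 : ∀ x ∈ Ω, χ x = 1)
    {ε : ℝ} (hε : 0 < ε) : ∃ δ > 0, ∀ᶠ k in atTop,
      ∀ A : Set (RV n), MeasurableSet A → A ⊆ Ω → volume.real A ≤ δ → ∫ x in A, h k x ≤ ε := by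
  have hΩm := hΩo.measurableSet
  have hΩfin : volume Ω ≠ ⊤ := hΩb.measure_lt_top.ne
  obtain ⟨d, hd, hac⟩ := abs_cont hi0.abs (by positivity : 0 < ε / 3)
  obtain ⟨K, hKΩ, hK, hKm⟩ := hΩm.exists_isCompact_sdiff_lt hΩfin
    (ε := ENNReal.ofReal d) (by simpa using hd)
  obtain ⟨φ, hφ, hφs, hφΩ, hφ0, hφ1, hφK⟩ := bump hK hΩo hKΩ
  obtain ⟨δ, hδ, hev⟩ := hUI φ hφ hφs hφΩ hφ0 hφ1 (ε / 3) (by positivity)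
  have hφb : ∀ x, ‖φ x‖ ≤ 1 := fun x => by
    rw [Real.norm_eq_abs, abs_of_nonneg (hφ0 x)]; exact hφ1 x
  have hφm : ∀ μ : Measure (RV n), AEStronglyMeasurable φ μ := fun μ =>
    hφ.continuous.aestronglyMeasurable
  have hlim := hD (fun x => χ x - φ x) (hχ.sub hφ) (hχs.sub hφs)
  have hφh : ∀ f : RV n → ℝ, IntegrableOn f Ω → IntegrableOn (fun x => φ x * f x) Ω := fun f hf =>
    Integrable.bdd_mul (c := 1) hf (hφm _) (ae_of_all _ hφb)
  have hrf : ∀ f : RV n → ℝ, IntegrableOn f Ω → IntegrableOn (fun x => f x - φ x * f x) Ω :=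
    fun f hf => hf.sub (hφh f hf)
  have heq : ∀ f : RV n → ℝ, ∫ x in Ω, (χ x - φ x) * f x = ∫ x in Ω, (f x - φ x * f x) :=
    fun f => setIntegral_congr_fun hΩm fun x hx => by
      change (χ x - φ x) * f x = f x - φ x * f x
      rw [hχ1 x hx]; ring
  simp only [heq] at hlim
  have hle : ∫ x in Ω, (h0 x - φ x * h0 x) ≤ ε / 3 := by
    have a0 : volume.restrict Ω (Kᶜ) ≤ ENNReal.ofReal d := by
      rw [Measure.restrict_apply hK.measurableSet.compl]
      refine le_trans (measure_mono ?_) hKm.le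
      exact fun x hx => ⟨hx.2, hx.1⟩
    have a1 := (le_abs_self _).trans (hac _ a0)
    refine le_trans ?_ a1
    rw [← integral_indicator hK.measurableSet.compl]
    refine integral_mono (hrf h0 hi0) (hi0.abs.indicator hK.measurableSet.compl) fun x => ?_
    by_cases hx : x ∈ K
    · simp [hx, hφK x hx]
    · rw [Set.indicator_of_mem (show x ∈ Kᶜ from hx)]
      have e : h0 x - φ x * h0 x = (1 - φ x) * h0 x := by ring
      change h0 x - φ x * h0 x ≤ |h0 x|
      rw [e]
      refine (le_abs_self _).trans ?_
      rw [abs_mul, abs_of_nonneg (by linarith [hφ1 x] : 0 ≤ 1 - φ x)]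
      exact mul_le_of_le_one_left (abs_nonneg _) (by linarith [hφ0 x])
  refine ⟨δ, hδ, ?_⟩
  filter_upwards [hev, hlim.eventually_le_const (by linarith : _ < 2 * ε / 3)] with k hk1 hk2
    A hA hAΩ hAδ
  have b1 := hk1 A hA hAΩ hAδ
  have b2 : ∫ x in A, (h k x - φ x * h k x) ≤ ∫ x in Ω, (h k x - φ x * h k x) := by
    refine setIntegral_mono_set (hrf _ (hi k)) ?_ hAΩ.eventuallyLE
    rw [EventuallyLE, ae_restrict_iff' hΩm]
    filter_upwards [hnn k] with x hx hxm
    have e : h k x - φ x * h k x = (1 - φ x) * h k x := by ring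
    change 0 ≤ h k x - φ x * h k x
    rw [e]
    exact mul_nonneg (by linarith [hφ1 x]) (hx hxm)
  rw [integral_sub ((hi k).mono_set hAΩ) ((hφh _ (hi k)).mono_set hAΩ)] at b2
  linarith

theorem approx_g {n : ℕ} {Ω : Set (RV n)} (hΩm : MeasurableSet Ω) (hΩb : Bornology.IsBounded Ω)
    {g : RV n → ℝ} (hg : Measurable g) {M : ℝ} (hM : 0 ≤ M)
    (hgM : ∀ᵐ x ∂(volume : Measure (RV n)), x ∈ Ω → |g x| ≤ M) {ε δ : ℝ} (hε : 0 < ε) (hε1 : ε ≤ 1)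
    (hδ : 0 < δ) :
    ∃ ψ : RV n → ℝ, ContDiff ℝ (⊤ : ℕ∞) ψ ∧ HasCompactSupport ψ ∧ ∃ A, MeasurableSet A ∧ A ⊆ Ω ∧
      volume.real A ≤ δ ∧ (∀ᵐ x ∂(volume : Measure (RV n)), x ∈ Ω → |g x - ψ x| ≤ 2 * M + 2) ∧
      (∀ᵐ x ∂(volume : Measure (RV n)), x ∈ Ω → x ∉ A → |g x - ψ x| ≤ ε) := by
  have hΩfin : volume Ω ≠ ⊤ := hΩb.measure_lt_top.ne
  have hgi : Integrable (Ω.indicator g) := by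
    rw [integrable_indicator_iff hΩm]
    have : IsFiniteMeasure (volume.restrict Ω) := ⟨by
      rw [Measure.restrict_apply_univ]; exact hΩfin.lt_top⟩
    refine Integrable.of_bound hg.aestronglyMeasurable M ?_
    rw [ae_restrict_iff' hΩm]
    exact hgM
  obtain ⟨f, hfs, hf, hfe⟩ := (memLp_one_iff_integrable.2 hgi).exist_eLpNorm_sub_le
    (by norm_num) le_rfl (by positivity : 0 < ε * δ)
  have hfi : Integrable f := hf.continuous.integrable_of_hasCompactSupport hfs
  have hdi : Integrable (fun x => |Ω.indicator g x - f x|) := (hgi.sub hfi).abs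
  have hIntg : ∫ x, |Ω.indicator g x - f x| ≤ ε * δ := by
    rw [eLpNorm_one_eq_lintegral_enorm, ← ofReal_integral_norm_eq_lintegral_enorm (hgi.sub hfi)]
      at hfe
    exact (ENNReal.ofReal_le_ofReal_iff (by positivity)).1 hfe
  have hch := mul_meas_ge_le_integral_of_nonneg (ae_of_all _ fun x => abs_nonneg _) hdi ε
  obtain ⟨b⟩ : Nonempty {b : ContDiffBump (0 : ℝ) // b.rIn = M + 1 ∧ b.rOut = M + 2} :=
    ⟨⟨⟨M + 1, M + 2, by linarith, by linarith⟩, rfl, rfl⟩⟩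
  obtain ⟨b, hb1, hb2⟩ := b
  have hθb : ∀ t : ℝ, |t * b t| ≤ M + 2 := by
    intro t
    rw [abs_mul, abs_of_nonneg b.nonneg]
    by_cases ht : |t| < M + 2
    · exact (mul_le_of_le_one_right (abs_nonneg _) b.le_one).trans ht.le
    · rw [b.zero_of_le_dist (by rw [dist_zero_right, hb2, Real.norm_eq_abs]; linarith)]
      simp; linarith
  refine ⟨fun x => f x * b (f x), ?_, ?_, Ω ∩ {x | ε ≤ |Ω.indicator g x - f x|}, ?_,
    Set.inter_subset_left, ?_, ?_, ?_⟩
  · exact ContDiff.mul hf (b.contDiff.comp hf)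
  · exact hfs.mul_right
  · refine hΩm.inter (measurableSet_le measurable_const ?_)
    exact ((hg.indicator hΩm).sub hf.continuous.measurable).abs
  · have h1 : volume {x | ε ≤ |Ω.indicator g x - f x|} ≠ ⊤ :=
      (hdi.measure_ge_lt_top hε).ne
    have h2 := measureReal_mono (μ := volume)
      (Set.inter_subset_right (s := Ω) (t := {x | ε ≤ |Ω.indicator g x - f x|})) h1
    refine h2.trans ?_
    have := hch.trans hIntg
    exact le_of_mul_le_mul_left this hε
  · filter_upwards [hgM] with x hx hxm
    have := abs_sub (g x) (f x * b (f x))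
    linarith [hx hxm, hθb (f x)]
  · filter_upwards [hgM] with x hx hxm hxA
    have h1 : |g x - f x| < ε := by
      by_contra hh
      refine hxA ⟨hxm, ?_⟩
      simp only [Set.mem_ofPred_eq, Set.indicator_of_mem hxm]
      linarith
    have h2 : |f x| ≤ M + 1 := by
      have h3 := abs_sub_abs_le_abs_sub (f x) (g x)
      rw [abs_sub_comm] at h3
      linarith [hx hxm]
    have h4 : b (f x) = 1 := b.one_of_mem_closedBall (by
      rw [Metric.mem_closedBall, dist_zero_right, hb1]; exact h2)
    rw [h4, mul_one]
    exact h1.le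

end
end S1

open MeasureTheory Filter Topology

namespace S1
noncomputable section

theorem err {n : ℕ} {Ω : Set (RV n)} (hΩm : MeasurableSet Ω)
    {f g ψ : RV n → ℝ} (hf : IntegrableOn f Ω) (hg : Measurable g) (hψ : Continuous ψ)
    {A : Set (RV n)} (hA : MeasurableSet A) (hAΩ : A ⊆ Ω) {C ε : ℝ} (hε : 0 ≤ ε)
    (h1 : ∀ᵐ x ∂(volume : Measure (RV n)), x ∈ Ω → |g x - ψ x| ≤ C)
    (h2 : ∀ᵐ x ∂(volume : Measure (RV n)), x ∈ Ω → x ∉ A → |g x - ψ x| ≤ ε) :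
    |∫ x in Ω, f x * (g x - ψ x)| ≤ ε * (∫ x in Ω, |f x|) + C * ∫ x in A, |f x| := by
  have hfa : IntegrableOn (fun x => |f x|) Ω := hf.abs
  have hI : IntegrableOn (fun x => C * A.indicator (fun x => |f x|) x) Ω :=
    (hfa.indicator hA).const_mul C
  have e : ∫ x in A, |f x| = ∫ x in Ω, A.indicator (fun x => |f x|) x := by
    rw [setIntegral_indicator hA, Set.inter_eq_right.2 hAΩ]
  rw [e, ← integral_const_mul, ← integral_const_mul, ← integral_add (hfa.const_mul ε) hI]
  refine (abs_integral_le_integral_abs).trans ?_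
  refine integral_mono_of_nonneg (ae_of_all _ fun x => abs_nonneg _) ((hfa.const_mul ε).add hI) ?_
  rw [EventuallyLE, ae_restrict_iff' hΩm]
  filter_upwards [h1, h2] with x a1 a2 hx
  change |f x * (g x - ψ x)| ≤ ε * |f x| + C * A.indicator (fun x => |f x|) x
  rw [abs_mul]
  by_cases hxA : x ∈ A
  · rw [Set.indicator_of_mem hxA]
    have := mul_le_mul_of_nonneg_left (a1 hx) (abs_nonneg (f x))
    have := mul_nonneg hε (abs_nonneg (f x))
    linarith
  · rw [Set.indicator_of_notMem hxA]
    have := mul_le_mul_of_nonneg_left (a2 hx hxA) (abs_nonneg (f x))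
    linarith

theorem final {n : ℕ} {Ω : Set (RV n)} (hΩo : IsOpen Ω) (hΩb : Bornology.IsBounded Ω)
    {h : ℕ → RV n → ℝ} {h0 : RV n → ℝ}
    (hi : ∀ k, IntegrableOn (h k) Ω) (hi0 : IntegrableOn h0 Ω)
    (hnn : ∀ k, ∀ᵐ x ∂(volume : Measure (RV n)), x ∈ Ω → 0 ≤ h k x)
    (hD : ∀ ψ : RV n → ℝ, ContDiff ℝ (⊤ : ℕ∞) ψ → HasCompactSupport ψ →
      Tendsto (fun k => ∫ x in Ω, ψ x * h k x) atTop (𝓝 (∫ x in Ω, ψ x * h0 x)))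
    (hUI : ∀ φ : RV n → ℝ, ContDiff ℝ (⊤ : ℕ∞) φ → HasCompactSupport φ → tsupport φ ⊆ Ω →
      (∀ x, 0 ≤ φ x) → (∀ x, φ x ≤ 1) → ∀ ε : ℝ, 0 < ε → ∃ δ > 0, ∀ᶠ k in atTop,
      ∀ A : Set (RV n), MeasurableSet A → A ⊆ Ω → volume.real A ≤ δ →
      ∫ x in A, φ x * h k x ≤ ε)
    {g : RV n → ℝ} (hg : Measurable g) {M : ℝ} (hM : 0 ≤ M)
    (hgM : ∀ᵐ x ∂(volume : Measure (RV n)), x ∈ Ω → |g x| ≤ M) :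
    Tendsto (fun k => ∫ x in Ω, h k x * g x) atTop (𝓝 (∫ x in Ω, h0 x * g x)) := by
  have hΩm := hΩo.measurableSet
  have hΩfin : volume Ω ≠ ⊤ := hΩb.measure_lt_top.ne
  obtain ⟨χ, hχ, hχs, -, -, -, hχ1⟩ := bump (K := closure Ω) (W := Set.univ)
    (Metric.isCompact_of_isClosed_isBounded isClosed_closure hΩb.closure) isOpen_univ
    (Set.subset_univ _)
  have hχ1' : ∀ x ∈ Ω, χ x = 1 := fun x hx => hχ1 x (subset_closure hx)
  have habs : ∀ k, ∀ s ⊆ Ω, MeasurableSet s → ∫ x in s, |h k x| = ∫ x in s, h k x := by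
    intro k s hs hsm
    refine setIntegral_congr_ae hsm ?_
    filter_upwards [hnn k] with x hx hxs
    exact abs_of_nonneg (hx (hs hxs))
  obtain ⟨H, hH⟩ : ∃ H, ∀ k, ∫ x in Ω, |h k x| ≤ H := by
    obtain ⟨H, hH⟩ := bdd_of_tendsto (hD χ hχ hχs)
    refine ⟨H, fun k => le_trans (le_of_eq ?_) ((le_abs_self _).trans (hH k))⟩
    rw [habs k Ω subset_rfl hΩm]
    refine setIntegral_congr_fun hΩm fun x hx => ?_
    change h k x = χ x * h k x
    rw [hχ1' x hx, one_mul]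
  have hH0 : 0 ≤ H := (integral_nonneg fun x => abs_nonneg _).trans (hH 0)
  obtain ⟨H0, hH0'⟩ : ∃ H0, H0 = ∫ x in Ω, |h0 x| := ⟨_, rfl⟩
  have hH00 : 0 ≤ H0 := by rw [hH0']; exact integral_nonneg fun x => abs_nonneg _
  have hmul : ∀ f : RV n → ℝ, IntegrableOn f Ω → IntegrableOn (fun x => f x * g x) Ω := fun f hf =>
    Integrable.mul_bdd (c := M) hf hg.aestronglyMeasurable
      ((ae_restrict_iff' hΩm).2 hgM)
  rw [Metric.tendsto_atTop']
  intro ε hε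
  obtain ⟨e1, he1, he1H⟩ : ∃ e1 : ℝ, 0 < e1 ∧ e1 ≤ 1 ∧ e1 * H ≤ ε / 6 ∧ e1 * H0 ≤ ε / 6 := by
    refine ⟨min 1 (ε / (6 * (H + H0 + 1))), lt_min one_pos (by positivity), min_le_left _ _, ?_, ?_⟩
    all_goals
      have hle := min_le_right 1 (ε / (6 * (H + H0 + 1)))
      have h6 : ε / (6 * (H + H0 + 1)) * (H + H0 + 1) = ε / 6 := by field_simp
      have h7 : 0 ≤ ε / (6 * (H + H0 + 1)) := by positivity
    · nlinarith
    · nlinarith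
  obtain ⟨he11, heH, heH0⟩ := he1H
  obtain ⟨e2, he2⟩ : ∃ e2, e2 = ε / (6 * (2 * M + 2)) := ⟨_, rfl⟩
  have he20 : 0 < e2 := by rw [he2]; positivity
  have he2e : (2 * M + 2) * e2 = ε / 6 := by rw [he2]; field_simp
  obtain ⟨δ1, hδ1, hev⟩ := ui_full hΩo hΩb hi hi0 hnn hD hUI hχ hχs hχ1' he20
  obtain ⟨δ2, hδ2, hac⟩ := abs_cont hi0.abs he20
  obtain ⟨ψ, hψ, hψs, A, hA, hAΩ, hAv, hA1, hA2⟩ := approx_g hΩm hΩb hg hM hgM he1 he11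
    (lt_min hδ1 hδ2)
  have hψm : ∀ f : RV n → ℝ, IntegrableOn f Ω → IntegrableOn (fun x => ψ x * f x) Ω := fun f hf => by
    obtain ⟨C, hC⟩ := hψs.exists_bound_of_continuous hψ.continuous
    exact Integrable.bdd_mul (c := C) hf hψ.continuous.aestronglyMeasurable (ae_of_all _ hC)
  have hsplit : ∀ f : RV n → ℝ, IntegrableOn f Ω → ∫ x in Ω, f x * g x =
      (∫ x in Ω, ψ x * f x) + ∫ x in Ω, f x * (g x - ψ x) := by
    intro f hf
    have hd : IntegrableOn (fun x => f x * (g x - ψ x)) Ω := by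
      refine ((hmul f hf).sub (hψm f hf)).congr (ae_of_all _ fun x => ?_)
      change f x * g x - ψ x * f x = f x * (g x - ψ x)
      ring
    rw [← integral_add (hψm f hf) hd]
    refine integral_congr_ae (ae_of_all _ fun x => ?_)
    change f x * g x = ψ x * f x + f x * (g x - ψ x)
    ring
  have hAfin : volume A ≠ ⊤ := ne_top_of_le_ne_top hΩfin (measure_mono hAΩ)
  have hr0 := err hΩm hi0 hg hψ.continuous hA hAΩ he1.le hA1 hA2
  have hA0 : ∫ x in A, |h0 x| ≤ e2 := by
    have a0 : volume.restrict Ω A ≤ ENNReal.ofReal δ2 := by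
      rw [Measure.restrict_apply hA, Set.inter_eq_left.2 hAΩ, ← ENNReal.ofReal_toReal hAfin]
      exact ENNReal.ofReal_le_ofReal (hAv.trans (min_le_right _ _))
    have a1 := (le_abs_self _).trans (hac A a0)
    rw [Measure.restrict_restrict hA, Set.inter_eq_left.2 hAΩ] at a1
    exact a1
  have hA0' := mul_le_mul_of_nonneg_left hA0 (by linarith : 0 ≤ 2 * M + 2)
  rw [← hH0'] at hr0
  have hev2 := (hD ψ hψ hψs).eventually (Metric.ball_mem_nhds _ (by positivity : 0 < ε / 6))
  obtain ⟨N, hN⟩ := eventually_atTop.1 (hev.and hev2)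
  refine ⟨N, fun k hk => ?_⟩
  obtain ⟨hk1, hk2⟩ := hN k hk.le
  have b1 := hk1 A hA hAΩ (hAv.trans (min_le_left _ _))
  rw [← habs k A hAΩ hA] at b1
  have hr := err hΩm (hi k) hg hψ.continuous hA hAΩ he1.le hA1 hA2
  have b2 := mul_le_mul_of_nonneg_left b1 (by linarith : 0 ≤ 2 * M + 2)
  have b3 := mul_le_mul_of_nonneg_left (hH k) he1.le
  rw [hsplit (h k) (hi k), hsplit h0 hi0, Real.dist_eq]
  rw [Real.dist_eq] at hk2
  rw [abs_lt] at hk2 ⊢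
  rw [abs_le] at hr hr0
  constructor <;> linarith [hk2.1, hk2.2, hr.1, hr.2, hr0.1, hr0.2]

theorem main {n : ℕ} (Ω : Set (RV n)) (hΩo : IsOpen Ω)
    (hΩb : Bornology.IsBounded Ω)
    (P : ℕ → AdmPair n Ω) (Q : AdmPair n Ω)
    (pk : ℕ → MField n) (p : MField n)
    (hpkL2 : ∀ k, L2MOn (pk k) Ω) (hpkS : ∀ k, SymOn (pk k) Ω)
    (hpL2 : L2MOn p Ω) (hpS : SymOn p Ω)
    (hstrong : Tendsto (fun k => ∫ x, ∑ i, ((P k).u x i - Q.u x i) ^ 2) atTop (𝓝 0))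
    (hEw : WeakL2M (fun k => (P k).E) Q.E Ω)
    (hker : ∀ k, ∀ W : AdmPair n Ω, ∫ x in Ω, mdot (pk k x) (W.E x) = 0)
    (hpw : WeakL2M pk p Ω)
    (c : ℝ) (hc : 0 ≤ c)
    (hbelow : ∀ k, ∀ᵐ x ∂(volume : Measure (RV n)),
      x ∈ Ω → -c ≤ mdot (pk k x) ((P k).E x)) :
    WeakL1 (fun k x => mdot (pk k x) ((P k).E x))
      (fun x => mdot (p x) (Q.E x)) Ω := by
  by_cases hn : n = 0
  · subst hn
    intro g _ _
    simp [mdot]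
  rintro g hg ⟨M, hgM⟩
  have hΩm := hΩo.measurableSet
  have hΩfin : volume Ω ≠ ⊤ := hΩb.measure_lt_top.ne
  have hcI : IntegrableOn (fun _ : RV n => c) Ω := integrableOn_const hΩfin
  have hgM' : ∀ᵐ x ∂(volume : Measure (RV n)), x ∈ Ω → |g x| ≤ |M| := by
    filter_upwards [hgM] with x hx hxm
    exact (hx hxm).trans (le_abs_self M)
  have i1 : ∀ k, IntegrableOn (fun x => mdot (pk k x) ((P k).E x)) Ω := fun k =>
    mdot_int (hpkL2 k) (adm_EΩ (P k))
  have i0 : IntegrableOn (fun x => mdot (p x) (Q.E x)) Ω := mdot_int hpL2 (adm_EΩ Q)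
  have key1 := final (h := fun k x => mdot (pk k x) ((P k).E x) + c)
    (h0 := fun x => mdot (p x) (Q.E x) + c) hΩo hΩb (fun k => (i1 k).add hcI) (i0.add hcI)
    (fun k => by
      filter_upwards [hbelow k] with x hx hxm
      linarith [hx hxm])
    (fun ψ hψ hψs => by
      obtain ⟨C, hC⟩ := hψs.exists_bound_of_continuous hψ.continuous
      have hm : ∀ f : RV n → ℝ, IntegrableOn f Ω → IntegrableOn (fun x => ψ x * f x) Ω :=
        fun f hf => Integrable.bdd_mul (c := C) hf hψ.continuous.aestronglyMeasurable
          (ae_of_all _ hC)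
      have e : ∀ f : RV n → ℝ, IntegrableOn f Ω → ∫ x in Ω, ψ x * (f x + c) =
          (∫ x in Ω, ψ x * f x) + ∫ x in Ω, ψ x * c := fun f hf => by
        rw [← integral_add (hm f hf) (hm _ hcI)]
        simp only [mul_add]
      have h1 := dist_conv hΩm P Q pk p hpkL2 hpkS hpL2 hpS hstrong hker hpw hψ hψs
      simp only [fun k => e _ (i1 k), e _ i0]
      exact h1.add_const _)
    (fun φ hφ hφs hφΩ hφ0 hφ1 ε hε => unif hn hΩm hΩb P Q pk p hpkL2 hpkS hstrong hEw hker hpw c hc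
      hbelow φ hφ hφs hφΩ hφ0 hφ1 hε) hg (abs_nonneg M) hgM'
  have hmul : ∀ f : RV n → ℝ, IntegrableOn f Ω → IntegrableOn (fun x => f x * g x) Ω := fun f hf =>
    Integrable.mul_bdd (c := |M|) hf hg.aestronglyMeasurable
      ((ae_restrict_iff' hΩm).2 hgM')
  have e : ∀ f : RV n → ℝ, IntegrableOn f Ω → ∫ x in Ω, (f x + c) * g x =
      (∫ x in Ω, f x * g x) + ∫ x in Ω, c * g x := fun f hf => by
    rw [← integral_add (hmul f hf) (hmul _ hcI)]
    simp only [add_mul]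
  simp only [fun k => e _ (i1 k), e _ i0] at key1
  have := key1.sub_const (∫ x in Ω, c * g x)
  simpa only [add_sub_cancel_right] using this

end
end S1

/-- Lemma on weak L¹ convergence of `pᵏ·ε(uᵏ)`. -/
theorem statement1 {n : ℕ} (Ω : Set (RV n)) (hΩo : IsOpen Ω)
    (hΩb : Bornology.IsBounded Ω)
    (P : ℕ → AdmPair n Ω) (Q : AdmPair n Ω)
    (pk : ℕ → MField n) (p : MField n)
    (hpkL2 : ∀ k, L2MOn (pk k) Ω) (hpkS : ∀ k, SymOn (pk k) Ω)
    (hpL2 : L2MOn p Ω) (hpS : SymOn p Ω)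
    -- (i) uᵏ → u strongly in L²(ℝⁿ; ℝⁿ)
    (hstrong : Tendsto (fun k => ∫ x, ∑ i, ((P k).u x i - Q.u x i) ^ 2) atTop (𝓝 0))
    -- (ii) Eᵏ → E weakly in L²(Ω; Sym(n))
    (hEw : WeakL2M (fun k => (P k).E) Q.E Ω)
    -- (iii) each pᵏ annihilates all symmetrized gradients
    (hker : ∀ k, ∀ W : AdmPair n Ω, ∫ x in Ω, mdot (pk k x) (W.E x) = 0)
    -- (iv) pᵏ → p weakly in L²(Ω; Sym(n))
    (hpw : WeakL2M pk p Ω)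
    -- (v) uniform lower bound
    (c : ℝ) (hc : 0 ≤ c)
    (hbelow : ∀ k, ∀ᵐ x ∂(volume : Measure (RV n)),
      x ∈ Ω → -c ≤ mdot (pk k x) ((P k).E x)) :
    WeakL1 (fun k x => mdot (pk k x) ((P k).E x))
      (fun x => mdot (p x) (Q.E x)) Ω := by
  exact S1.main Ω hΩo hΩb P Q pk p hpkL2 hpkS hpL2 hpS hstrong hEw hker hpw c hc hbelow
end
end

section
/- Let ω ⊂ ℝⁿ be a measurable set of finite Lebesgue measure, let a, b ∈ L^∞(ω; ℝ) with a, b ≥ δ a.e. for a constant δ > 0, and let A⁺, A⁻ ∈ L^∞(ω; Sym(n)). Let ψ^k : ω → {−1, 1} be measurable with |{x ∈ ω : ψ^k(x) = −1}| → 0 as k → ∞, and set m^k := ((1−ψ^k)/2) a + ((1+ψ^k)/2) b. Let E^k, E ∈ L²(ω; Sym(n)) with E^k → E weakly in L²(ω; Sym(n)) and with {|E^k|²} uniformly integrable on ω. Set p^k := m^k E^k + A⁺ + ψ^k A⁻ and p := b E + A⁺ + A⁻, and assume ∫_ω p^k·E^k dx → ∫_ω p·E dx. Then E^k → E strongly in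 L²(ω; Sym(n)). -/
open MeasureTheory Filter Topology

noncomputable section

lemma mdot_add_l {n : ℕ} (P Q R : Mat n) : mdot (P + Q) R = mdot P R + mdot Q R := by
  simp [mdot, add_mul, Finset.sum_add_distrib]

lemma mdot_smul_l {n : ℕ} (c : ℝ) (P R : Mat n) : mdot (c • P) R = c * mdot P R := by
  simp [mdot, mul_assoc, Finset.mul_sum]

lemma mdot_comm' {n : ℕ} (P R : Mat n) : mdot P R = mdot R P := by
  simp [mdot, mul_comm]

lemma mdot_sub_l {n : ℕ} (P Q R : Mat n) : mdot (P - Q) R = mdot P R - mdot Q R := by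
  simp [mdot, sub_mul, Finset.sum_sub_distrib]

lemma mdot_add_r {n : ℕ} (P Q R : Mat n) : mdot R (P + Q) = mdot R P + mdot R Q := by
  rw [mdot_comm', mdot_add_l, mdot_comm' P, mdot_comm' Q]

lemma mdot_sub_r {n : ℕ} (P Q R : Mat n) : mdot R (P - Q) = mdot R P - mdot R Q := by
  rw [mdot_comm', mdot_sub_l, mdot_comm' P, mdot_comm' Q]

lemma mdot_smul_r {n : ℕ} (c : ℝ) (P R : Mat n) : mdot R (c • P) = c * mdot R P := by
  rw [mdot_comm', mdot_smul_l, mdot_comm' P]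

lemma mdot_self_nonneg {n : ℕ} (P : Mat n) : 0 ≤ mdot P P :=
  Finset.sum_nonneg fun _ _ => Finset.sum_nonneg fun _ _ => mul_self_nonneg _

lemma two_abs_mdot_le {n : ℕ} (P Q : Mat n) : 2 * |mdot P Q| ≤ mdot P P + mdot Q Q := by
  have h1 := mdot_self_nonneg (P - Q)
  have h2 := mdot_self_nonneg (P + Q)
  simp only [mdot_sub_l, mdot_sub_r, mdot_add_l, mdot_add_r, mdot_comm' Q P] at h1 h2
  rcases abs_cases (mdot P Q) with h | h <;> linarith [h.1]

lemma measurable_mdot {n : ℕ} {P Q : MField n} (hP : ∀ i j, Measurable fun x => P x i j)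
    (hQ : ∀ i j, Measurable fun x => Q x i j) : Measurable fun x => mdot (P x) (Q x) := by
  unfold mdot
  exact Finset.measurable_sum _ fun i _ => Finset.measurable_sum _ fun j _ =>
    (hP i j).mul (hQ i j)

lemma integrableOn_mdot {n : ℕ} {s : Set (RV n)} {P Q : MField n} (hP : L2MOn P s)
    (hQ : L2MOn Q s) : IntegrableOn (fun x => mdot (P x) (Q x)) s volume := by
  refine Integrable.mono' (hP.2.add hQ.2) (measurable_mdot hP.1 hQ.1).aestronglyMeasurable
    (Eventually.of_forall fun x => ?_)
  have := two_abs_mdot_le (P x) (Q x)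
  have := abs_nonneg (mdot (P x) (Q x))
  simp only [Real.norm_eq_abs, Pi.add_apply]
  linarith

lemma L2MOn_add {n : ℕ} {s : Set (RV n)} {P Q : MField n} (hP : L2MOn P s)
    (hQ : L2MOn Q s) : L2MOn (fun x => P x + Q x) s := by
  refine ⟨fun i j => (hP.1 i j).add (hQ.1 i j), ?_⟩
  have := ((hP.2.add hQ.2).add (integrableOn_mdot hP hQ)).add (integrableOn_mdot hP hQ)
  refine this.congr (Eventually.of_forall fun x => ?_)
  simp only [Pi.add_apply, mdot_add_l, mdot_add_r, mdot_comm' (Q x) (P x)]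
  ring

lemma L2MOn_smul {n : ℕ} {s : Set (RV n)} (hs : MeasurableSet s) {f : RV n → ℝ} {P : MField n}
    (hf : LinfROn f s) (hP : L2MOn P s) : L2MOn (fun x => f x • P x) s := by
  obtain ⟨hfm, M, hM⟩ := hf
  have hm : ∀ i j, Measurable fun x => (f x • P x) i j := fun i j => hfm.mul (hP.1 i j)
  refine ⟨hm, Integrable.mono' (hP.2.const_mul (M * M))
    (measurable_mdot hm hm).aestronglyMeasurable ?_⟩
  rw [ae_restrict_iff' hs]
  filter_upwards [hM] with x hx hxs
  have h := hx hxs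
  rw [Real.norm_eq_abs, abs_of_nonneg (mdot_self_nonneg _), mdot_smul_l, mdot_smul_r,
    ← mul_assoc]
  refine mul_le_mul_of_nonneg_right ?_ (mdot_self_nonneg _)
  rw [← abs_mul_abs_self]
  exact mul_self_le_mul_self (abs_nonneg _) h

lemma LinfMOn_bound {n : ℕ} {s : Set (RV n)} {P : MField n} (hP : LinfMOn P s) :
    ∃ C : ℝ, 0 ≤ C ∧ ∀ᵐ x ∂(volume : Measure (RV n)), x ∈ s → mdot (P x) (P x) ≤ C := by
  obtain ⟨_, M, hM⟩ := hP
  refine ⟨∑ _i : Fin n, ∑ _j : Fin n, M * M,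
    Finset.sum_nonneg fun _ _ => Finset.sum_nonneg fun _ _ => mul_self_nonneg _, ?_⟩
  filter_upwards [hM] with x hx hxs
  refine Finset.sum_le_sum fun i _ => Finset.sum_le_sum fun j _ => ?_
  rw [← abs_mul_abs_self]
  exact mul_self_le_mul_self (abs_nonneg _) (hx hxs i j)

lemma L2MOn_of_Linf {n : ℕ} {s : Set (RV n)} (hs : MeasurableSet s) (hsf : volume s < ⊤)
    {P : MField n} (hP : LinfMOn P s) : L2MOn P s := by
  obtain ⟨C, _, hC⟩ := LinfMOn_bound hP
  refine ⟨hP.1, Integrable.mono' (integrableOn_const (C := C) hsf.ne)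
    (measurable_mdot hP.1 hP.1).aestronglyMeasurable ?_⟩
  rw [ae_restrict_iff' hs]
  filter_upwards [hC] with x hx hxs
  rw [Real.norm_eq_abs, abs_of_nonneg (mdot_self_nonneg _)]
  exact hx hxs

lemma integral_sub_add_aux {α : Type*} [MeasurableSpace α] {μ : Measure α} {f g h : α → ℝ}
    (hf : Integrable f μ) (hg : Integrable g μ) (hh : Integrable h μ) :
    (∫ x, f x ∂μ) - (∫ x, g x ∂μ) + (∫ x, h x ∂μ) = ∫ x, (f x - g x + h x) ∂μ := by
  rw [← integral_sub hf hg]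
  exact (integral_add (hf.sub hg) hh).symm


/-- strong L² convergence on the set where the phase indicator
stabilizes; the analytic content of `ν_x = δ_{ε(u(x))}` on `ω₀`. -/
theorem statement4 {n : ℕ} (ω : Set (RV n)) (hωm : MeasurableSet ω)
    (hωf : volume ω < ⊤)
    (δ : ℝ) (hδ : 0 < δ)
    (a b : RV n → ℝ) (ha : LinfROn a ω) (hb : LinfROn b ω)
    (haδ : ∀ᵐ x ∂(volume : Measure (RV n)), x ∈ ω → δ ≤ a x)
    (hbδ : ∀ᵐ x ∂(volume : Measure (RV n)), x ∈ ω → δ ≤ b x)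
    (Ap Am : MField n) (hAp : LinfMOn Ap ω) (hAm : LinfMOn Am ω)
    (ψk : ℕ → RV n → ℝ) (hψm : ∀ k, Measurable (ψk k))
    (hψv : ∀ k x, ψk k x = -1 ∨ ψk k x = 1)
    (hψ0 : Tendsto (fun k => volume {x ∈ ω | ψk k x = -1}) atTop (𝓝 0))
    (Ek : ℕ → MField n) (E : MField n)
    (hEkL2 : ∀ k, L2MOn (Ek k) ω) (hEL2 : L2MOn E ω)
    (hEw : WeakL2M Ek E ω)
    (hUI : UnifIntOn (fun k x => mdot (Ek k x) (Ek k x)) ω)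
    -- ∫_ω pᵏ·Eᵏ → ∫_ω p·E with pᵏ = mᵏEᵏ + A⁺ + ψᵏA⁻ and p = bE + A⁺ + A⁻
    (hconv : Tendsto (fun k => ∫ x in ω,
        mdot (((1 - ψk k x) / 2 * a x + (1 + ψk k x) / 2 * b x) • Ek k x
            + Ap x + ψk k x • Am x) (Ek k x)) atTop
      (𝓝 (∫ x in ω, mdot (b x • E x + Ap x + Am x) (E x)))) :
    Tendsto (fun k => ∫ x in ω, mdot (Ek k x - E x) (Ek k x - E x)) atTop (𝓝 0) := by
  have hApL := L2MOn_of_Linf hωm hωf hAp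
  have hAmL := L2MOn_of_Linf hωm hωf hAm
  have hψL : ∀ k, LinfROn (ψk k) ω := fun k => ⟨hψm k, 1, Eventually.of_forall fun x _ => by
    rcases hψv k x with h | h <;> simp [h]⟩
  obtain ⟨Ma, hMa⟩ := ha.2
  obtain ⟨Mb, hMb⟩ := hb.2
  obtain ⟨C, hC0, hC⟩ := LinfMOn_bound hAm
  have hmL : ∀ k, LinfROn (fun x => (1 - ψk k x) / 2 * a x + (1 + ψk k x) / 2 * b x) ω := by
    intro k
    refine ⟨?_, max Ma Mb, ?_⟩
    · have h1 := ha.1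
      have h2 := hb.1
      have h3 := hψm k
      fun_prop
    · filter_upwards [hMa, hMb] with x h1 h2 hx
      rcases hψv k x with h | h <;> rw [h] <;> norm_num
      · exact Or.inl (h1 hx)
      · exact Or.inr (h2 hx)
  have hpk : ∀ k, IntegrableOn (fun x => mdot (((1 - ψk k x) / 2 * a x
      + (1 + ψk k x) / 2 * b x) • Ek k x + Ap x + ψk k x • Am x) (Ek k x)) ω volume := fun k =>
    integrableOn_mdot (L2MOn_add (L2MOn_add (L2MOn_smul hωm (hmL k) (hEkL2 k)) hApL)
      (L2MOn_smul hωm (hψL k) hAmL)) (hEkL2 k)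
  have hqk : ∀ k, IntegrableOn (fun x => mdot (b x • Ek k x + Ap x + Am x) (Ek k x)) ω volume :=
    fun k => integrableOn_mdot (L2MOn_add (L2MOn_add (L2MOn_smul hωm hb (hEkL2 k)) hApL) hAmL)
      (hEkL2 k)
  set S : ℕ → Set (RV n) := fun k => {x ∈ ω | ψk k x = -1} with hS
  have hSm : ∀ k, MeasurableSet (S k) := fun k =>
    hωm.inter (measurableSet_eq_fun (hψm k) measurable_const)
  have hSs : ∀ k, S k ⊆ ω := fun k x hx => hx.1
  -- energy on the small sets
  have hsmall : Tendsto (fun k => ∫ x in S k, mdot (Ek k x) (Ek k x)) atTop (𝓝 0) := by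
    rw [Metric.tendsto_atTop]
    intro ε hε
    obtain ⟨η, hη, hA⟩ := hUI ε hε
    have hev := hψ0.eventually (gt_mem_nhds (ENNReal.ofReal_pos.2 hη))
    obtain ⟨N, hN⟩ := eventually_atTop.1 hev
    refine ⟨N, fun k hk => ?_⟩
    have := hA (S k) (hSm k) (hSs k) (hN k hk) k
    rw [Real.dist_0_eq_abs]
    exact lt_of_le_of_lt (abs_integral_le_integral_abs) this
  have hvol : Tendsto (fun k => volume.real (S k)) atTop (𝓝 0) := by
    have := (ENNReal.tendsto_toReal ENNReal.zero_ne_top).comp hψ0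
    rw [ENNReal.toReal_zero] at this
    exact this
  -- the remainder
  set r : ℕ → RV n → ℝ := fun k x => mdot (((1 - ψk k x) / 2 * a x
      + (1 + ψk k x) / 2 * b x) • Ek k x + Ap x + ψk k x • Am x) (Ek k x)
      - mdot (b x • Ek k x + Ap x + Am x) (Ek k x) with hr
  have hrint : ∀ k, IntegrableOn (r k) ω volume := fun k => (hpk k).sub (hqk k)
  have hrz : ∀ k x, ψk k x = 1 → r k x = 0 := by
    intro k x h
    simp only [hr, h]
    norm_num
  have hrbd : ∀ k, |∫ x in ω, r k x| ≤
      (Ma + Mb + 1) * (∫ x in S k, mdot (Ek k x) (Ek k x)) + C * volume.real (S k) := by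
    intro k
    have hSf : volume (S k) ≠ ⊤ := ((measure_mono (hSs k)).trans_lt hωf).ne
    have e1 : ∫ x in ω, r k x = ∫ x in S k, r k x := by
      refine setIntegral_eq_of_subset_of_forall_sdiff_eq_zero hωm (hSs k) fun x hx => hrz k x ?_
      rcases hψv k x with h | h
      · exact absurd ⟨hx.1, h⟩ hx.2
      · exact h
    have i1 : IntegrableOn (fun x => (Ma + Mb + 1) * mdot (Ek k x) (Ek k x)) (S k) volume :=
      ((hEkL2 k).2.mono_set (hSs k)).const_mul _
    have i2 : IntegrableOn (fun _ : RV n => C) (S k) volume := integrableOn_const hSf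
    have e2 : ∫ x in S k, ((Ma + Mb + 1) * mdot (Ek k x) (Ek k x) + C) =
        (Ma + Mb + 1) * (∫ x in S k, mdot (Ek k x) (Ek k x)) + C * volume.real (S k) := by
      rw [integral_add i1 i2, integral_const_mul, setIntegral_const, smul_eq_mul, mul_comm C]
    rw [e1, ← e2]
    refine (abs_integral_le_integral_abs).trans ?_
    refine integral_mono_ae ((hrint k).mono_set (hSs k)).abs (i1.add i2) ?_
    refine (ae_restrict_iff' (hSm k)).2 ?_
    filter_upwards [hMa, hMb, hC] with x h1 h2 h3 hx
    have h1 := h1 hx.1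
    have h2 := h2 hx.1
    have h3 := h3 hx.1
    have hψ : ψk k x = -1 := hx.2
    have e3 : r k x = (a x - b x) * mdot (Ek k x) (Ek k x) - 2 * mdot (Am x) (Ek k x) := by
      simp only [hr, hψ, mdot_add_l, mdot_smul_l]
      ring
    have h4 := two_abs_mdot_le (Am x) (Ek k x)
    have h5 := mdot_self_nonneg (Ek k x)
    simp only [e3]
    calc _ ≤ |(a x - b x) * mdot (Ek k x) (Ek k x)| + |2 * mdot (Am x) (Ek k x)| := abs_sub _ _
      _ ≤ (Ma + Mb) * mdot (Ek k x) (Ek k x) + 2 * |mdot (Am x) (Ek k x)| := by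
        rw [abs_mul, abs_mul, abs_of_nonneg h5, abs_of_pos (two_pos : (0:ℝ) < 2)]
        have := mul_le_mul_of_nonneg_right ((abs_sub (a x) (b x)).trans (add_le_add h1 h2)) h5
        linarith
      _ ≤ _ := by linarith
  have hr0 : Tendsto (fun k => ∫ x in ω, r k x) atTop (𝓝 0) := by
    refine squeeze_zero_norm hrbd ?_
    simpa using (hsmall.const_mul (Ma + Mb + 1)).add (hvol.const_mul C)
  have hq : Tendsto (fun k => ∫ x in ω, mdot (b x • Ek k x + Ap x + Am x) (Ek k x)) atTop
      (𝓝 (∫ x in ω, mdot (b x • E x + Ap x + Am x) (E x))) := by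
    have := hconv.sub hr0
    rw [sub_zero] at this
    refine this.congr fun k => ?_
    rw [← integral_sub (hpk k) (hrint k)]
    simp only [hr, sub_sub_cancel]
  have hbE := L2MOn_smul hωm hb hEL2
  have hG : L2MOn (fun x => b x • E x + b x • E x + Ap x + Am x) ω :=
    L2MOn_add (L2MOn_add (L2MOn_add hbE hbE) hApL) hAmL
  have hw := hEw _ hG
  have hEE := integrableOn_mdot hbE hEL2
  have hd : Tendsto (fun k => ∫ x in ω, b x * mdot (Ek k x - E x) (Ek k x - E x)) atTop
      (𝓝 0) := by
    have hlim := (hq.sub hw).add_const (∫ x in ω, mdot (b x • E x) (E x))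
    have hp0 := integrableOn_mdot (L2MOn_add (L2MOn_add hbE hApL) hAmL) hEL2
    have hz : (∫ x in ω, mdot (b x • E x + Ap x + Am x) (E x))
        - (∫ x in ω, mdot (E x) (b x • E x + b x • E x + Ap x + Am x))
        + (∫ x in ω, mdot (b x • E x) (E x)) = 0 := by
      rw [integral_sub_add_aux hp0 (integrableOn_mdot hEL2 hG) hEE]
      rw [← integral_zero (RV n) ℝ (μ := volume.restrict ω)]
      congr 1
      funext x
      simp only [mdot_add_l, mdot_add_r, mdot_smul_l, mdot_smul_r, mdot_comm' (E x) (Ap x),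
        mdot_comm' (E x) (Am x)]
      ring
    rw [hz] at hlim
    refine hlim.congr fun k => ?_
    have i3 := integrableOn_mdot (hEkL2 k) hG
    rw [integral_sub_add_aux (hqk k) i3 hEE]
    congr 1
    funext x
    simp only [mdot_add_l, mdot_add_r, mdot_smul_l, mdot_smul_r, mdot_sub_l, mdot_sub_r,
      mdot_comm' (Ek k x) (Ap x), mdot_comm' (Ek k x) (Am x), mdot_comm' (E x) (Ek k x)]
    ring
  have hD : ∀ k, L2MOn (fun x => Ek k x - E x) ω := by
    intro k
    have h1 : LinfROn (fun _ : RV n => (-1 : ℝ)) ω :=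
      ⟨measurable_const, 1, Eventually.of_forall fun x _ => by simp⟩
    have := L2MOn_add (hEkL2 k) (L2MOn_smul hωm h1 hEL2)
    simpa [sub_eq_add_neg] using this
  have hfin : Tendsto (fun k => δ⁻¹ * ∫ x in ω, b x * mdot (Ek k x - E x) (Ek k x - E x)) atTop
      (𝓝 0) := by simpa using hd.const_mul δ⁻¹
  refine squeeze_zero (fun k => integral_nonneg fun x => mdot_self_nonneg _) (fun k => ?_) hfin
  rw [← integral_const_mul]
  have hbD := integrableOn_mdot (L2MOn_smul hωm hb (hD k)) (hD k)
  simp only [mdot_smul_l] at hbD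
  refine integral_mono_ae (hD k).2 (hbD.const_mul δ⁻¹) ((ae_restrict_iff' hωm).2 ?_)
  filter_upwards [hbδ] with x hx hxs
  have h5 := mdot_self_nonneg (Ek k x - E x)
  have := hx hxs
  show _ ≤ δ⁻¹ * (b x * _)
  rw [← div_eq_inv_mul, le_div_iff₀ hδ, mul_comm]
  exact mul_le_mul_of_nonneg_right this h5

end
end
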